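/- arXiv:2601.10238 — 5 statements merged into one kernel-verified Lean document; each statement's English description precedes it below -/
import Mathlib

section
/- For every odd integer k ≥ 7 there exists a constant B such that every graph H with no isolated vertices satisfies R(C_k, H) ≤ 2·e(H) + max{ ⌊B − √(e(H))⌋ , ⌊k/2⌋ }. -/
/-- `G` has a copy in `C`: there is an injective graph homomorphism from `G` to `C`,
i.e. `C` contains `G` as a (not necessarily induced) subgraph. -/
def HasCopy {α β : Type*} (G : SimpleGraph α) (C : SimpleGraph β) : Prop :=
  ∃ f : G →g C, Function.Injective f

/-- The Ramsey number `R(G, H)`: the least `N` such that every red-blue colouring of the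
edges of `K_N` (encoded by the graph `C` of red edges) contains a red copy of `G` or a
blue copy of `H`. -/
noncomputable def ramseyNumber {α β : Type*} (G : SimpleGraph α) (H : SimpleGraph β) : ℕ :=
  sInf {N : ℕ | ∀ C : SimpleGraph (Fin N), HasCopy G C ∨ HasCopy H Cᶜ}


section Core
open scoped Classical
open Finset

variable {α V W : Type*}

noncomputable def dg (K : SimpleGraph α) (A : Finset α) (v : α) : ℕ := #{w ∈ A | K.Adj v w}
noncomputable def DD (K : SimpleGraph α) (A : Finset α) : ℕ := ∑ v ∈ A, dg K A v

def IsEmb (H : SimpleGraph V) (G : SimpleGraph W) (f : V → W) (U : Finset V) (A : Finset W) : Prop :=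
  Set.InjOn f U ∧ (∀ u ∈ U, f u ∈ A) ∧ ∀ u ∈ U, ∀ v ∈ U, H.Adj u v → ¬ G.Adj (f u) (f v)

def Emb (H : SimpleGraph V) (G : SimpleGraph W) (U : Finset V) (A : Finset W) : Prop :=
  ∃ f, IsEmb H G f U A

def Cl (H : SimpleGraph V) (U K : Finset V) : Prop := ∀ u ∈ K, ∀ v ∈ U, H.Adj u v → v ∈ K

def Ind (G : SimpleGraph W) (A : Finset W) : Prop := ∀ u ∈ A, ∀ v ∈ A, ¬ G.Adj u v

def Deg (G : SimpleGraph W) (d : ℕ) (A : Finset W) : Prop :=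
  ∀ Q ⊆ A, Q.Nonempty → ∃ v ∈ Q, dg G Q v < d

lemma dg_mono (K : SimpleGraph α) {A B : Finset α} (h : A ⊆ B) (v : α) : dg K A v ≤ dg K B v :=
  card_le_card (filter_subset_filter _ h)

lemma dg_le_card (K : SimpleGraph α) (A : Finset α) (v : α) : dg K A v ≤ #A :=
  card_filter_le _ _

lemma DD_mono (K : SimpleGraph α) {A B : Finset α} (h : A ⊆ B) : DD K A ≤ DD K B :=
  (sum_le_sum fun v _ => dg_mono K h v).trans (sum_le_sum_of_subset h)

lemma dg_union (K : SimpleGraph α) {A B : Finset α} (h : Disjoint A B) (v : α) :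
    dg K (A ∪ B) v = dg K A v + dg K B v := by
  unfold dg
  rw [filter_union, card_union_of_disjoint (disjoint_filter_filter h)]

lemma sum_dg_comm (K : SimpleGraph α) (A B : Finset α) :
    ∑ v ∈ A, dg K B v = ∑ v ∈ B, dg K A v := by
  simp only [dg, card_filter]
  rw [sum_comm]
  simp only [K.adj_comm]

lemma DD_union (K : SimpleGraph α) {A B : Finset α} (h : Disjoint A B) :
    DD K (A ∪ B) = DD K A + DD K B + 2 * ∑ v ∈ A, dg K B v := by
  unfold DD
  rw [sum_union h]
  simp only [dg_union K h, sum_add_distrib]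
  rw [sum_dg_comm K B A]
  ring

lemma DD_singleton (K : SimpleGraph α) (v : α) : DD K {v} = 0 := by
  simp [DD, dg]

lemma DD_insert (K : SimpleGraph α) {A : Finset α} {v : α} (h : v ∉ A) :
    DD K (insert v A) = DD K A + 2 * dg K A v := by
  rw [insert_eq, DD_union K (by simpa using h), DD_singleton]
  simp

lemma DD_erase (K : SimpleGraph α) {A : Finset α} {v : α} (h : v ∈ A) :
    DD K A = DD K (A.erase v) + 2 * dg K A v := by
  conv_lhs => rw [← insert_erase h]
  rw [DD_insert K (by simp)]
  congr 2
  unfold dg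
  congr 1
  ext w
  simp only [mem_filter, mem_erase]
  constructor
  · rintro ⟨⟨_, h⟩, h'⟩; exact ⟨h, h'⟩
  · rintro ⟨h, h'⟩; exact ⟨⟨h'.ne', h⟩, h'⟩

lemma DD_sdiff (K : SimpleGraph α) {A B : Finset α} (h : B ⊆ A) :
    DD K A = DD K B + DD K (A \ B) + 2 * ∑ v ∈ B, dg K (A \ B) v := by
  conv_lhs => rw [← union_sdiff_of_subset h]
  exact DD_union K disjoint_sdiff

lemma DD_sdiff_cl (K : SimpleGraph α) {A B : Finset α} (h : B ⊆ A) (hc : Cl K A B) :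
    DD K A = DD K B + DD K (A \ B) := by
  rw [DD_sdiff K h]
  have : ∑ v ∈ B, dg K (A \ B) v = 0 := by
    apply sum_eq_zero
    intro v hv
    unfold dg
    rw [card_eq_zero, filter_eq_empty_iff]
    intro w hw hvw
    rw [mem_sdiff] at hw
    exact hw.2 (hc v hv w hw.1 hvw)
  omega

lemma Cl.sdiff {H : SimpleGraph V} {U K : Finset V} (h : Cl H U K) (hK : K ⊆ U) : Cl H U (U \ K) := by
  intro u hu v hv huv
  rw [mem_sdiff] at *
  exact ⟨hv, fun hvK => hu.2 (h v hvK u hu.1 huv.symm)⟩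

lemma IsEmb.mono {H : SimpleGraph V} {G : SimpleGraph W} {f : V → W} {U U' : Finset V} {A A' : Finset W}
    (h : IsEmb H G f U A) (hU : U' ⊆ U) (hA : A ⊆ A') : IsEmb H G f U' A' :=
  ⟨h.1.mono (by exact_mod_cast hU), fun u hu => hA (h.2.1 u (hU hu)),
    fun u hu v hv => h.2.2 u (hU hu) v (hU hv)⟩

lemma Emb.mono {H : SimpleGraph V} {G : SimpleGraph W} {U U' : Finset V} {A A' : Finset W}
    (h : Emb H G U A) (hU : U' ⊆ U) (hA : A ⊆ A') : Emb H G U' A' := by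
  obtain ⟨f, hf⟩ := h
  exact ⟨f, hf.mono hU hA⟩

/-- gluing two embeddings -/
lemma glue {H : SimpleGraph V} {G : SimpleGraph W} {f g : V → W} {U1 U2 : Finset V} {A : Finset W}
    (hf : IsEmb H G f U1 A) (hg : IsEmb H G g U2 A) (hU : Disjoint U1 U2)
    (hne : ∀ u ∈ U1, ∀ v ∈ U2, f u ≠ g v)
    (hadj : ∀ u ∈ U1, ∀ v ∈ U2, H.Adj u v → ¬ G.Adj (f u) (g v)) :
    ∃ e, IsEmb H G e (U1 ∪ U2) A ∧ (∀ u ∈ U1, e u = f u) ∧ ∀ u ∈ U2, e u = g u := by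
  have h1 : ∀ u ∈ U1, (fun v => if v ∈ U1 then f v else g v) u = f u := by
    intro u hu; simp [hu]
  have h2 : ∀ u ∈ U2, (fun v => if v ∈ U1 then f v else g v) u = g u := by
    intro u hu
    have : u ∉ U1 := fun h => (disjoint_left.mp hU h) hu
    simp [this]
  refine ⟨fun v => if v ∈ U1 then f v else g v, ⟨?_, ?_, ?_⟩, h1, h2⟩
  · intro u hu v hv huv
    simp only [coe_union, Set.mem_union, mem_coe] at hu hv
    rcases hu with hu | hu <;> rcases hv with hv | hv
    · rw [h1 u hu, h1 v hv] at huv; exact hf.1 hu hv huv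
    · rw [h1 u hu, h2 v hv] at huv; exact absurd huv (hne u hu v hv)
    · rw [h2 u hu, h1 v hv] at huv; exact absurd huv.symm (hne v hv u hu)
    · rw [h2 u hu, h2 v hv] at huv; exact hg.1 hu hv huv
  · intro u hu
    rw [mem_union] at hu
    rcases hu with hu | hu
    · rw [h1 u hu]; exact hf.2.1 u hu
    · rw [h2 u hu]; exact hg.2.1 u hu
  · intro u hu v hv huv
    rw [mem_union] at hu hv
    rcases hu with hu | hu <;> rcases hv with hv | hv
    · rw [h1 u hu, h1 v hv]; exact hf.2.2 u hu v hv huv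
    · rw [h1 u hu, h2 v hv]; exact hadj u hu v hv huv
    · rw [h2 u hu, h1 v hv]; intro h; exact hadj v hv u hu huv.symm h.symm
    · rw [h2 u hu, h2 v hv]; exact hg.2.2 u hu v hv huv

lemma exists_injOn [Nonempty W] (U : Finset V) (A : Finset W) (h : #U ≤ #A) :
    ∃ f : V → W, Set.InjOn f U ∧ ∀ u ∈ U, f u ∈ A := by
  have : Nonempty (U ↪ A) := Function.Embedding.nonempty_of_card_le (by simpa using h)
  obtain ⟨e⟩ := this
  refine ⟨fun v => if h : v ∈ U then e ⟨v, h⟩ else Classical.arbitrary W, ?_, ?_⟩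
  · intro u hu v hv huv
    have hu' : u ∈ U := hu
    have hv' : v ∈ U := hv
    simp only [hu', hv', dif_pos] at huv
    have := e.injective (Subtype.ext huv)
    simpa using this
  · intro u hu
    simp [hu]

lemma isEmb_of_ind {H : SimpleGraph V} {G : SimpleGraph W} [Nonempty W] {U : Finset V} {A : Finset W}
    (hA : Ind G A) (h : #U ≤ #A) : Emb H G U A := by
  obtain ⟨f, hf, hf'⟩ := exists_injOn U A h
  exact ⟨f, hf, hf', fun u hu v hv _ => hA _ (hf' u hu) _ (hf' v hv)⟩

lemma Ind.mono {G : SimpleGraph W} {A B : Finset W} (h : Ind G B) (hA : A ⊆ B) : Ind G A :=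
  fun u hu v hv => h u (hA hu) v (hA hv)

lemma Deg.mono {G : SimpleGraph W} {d : ℕ} {A B : Finset W} (h : Deg G d B) (hA : A ⊆ B) : Deg G d A :=
  fun Q hQ => h Q (hQ.trans hA)

/-- extend by isolated vertices -/
lemma emb_isolated {H : SimpleGraph V} {G : SimpleGraph W} [Nonempty W] {U U' : Finset V} {A : Finset W}
    (h : Emb H G U' A) (hU : U' ⊆ U) (hiso : ∀ u ∈ U \ U', ∀ v ∈ U, ¬ H.Adj u v) (hc : #U ≤ #A) :
    Emb H G U A := by
  obtain ⟨f, hf⟩ := h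
  have himg : #(U'.image f) = #U' := card_image_of_injOn hf.1
  have hsub : U'.image f ⊆ A := by
    intro w hw
    obtain ⟨u, hu, rfl⟩ := mem_image.mp hw
    exact hf.2.1 u hu
  obtain ⟨g, hg, hg'⟩ := exists_injOn (U \ U') (A \ U'.image f) (by
    rw [card_sdiff_of_subset hU, card_sdiff_of_subset hsub, himg]; omega)
  have hgE : IsEmb H G g (U \ U') A := ⟨hg, fun u hu => (mem_sdiff.mp (hg' u hu)).1,
    fun u hu v hv huv => absurd huv (hiso u hu v (mem_sdiff.mp hv).1)⟩
  obtain ⟨e, he, -⟩ := glue hf hgE disjoint_sdiff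
    (by
      intro u hu v hv heq
      have := (mem_sdiff.mp (hg' v hv)).2
      exact this (heq ▸ mem_image_of_mem f hu))
    (by
      intro u hu v hv huv
      exact absurd huv.symm (hiso v hv u (hU hu)))
  rw [union_sdiff_of_subset hU] at he
  exact ⟨e, he⟩

/-- greedy independent set -/
lemma greedy_ind (G : SimpleGraph W) (d : ℕ) : ∀ A : Finset W, Deg G d A →
    ∃ I ⊆ A, Ind G I ∧ #A ≤ d * #I := by
  intro A
  induction A using Finset.strongInduction with
  | _ A ih =>
    intro hA
    rcases A.eq_empty_or_nonempty with rfl | hne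
    · exact ⟨∅, by simp, by intro u hu; simp at hu, by simp⟩
    obtain ⟨v, hv, hvd⟩ := hA A subset_rfl hne
    set A' := A.filter (fun w => w ≠ v ∧ ¬ G.Adj v w) with hA'
    have hss : A' ⊂ A := by
      refine ⟨filter_subset _ _, fun h => ?_⟩
      have := h hv
      simp [hA'] at this
    obtain ⟨I, hI, hInd, hcard⟩ := ih A' hss (hA.mono hss.1)
    have hvI : v ∉ I := fun h => by
      have := hI h
      simp [hA'] at this
    refine ⟨insert v I, ?_, ?_, ?_⟩
    · intro w hw
      rcases mem_insert.mp hw with rfl | hw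
      · exact hv
      · exact hss.1 (hI hw)
    · have key : ∀ w ∈ I, ¬ G.Adj v w := fun w hw => by
        have := hI hw
        simp only [hA', mem_filter] at this
        exact this.2.2
      intro a ha b hb hab
      rcases mem_insert.mp ha with rfl | ha' <;> rcases mem_insert.mp hb with rfl | hb'
      · exact G.irrefl hab
      · exact key b hb' hab
      · exact key a ha' hab.symm
      · exact hInd a ha' b hb' hab
    · rw [card_insert_of_notMem hvI]
      have h1 : A ⊆ A' ∪ (insert v {w ∈ A | G.Adj v w}) := by
        intro w hw
        simp only [hA', mem_union, mem_filter, mem_insert]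
        tauto
      have h2 := card_le_card h1
      have h3 := card_union_le A' (insert v {w ∈ A | G.Adj v w})
      have h4 := card_insert_le v {w ∈ A | G.Adj v w}
      have h5 : #{w ∈ A | G.Adj v w} < d := hvd
      have : d * (#I + 1) = d * #I + d := by ring
      omega

lemma Deg.DD_le {G : SimpleGraph W} {d : ℕ} : ∀ {A : Finset W}, Deg G d A → DD G A ≤ 2 * d * #A := by
  intro A
  induction A using Finset.strongInduction with
  | _ A ih =>
    intro hA
    rcases A.eq_empty_or_nonempty with rfl | hne
    · simp [DD]
    obtain ⟨v, hv, hvd⟩ := hA A subset_rfl hne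
    have h1 := ih _ (erase_ssubset hv) (hA.mono (erase_subset _ _))
    rw [DD_erase G hv]
    rw [card_erase_of_mem hv] at h1
    have : 1 ≤ #A := card_pos.mpr hne
    obtain ⟨a, ha⟩ : ∃ a, #A = a + 1 := ⟨#A - 1, by omega⟩
    rw [ha] at h1 ⊢
    simp at h1
    nlinarith

/-- bounded degree in a set gives `Deg`. -/
lemma deg_of_bdd {G : SimpleGraph W} {d : ℕ} {A : Finset W} (h : ∀ v ∈ A, dg G A v < d) : Deg G d A := by
  intro Q hQ ⟨v, hv⟩
  exact ⟨v, hv, (dg_mono G hQ v).trans_lt (h v (hQ hv))⟩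

end Core

section Cyc
open scoped Classical
open Finset
variable {α V W : Type*}

def CF (G : SimpleGraph W) (k : ℕ) : Prop := ¬ HasCopy (SimpleGraph.cycleGraph k) G

lemma cyc {G : SimpleGraph W} {k : ℕ} (hk : 3 ≤ k) (l : List W) (hl : l.length = k) (hn : l.Nodup)
    (hc : l.IsChain G.Adj) (a b : W) (hh : l.head? = some a) (hlast : l.getLast? = some b)
    (hab : G.Adj b a) : HasCopy (SimpleGraph.cycleGraph k) G := by
  have hne : l ≠ [] := by rintro rfl; simp at hl; omega
  have h0 : l[0]'(by omega) = a := by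
    rw [List.head?_eq_some_head hne] at hh
    simp only [Option.some.injEq] at hh
    rw [← hh, List.head_eq_getElem]
  have hL : l[k-1]'(by omega) = b := by
    rw [List.getLast?_eq_some_getLast hne] at hlast
    simp only [Option.some.injEq] at hlast
    rw [← hlast, List.getLast_eq_getElem]
    congr 1
    omega
  rw [List.isChain_iff_getElem] at hc
  have key : ∀ i j : Fin k, (i - j).val = 1 → G.Adj (l[i.val]'(by omega)) (l[j.val]'(by omega)) := by
    intro i j hij
    rw [Fin.val_sub] at hij
    have hi := i.isLt
    have hj := j.isLt
    by_cases hlt : (j:ℕ) ≤ i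
    · have e : k - (j:ℕ) + i = k + (i - j) := by omega
      rw [e, Nat.add_mod_left, Nat.mod_eq_of_lt (by omega)] at hij
      have e2 : (i:ℕ) = j + 1 := by omega
      have := hc j (by omega)
      simp only [e2]
      exact this.symm
    · rw [Nat.mod_eq_of_lt (by omega)] at hij
      have e1 : (i:ℕ) = 0 := by omega
      have e2 : (j:ℕ) = k - 1 := by omega
      simp only [e1, e2, h0, hL]
      exact hab.symm
  refine ⟨⟨fun i => l[i.val]'(by omega), ?_⟩, ?_⟩
  · intro i j hij
    rw [SimpleGraph.cycleGraph_adj'] at hij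
    rcases hij with h | h
    · exact key i j h
    · exact (key j i h).symm
  · intro i j hij
    have : l[i.val]'(by omega) = l[j.val]'(by omega) := hij
    exact Fin.ext ((hn.getElem_inj_iff).mp this)

lemma exists_notMem_of_lt {α : Type*} {S F : Finset α} (h : #F < #S) : ∃ x ∈ S, x ∉ F := by
  exact exists_mem_notMem_of_card_lt_card h

lemma path_in {G : SimpleGraph W} {Q : Finset W} {d : ℕ} (hQ : ∀ v ∈ Q, d ≤ dg G Q v) :
    ∀ (len : ℕ) (F : Finset W) (v : W), v ∈ Q → v ∉ F → #F + len ≤ d →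
    ∃ l : List W, l.length = len ∧ (v :: l).Nodup ∧ (v :: l).IsChain G.Adj ∧
      ∀ w ∈ v :: l, w ∈ Q ∧ w ∉ F := by
  intro len
  induction len with
  | zero => 
    intro F v hv hF _
    exact ⟨[], rfl, by simp, by simp, by simpa using ⟨hv, hF⟩⟩
  | succ len ih =>
    intro F v hv hF hd
    obtain ⟨w, hw, hwF⟩ := exists_notMem_of_lt (S := {w ∈ Q | G.Adj v w}) (F := F) (by
      have := hQ v hv
      unfold dg at this
      omega)
    rw [mem_filter] at hw
    obtain ⟨l, hl, hnd, hch, hmem⟩ := ih (insert v F) w hw.1 (by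
        rw [mem_insert]; rintro (h | h)
        · exact hw.2.ne h.symm
        · exact hwF h) (by have := card_insert_le v F; omega)
    refine ⟨w :: l, by simp [hl], ?_, ?_, ?_⟩
    · rw [List.nodup_cons]
      refine ⟨fun h => ?_, hnd⟩
      exact (hmem v h).2 (mem_insert_self _ _)
    · exact List.isChain_cons_cons.mpr ⟨hw.2, hch⟩
    · intro z hz
      rw [List.mem_cons] at hz
      rcases hz with rfl | hz
      · exact ⟨hv, hF⟩
      · exact ⟨(hmem z hz).1, fun h => (hmem z hz).2 (mem_insert_of_mem h)⟩

lemma L1 {G : SimpleGraph W} {k : ℕ} (hk : 3 ≤ k) (hG : CF G k) {x : W} {A : Finset W}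
    (hA : ∀ a ∈ A, G.Adj x a) : Deg G k A := by
  intro Q hQ ⟨v, hv⟩
  by_contra! hcon
  obtain ⟨l, hl, hnd, hch, hmem⟩ := path_in hcon (k-2) ∅ v hv (by simp) (by simp)
  have hz := List.getLast_mem (l := v :: l) (by simp)
  refine hG (cyc hk (x :: v :: l) (by simp; omega) ?_ ?_ x ((v :: l).getLast (by simp)) (by simp) ?_
    (hA _ (hQ (hmem _ hz).1)).symm)
  · rw [List.nodup_cons]
    refine ⟨fun h => ?_, hnd⟩
    exact G.irrefl (hA x (hQ (hmem x h).1))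
  · exact List.isChain_cons_cons.mpr ⟨hA v (hQ hv), hch⟩
  · rw [List.getLast?_eq_some_getLast (by simp)]
    simp

lemma L2 {G : SimpleGraph W} {k : ℕ} (hk : 7 ≤ k) (hodd : Odd k) (hG : CF G k) {x : W} {A B : Finset W}
    (hA : ∀ a ∈ A, G.Adj x a) (hAB : Disjoint A B) (hx : x ∉ B)
    (hB : ∀ b ∈ B, ∃ a ∈ A, G.Adj a b) : Deg G k B := by
  have : ∀ b, ∃ a, b ∈ B → a ∈ A ∧ G.Adj a b := by
    intro b
    by_cases h : b ∈ B
    · obtain ⟨a, h1, h2⟩ := hB b h; exact ⟨a, fun _ => ⟨h1, h2⟩⟩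
    · exact ⟨b, fun h' => absurd h' h⟩
  choose p hp using this
  intro Q hQ ⟨v0, hv0⟩
  by_contra! hcon
  have hxA : x ∉ A := fun h => G.irrefl (hA x h)
  have hpB : ∀ b ∈ B, ∀ c ∈ B, p b ≠ c := fun b hb c hc h =>
    disjoint_left.mp hAB (hp b hb).1 (h ▸ hc)
  have hpx : ∀ b ∈ B, p b ≠ x := fun b hb h => hxA (h ▸ (hp b hb).1)
  -- (1)
  have h1 : ∀ w l, l.length = k - 4 → (w :: l).Nodup → (w :: l).IsChain G.Adj → (∀ z ∈ w :: l, z ∈ Q) →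
      p w = p ((w :: l).getLast (by simp)) := by
    intro w l hl hnd hch hmem
    by_contra hne
    set z := (w :: l).getLast (by simp) with hz
    have hzQ : z ∈ Q := hmem _ (List.getLast_mem _)
    have hwQ : w ∈ Q := hmem w (by simp)
    refine hG (cyc (by omega) (x :: p w :: ((w :: l) ++ [p z])) (by simp; omega) ?_ ?_ x (p z) (by simp) 
      (by simp [List.getLast?_cons, List.getLast?_append]) (hA _ (hp z (hQ hzQ)).1).symm)
    · rw [List.nodup_cons, List.nodup_cons, List.nodup_append]
      refine ⟨?_, ?_, hnd, by simp, ?_⟩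
      · simp only [List.mem_cons, List.mem_append, List.not_mem_nil, or_false]
        rintro (h | h | h)
        · exact hpx w (hQ hwQ) h.symm
        · exact hx (hQ (hmem x (by simpa using h)))
        · exact hpx z (hQ hzQ) h.symm
      · rw [List.mem_append]
        rintro (h | h)
        · exact hpB w (hQ hwQ) _ (hQ (hmem _ h)) rfl
        · exact hne (by simpa using h)
      · intro a ha b hb
        simp only [List.mem_singleton] at hb
        subst hb
        exact (hpB z (hQ hzQ) a (hQ (hmem a ha))).symm
    · refine List.isChain_cons_cons.mpr ⟨hA _ (hp w (hQ hwQ)).1, ?_⟩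
      rw [List.cons_append, List.isChain_cons_cons]
      refine ⟨(hp w (hQ hwQ)).2, ?_⟩
      rw [← List.cons_append, List.isChain_append]
      refine ⟨hch, by simp, ?_⟩
      intro a ha b hb
      rw [List.getLast?_eq_some_getLast (by simp)] at ha
      simp only [Option.mem_def, Option.some.injEq, List.head?_cons] at ha hb
      rw [← ha, ← hb]
      exact (hp z (hQ hzQ)).2.symm
  -- (2)
  have h2 : ∀ v ∈ Q, ∀ u ∈ Q, ∀ u' ∈ Q, G.Adj v u → G.Adj v u' → p u = p u' := by
    intro v hv u hu u' hu' hvu hvu'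
    obtain ⟨l, hl, hnd, hch, hmem⟩ := path_in hcon (k-5) {u, u'} v hv (by
      simp only [mem_insert, mem_singleton]; rintro (h | h)
      · exact hvu.ne h
      · exact hvu'.ne h) (by have := card_insert_le u {u'}; simp at this; omega)
    have aux : ∀ y ∈ ({u, u'} : Finset W), y ∈ Q → G.Adj v y → p y = p ((v :: l).getLast (by simp)) := by
      intro y hy hyQ hvy
      have := h1 y (v :: l) (by simp; omega) (List.nodup_cons.mpr ⟨fun h => (hmem y h).2 hy, hnd⟩)
        (List.isChain_cons_cons.mpr ⟨hvy.symm, hch⟩) (by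
          intro z hz
          rcases List.mem_cons.mp hz with rfl | hz
          · exact hyQ
          · exact (hmem z hz).1)
      rw [this, List.getLast_cons (by simp)]
    rw [aux u (by simp) hu hvu, aux u' (by simp) hu' hvu']
  have h2' : ∀ m (w : W) (l : List W), l.length = 2 * m → (w :: l).IsChain G.Adj → (∀ z ∈ w :: l, z ∈ Q) →
      p ((w :: l).getLast (by simp)) = p w := by
    intro m
    induction m with
    | zero => 
      intro w l hl _ _
      have : l = [] := by simpa using hl
      subst this; simp
    | succ m ih =>
      intro w l hl hch hmem
      match l, hl with
      | [], hl => simp at hl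
      | [a], hl => simp at hl; omega
      | a :: b :: l, hl =>
        rw [List.isChain_cons_cons, List.isChain_cons_cons] at hch
        have := ih b l (by simp at hl; omega) hch.2.2 (fun z hz => hmem z (by
          simp only [List.mem_cons] at hz ⊢; tauto))
        rw [List.getLast_cons (by simp), List.getLast_cons (by simp), this]
        exact h2 a (hmem a (by simp)) b (hmem b (by simp)) w (hmem w (by simp)) hch.2.1 hch.1.symm
  -- (3)
  have h3 : ∀ u ∈ Q, ∀ v ∈ Q, G.Adj u v → p u = p v := by
    intro u hu v hv huv
    obtain ⟨l, hl, hnd, hch, hmem⟩ := path_in hcon (k-5) {u} v hv (by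
      simpa using huv.ne') (by simp; omega)
    have a1 := h1 u (v :: l) (by simp; omega) (List.nodup_cons.mpr ⟨fun h => (hmem u h).2 (by simp), hnd⟩)
        (List.isChain_cons_cons.mpr ⟨huv, hch⟩) (by
          intro z hz
          rcases List.mem_cons.mp hz with rfl | hz
          · exact hu
          · exact (hmem z hz).1)
    obtain ⟨t, ht⟩ := hodd
    have a2 := h2' (t - 2) v l (by omega) hch (fun z hz => (hmem z hz).1)
    rw [a1, List.getLast_cons (by simp), a2]
  -- (4)
  have h4 : ∀ (l : List W) (w : W), (w :: l).IsChain G.Adj → (∀ z ∈ w :: l, z ∈ Q) →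
      p ((w :: l).getLast (by simp)) = p w := by
    intro l
    induction l with
    | nil => simp
    | cons a l ih =>
      intro w hch hmem
      rw [List.isChain_cons_cons] at hch
      have := ih a hch.2 (fun z hz => hmem z (by simp only [List.mem_cons] at hz ⊢; tauto))
      rw [List.getLast_cons (by simp), this]
      exact (h3 w (hmem w (by simp)) a (hmem a (by simp)) hch.1).symm
  obtain ⟨l, hl, hnd, hch, hmem⟩ := path_in hcon (k-2) ∅ v0 hv0 (by simp) (by simp)
  have hz := List.getLast_mem (l := v0 :: l) (by simp)
  have hzQ := (hmem _ hz).1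
  refine hG (cyc (by omega) (p v0 :: v0 :: l) (by simp; omega) ?_ ?_ (p v0) ((v0 :: l).getLast (by simp)) (by simp) ?_
    ?_)
  · rw [List.nodup_cons]
    exact ⟨fun h => hpB v0 (hQ hv0) _ (hQ (hmem _ h).1) rfl, hnd⟩
  · exact List.isChain_cons_cons.mpr ⟨(hp v0 (hQ hv0)).2, hch⟩
  · rw [List.getLast?_eq_some_getLast (by simp)]
    simp
  · rw [← h4 l v0 hch (fun z hz => (hmem z hz).1)]
    exact (hp _ (hQ hzQ)).2.symm

lemma L4 {G : SimpleGraph W} {k : ℕ} (hk : 3 ≤ k) (hG : CF G k) {A : Finset W} (c : ℕ)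
    (hA : k * c * c ≤ #A) : ∃ I ⊆ A, Ind G I ∧ #I = c := by
  suffices h : ∃ I ⊆ A, Ind G I ∧ c ≤ #I by
    obtain ⟨I, h1, h2, h3⟩ := h
    obtain ⟨J, hJ, hJc⟩ := exists_subset_card_eq h3
    exact ⟨J, hJ.trans h1, h2.mono hJ, hJc⟩
  rcases Nat.eq_zero_or_pos c with rfl | hc
  · exact ⟨∅, by simp, by intro u hu; simp at hu, by simp⟩
  by_cases h : ∃ x ∈ A, k * c ≤ dg G A x
  · obtain ⟨x, hx, hd⟩ := h
    obtain ⟨I, h1, h2, h3⟩ := greedy_ind G k {w ∈ A | G.Adj x w} (L1 hk hG (x := x) (by simp))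
    refine ⟨I, h1.trans (filter_subset _ _), h2, ?_⟩
    have : k * c ≤ k * #I := hd.trans h3
    exact Nat.le_of_mul_le_mul_left this (by omega)
  · push Not at h
    obtain ⟨I, h1, h2, h3⟩ := greedy_ind G (k * c) A (deg_of_bdd h)
    exact ⟨I, h1, h2, Nat.le_of_mul_le_mul_left (hA.trans h3) (by positivity)⟩

end Cyc

section SE
open scoped Classical
open Finset

lemma markov {α : Type*} (S : Finset α) (f : α → ℕ) (d : ℕ) : #{v ∈ S | d ≤ f v} * d ≤ ∑ v ∈ S, f v := by
  calc #{v ∈ S | d ≤ f v} * d = ∑ v ∈ S with d ≤ f v, d := by simp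
    _ ≤ ∑ v ∈ S with d ≤ f v, f v := sum_le_sum fun v hv => (mem_filter.mp hv).2
    _ ≤ ∑ v ∈ S, f v := sum_le_sum_of_subset (filter_subset _ _)

lemma add_block {V W : Type*} {H : SimpleGraph V} {G : SimpleGraph W} [Nonempty W] {f : V → W} {U0 T : Finset V} {A Z : Finset W}
    (hf : IsEmb H G f U0 A) (hd : Disjoint U0 T) (hZ : Z ⊆ A) (hI : Ind G Z) (hc : #T ≤ #Z)
    (h1 : ∀ z ∈ Z, ∀ u ∈ U0, f u ≠ z)
    (h2 : ∀ z ∈ Z, ∀ u ∈ U0, ∀ v ∈ T, H.Adj u v → ¬ G.Adj (f u) z) :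
    ∃ e, IsEmb H G e (U0 ∪ T) A ∧ (∀ u ∈ U0, e u = f u) ∧ ∀ u ∈ T, e u ∈ Z := by
  obtain ⟨g, hg1, hg2⟩ := exists_injOn T Z hc
  obtain ⟨e, he, he1, he2⟩ := glue (g := g) hf (U2 := T) ⟨hg1, fun u hu => hZ (hg2 u hu),
    fun u hu v hv _ => hI _ (hg2 u hu) _ (hg2 v hv)⟩ hd
    (fun u hu v hv => h1 _ (hg2 v hv) u hu) (fun u hu v hv huv => h2 _ (hg2 v hv) u hu v hv huv)
  exact ⟨e, he, he1, fun u hu => by rw [he2 u hu]; exact hg2 u hu⟩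

lemma ind_singleton {W : Type*} (G : SimpleGraph W) (z : W) : Ind G {z} := by
  intro u hu v hv h
  simp only [mem_singleton] at hu hv
  subst hu; subst hv
  exact G.irrefl h

lemma card_biUnion_le' {α β : Type*} [DecidableEq β] (S : Finset α) (g : α → Finset β) (c D : ℕ)
    (hS : #S ≤ c) (h : ∀ a ∈ S, #(g a) ≤ D) : #(S.biUnion g) ≤ c * D :=
  card_biUnion_le.trans ((sum_le_sum h).trans (by simpa using Nat.mul_le_mul_right D hS))

lemma greedy_ext {V W : Type*} {H : SimpleGraph V} {G : SimpleGraph W} [Nonempty W] {f0 : V → W} {L R : Finset V}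
    {A Z : Finset W} {d D : ℕ}
    (hf : IsEmb H G f0 L A) (hd : Disjoint L R) (hZ : Z ⊆ A)
    (hZL : ∀ z ∈ Z, ∀ u ∈ L, ¬ G.Adj (f0 u) z)
    (hR : ∀ v ∈ R, dg H R v ≤ d) (hZd : ∀ z ∈ Z, dg G Z z ≤ D) (hc : #L + #R + d * D ≤ #Z) :
    Emb H G (L ∪ R) A := by
  suffices h : ∀ R' ⊆ R, ∃ f, IsEmb H G f (L ∪ R') A ∧ (∀ u ∈ L, f u = f0 u) ∧ ∀ u ∈ R', f u ∈ Z by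
    obtain ⟨f, hf, -⟩ := h R subset_rfl
    exact ⟨f, hf⟩
  intro R'
  induction R' using Finset.induction with
  | empty => intro _; exact ⟨f0, by simpa using hf, by simp, by simp⟩
  | insert v R' hv ih =>
    intro hsub
    have hR' : R' ⊆ R := (subset_insert _ _).trans hsub
    have hvR : v ∈ R := hsub (mem_insert_self _ _)
    obtain ⟨f, hf1, hf2, hf3⟩ := ih hR'
    set N := ({u ∈ R' | H.Adj v u}).biUnion (fun u => {z ∈ Z | G.Adj (f u) z}) with hN
    have hNc : #N ≤ d * D := by
      apply card_biUnion_le'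
      · exact (card_le_card (filter_subset_filter _ hR')).trans (hR v hvR)
      · intro u hu
        exact hZd _ (hf3 u (mem_filter.mp hu).1)
    obtain ⟨z, hz, hz'⟩ := exists_notMem_of_lt (S := Z) (F := (L ∪ R').image f ∪ N) (by
      have h1 := card_union_le ((L ∪ R').image f) N
      have h2 : #((L ∪ R').image f) ≤ #(L ∪ R') := card_image_le
      have h3 := card_union_le L R'
      have h4 : #(insert v R') ≤ #R := card_le_card hsub
      rw [card_insert_of_notMem hv] at h4
      omega)
    rw [mem_union, not_or] at hz'
    have hvL : v ∉ L := fun h => disjoint_left.mp hd h hvR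
    obtain ⟨e, he1, he2, he3⟩ := add_block (T := {v}) (Z := {z}) hf1 (by simp [hvL, hv]) (by simpa using hZ hz)
      (ind_singleton G z) (by simp) (by
        intro z' hz1 u hu heq
        rw [mem_singleton] at hz1; subst hz1
        exact hz'.1 (mem_image.mpr ⟨u, hu, heq⟩)) (by
        intro z' hz1 u hu v' hv' huv
        rw [mem_singleton] at hz1 hv'; subst hz1; subst hv'
        rcases mem_union.mp hu with hu | hu
        · rw [hf2 u hu]; exact hZL _ hz u hu
        · intro hadj
          apply hz'.2
          rw [hN, mem_biUnion]
          exact ⟨u, mem_filter.mpr ⟨hu, huv.symm⟩, mem_filter.mpr ⟨hz, hadj⟩⟩)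
    refine ⟨e, ?_, ?_, ?_⟩
    · have : L ∪ insert v R' = (L ∪ R') ∪ {v} := by
        ext w; simp only [mem_union, mem_insert, mem_singleton]; tauto
      rw [this]; exact he1
    · intro u hu
      rw [he2 u (mem_union_left _ hu), hf2 u hu]
    · intro u hu
      rcases mem_insert.mp hu with rfl | hu
      · have h9 := he3 u (by simp)
        rw [mem_singleton] at h9; rw [h9]; exact hz
      · rw [he2 u (mem_union_right _ hu)]; exact hf3 u hu

/-- sparse embedding lemma -/
lemma SE (k C2 e : ℕ) (hk : 1 ≤ k) (hC : 1 ≤ C2) (he : 1 ≤ e) : ∃ n0 : ℕ, ∀ (V W : Type) [Nonempty W] (H : SimpleGraph V)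
    (G : SimpleGraph W) (U : Finset V) (A : Finset W) (p : ℕ), n0 ≤ p → Deg G k A → #U ≤ p →
    DD H U ≤ C2 * p → #U * e + p ≤ #A * e → Emb H G U A := by
  set Dg := 24 * k * e with hDg
  set d := 4 * e * C2 * Dg with hd
  have hDg1 : 1 ≤ Dg := by rw [hDg]; exact Nat.pos_of_ne_zero (by positivity)
  have hd1 : 1 ≤ d := by rw [hd]; exact Nat.pos_of_ne_zero (by positivity)
  refine ⟨4 * e * (d * Dg) + 1, ?_⟩
  intro V W _ H G U A0 p hp hA0 hUp hDD hA0c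
  obtain ⟨A, hAA0, hAc⟩ : ∃ A ⊆ A0, #A = #U + (p + e - 1) / e := by
    apply exists_subset_card_eq
    have h1 : (p + e - 1) / e ≤ #A0 - #U := by
      rw [Nat.div_le_iff_le_mul_add_pred (by omega)]
      have : #A0 * e = (#A0 - #U) * e + #U * e := by
        rw [← Nat.add_mul]; congr 1
        have : #U ≤ #A0 := by
          by_contra! h
          have := Nat.mul_le_mul_right e h.le
          omega
        omega
      rw [mul_comm e]
      omega
    have : #U ≤ #A0 := by
          by_contra! h
          have := Nat.mul_le_mul_right e h.le
          omega
    omega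
  have hA := hA0.mono hAA0
  refine Emb.mono (A := A) ?_ subset_rfl hAA0
  have hq1 : p ≤ (p + e - 1) / e * e := by
    have h1 := Nat.div_add_mod (p + e - 1) e
    have h2 := Nat.mod_lt (p + e - 1) (show e > 0 by omega)
    rw [mul_comm] at h1
    omega
  have hq2 : (p + e - 1) / e ≤ p := by
    rw [Nat.div_le_iff_le_mul_add_pred (by omega)]
    have := Nat.mul_le_mul_right p he
    omega
  set q := (p + e - 1) / e with hq
  have hDA : DD G A ≤ 4 * k * p := by
    have := hA.DD_le
    have h2 : 2 * k * #A ≤ 2 * k * (2 * p) := Nat.mul_le_mul_left _ (by omega)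
    calc _ ≤ _ := this
      _ ≤ _ := h2
      _ = _ := by ring
  set Hi := {v ∈ A | Dg ≤ dg G A v} with hHi
  have hHic : #Hi * (6 * e) ≤ p := by
    have h1 : #Hi * Dg ≤ DD G A := markov A _ _
    have h2 : (#Hi * (6 * e)) * (4 * k) ≤ p * (4 * k) := by
      calc _ = #Hi * Dg := by rw [hDg]; ring
        _ ≤ _ := h1
        _ ≤ _ := hDA
        _ = _ := by ring
    exact Nat.le_of_mul_le_mul_right h2 (by omega)
  set Lo := A \ Hi with hLo
  have hLoc : #Lo + #Hi = #A := by
    exact card_sdiff_add_card_eq_card (filter_subset _ _)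
  have hLod : ∀ v ∈ Lo, dg G A v < Dg := by
    intro v hv
    rw [hLo, mem_sdiff, hHi, mem_filter] at hv
    by_contra! h
    exact hv.2 ⟨hv.1, h⟩
  set L := {v ∈ U | d ≤ dg H U v} with hL
  have hLc : #L * (4 * e * Dg) ≤ p := by
    have h1 : #L * d ≤ DD H U := markov U _ _
    have h2 : (#L * (4 * e * Dg)) * C2 ≤ p * C2 := by
      calc _ = #L * d := by rw [hd]; ring
        _ ≤ _ := h1
        _ ≤ _ := hDD
        _ = _ := by ring
    exact Nat.le_of_mul_le_mul_right h2 (by omega)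
  obtain ⟨I0, hI0, hI0I, hI0c⟩ := greedy_ind G k Lo (hA.mono sdiff_subset)
  have hI0L : #L ≤ #I0 := by
    have h0 : #U * e + p ≤ (#Lo + #Hi) * e := by
      rw [hLoc, hAc]; nlinarith
    by_contra! hlt
    have h1 : k * #I0 * e ≤ k * #L * e := by gcongr
    have h2 : #Lo * e ≤ k * #I0 * e := by gcongr
    have h3 : k * #L * e * (4 * 24 * e) ≤ p := by
      calc _ = #L * (4 * e * Dg) := by rw [hDg]; ring
        _ ≤ p := hLc
    have h4 : k * #L * e ≤ k * #L * e * (4 * 24 * e) := Nat.le_mul_of_pos_right _ (by omega)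
    have h5 : k * #L * e * 96 ≤ k * #L * e * (4 * 24 * e) := Nat.mul_le_mul_left _ (by omega)
    have : 0 < p := by omega
    nlinarith
  obtain ⟨f0, hf0⟩ : Emb H G L I0 := isEmb_of_ind hI0I hI0L
  have hLU : L ⊆ U := filter_subset _ _
  set N := L.biUnion (fun u => {z ∈ A | G.Adj (f0 u) z}) with hN
  have hNc : #N ≤ #L * Dg := by
    apply card_biUnion_le' _ _ _ _ le_rfl
    intro u hu
    exact (hLod _ (hI0 (hf0.2.1 u hu))).le
  have := greedy_ext (L := L) (R := U \ L) (Z := Lo \ N) (A := A) (d := d) (D := Dg)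
    (hf0.mono subset_rfl (hI0.trans sdiff_subset)) disjoint_sdiff (sdiff_subset.trans sdiff_subset)
    (by
      intro z hz u hu hadj
      rw [mem_sdiff] at hz
      apply hz.2
      rw [hN, mem_biUnion]
      exact ⟨u, hu, mem_filter.mpr ⟨sdiff_subset hz.1, hadj⟩⟩)
    (by
      intro v hv
      have h1 := dg_mono H (sdiff_subset (s := U) (t := L)) v
      rw [mem_sdiff, hL, mem_filter] at hv
      by_contra! h
      exact hv.2 ⟨hv.1, by omega⟩)
    (by
      intro z hz
      exact (dg_mono G (sdiff_subset.trans sdiff_subset) z).trans (hLod z (sdiff_subset hz)).le)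
    (by
      have h1 : #Lo - #N ≤ #(Lo \ N) := le_card_sdiff _ _
      have h2 : #(U \ L) + #L = #U := by
        rw [card_sdiff_of_subset hLU]
        have := card_le_card hLU
        omega
      have h3 : (#L * Dg) * e * 4 ≤ p := by
        calc _ = #L * (4 * e * Dg) := by ring
          _ ≤ p := hLc
      suffices h : (#U + d * Dg) + #N ≤ #Lo by omega
      suffices h : ((#U + d * Dg) + #L * Dg) * e ≤ #Lo * e by
        have := Nat.le_of_mul_le_mul_right h (by omega)
        omega
      have h4 : #Lo * e + #Hi * e = #U * e + q * e := by
        rw [← Nat.add_mul, hLoc, hAc, Nat.add_mul]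
      have h5 : ((#U + d * Dg) + #L * Dg) * e = #U * e + e * (d * Dg) + #L * Dg * e := by ring
      rw [h5]
      have h6 : #Hi * e * 6 ≤ p := by linarith
      have h7 : 4 * (e * (d * Dg)) + 1 ≤ p := by linarith
      omega)
  rwa [union_sdiff_of_subset hLU] at this

end SE

section ML
open scoped Classical
open Finset

lemma cycf {W : Type*} {G : SimpleGraph W} {k : ℕ} (hk : 3 ≤ k) (g : ℕ → W)
    (hinj : Set.InjOn g (range k)) (hadj : ∀ i, i + 1 < k → G.Adj (g i) (g (i+1)))
    (hcl : G.Adj (g (k-1)) (g 0)) : HasCopy (SimpleGraph.cycleGraph k) G := by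
  refine cyc hk ((List.range k).map g) (by simp) ?_ ?_ (g 0) (g (k-1)) ?_ ?_ hcl
  · apply List.Nodup.map_on _ List.nodup_range
    intro x hx y hy hxy
    exact hinj (by simpa using hx) (by simpa using hy) hxy
  · rw [List.isChain_iff_getElem]
    intro i hi
    simp only [List.length_map, List.length_range] at hi
    simpa using hadj i (by omega)
  · simp [List.head?_range]
    omega
  · simp [List.getLast?_range]
    omega

lemma enum {W : Type*} [Nonempty W] (S : Finset W) (n : ℕ) (h : n ≤ #S) : ∃ c : ℕ → W, 
    (∀ i j, i < n → j < n → c i = c j → i = j) ∧ ∀ i < n, c i ∈ S := by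
  obtain ⟨c, h1, h2⟩ := exists_injOn (range n) S (by simpa using h)
  exact ⟨c, fun i j hi hj hij => h1 (by simpa using hi) (by simpa using hj) hij,
    fun i hi => h2 i (by simpa using hi)⟩

lemma clique_small {W : Type*} [Nonempty W] {G : SimpleGraph W} {k : ℕ} (hk : 3 ≤ k) (hG : CF G k) {S : Finset W}
    (hS : ∀ u ∈ S, ∀ v ∈ S, u ≠ v → G.Adj u v) : #S < k := by
  by_contra! h
  obtain ⟨c, h1, h2⟩ := enum S k h
  refine hG (cycf hk c ?_ ?_ ?_)
  · intro i hi j hj hij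
    exact h1 i j (by simpa using hi) (by simpa using hj) hij
  · intro i hi
    refine hS _ (h2 i (by omega)) _ (h2 _ (by omega)) fun h => ?_
    have := h1 i (i+1) (by omega) (by omega) h
    omega
  · refine hS _ (h2 _ (by omega)) _ (h2 _ (by omega)) fun h => ?_
    have := h1 (k-1) 0 (by omega) (by omega) h
    omega

lemma alt_cycle {W : Type*} [Nonempty W] {G : SimpleGraph W} {t : ℕ} (ht : 1 ≤ t) (hG : CF G (2*t+1)) {S R : Finset W}
    (hS : ∀ u ∈ S, ∀ v ∈ S, u ≠ v → G.Adj u v) (hSR : Disjoint S R) (hR : ∀ u ∈ S, ∀ v ∈ R, G.Adj u v)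
    (hSc : t + 1 ≤ #S) (hRc : t ≤ #R) : False := by
  obtain ⟨c, c1, c2⟩ := enum S (t+1) hSc
  obtain ⟨a, a1, a2⟩ := enum R t hRc
  have hac : ∀ i j, i < t + 1 → j < t → c i ≠ a j := fun i j hi hj h =>
    disjoint_left.mp hSR (c2 i hi) (h ▸ a2 j hj)
  refine hG (cycf (by omega) (fun i => if i % 2 = 0 then c (i/2) else a (i/2)) ?_ ?_ ?_)
  · intro i hi j hj hij
    simp only [coe_range, Set.mem_Iio] at hi hj
    simp only at hij
    split_ifs at hij with h1 h2 h2
    · have := c1 _ _ (by omega) (by omega) hij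
      omega
    · exact absurd hij (hac _ _ (by omega) (by omega))
    · exact absurd hij.symm (hac _ _ (by omega) (by omega))
    · have := a1 _ _ (by omega) (by omega) hij
      omega
  · intro i hi
    by_cases h : i % 2 = 0
    · rw [if_pos h, if_neg (by omega)]
      exact hR _ (c2 _ (by omega)) _ (a2 _ (by omega))
    · rw [if_neg h, if_pos (by omega)]
      exact (hR _ (c2 _ (by omega)) _ (a2 _ (by omega))).symm
  · have e1 : (2 * t + 1 - 1) % 2 = 0 := by omega
    have e2 : (0 : ℕ) % 2 = 0 := by omega
    rw [if_pos e1, if_pos e2]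
    refine hS _ (c2 _ (by omega)) _ (c2 _ (by omega)) fun h => ?_
    have := c1 _ _ (by omega) (by omega) h
    omega

lemma add_pair {V W : Type*} {H : SimpleGraph V} {G : SimpleGraph W} {f : V → W} {T : Finset V} {A : Finset W}
    (hf : IsEmb H G f T A) {a b : V} (ha : a ∉ T) (hb : b ∉ T) (hab : a ≠ b)
    (hna : ∀ u ∈ T, ¬ H.Adj u a) (hnb : ∀ u ∈ T, ¬ H.Adj u b) {y y' : W} (hy : y ∈ A) (hy' : y' ∈ A)
    (hne : y ≠ y') (hadj : ¬ G.Adj y y') (hyf : ∀ u ∈ T, f u ≠ y) (hyf' : ∀ u ∈ T, f u ≠ y') :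
    ∃ e, IsEmb H G e (T ∪ {a, b}) A ∧ (∀ u ∈ T, e u = f u) ∧ e a = y ∧ e b = y' := by
  have hg : IsEmb H G (fun v => if v = a then y else y') {a, b} A := by
    refine ⟨?_, ?_, ?_⟩
    · intro u hu v hv huv
      simp only [coe_insert, coe_singleton, Set.mem_insert_iff, Set.mem_singleton_iff] at hu hv
      rcases hu with rfl | rfl <;> rcases hv with rfl | rfl
      · rfl
      · simp only [if_true, if_neg hab.symm] at huv; exact absurd huv hne
      · simp only [if_true, if_neg hab.symm] at huv; exact absurd huv.symm hne
      · rfl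
    · intro u hu
      simp only
      split_ifs <;> assumption
    · intro u hu v hv huv
      simp only [mem_insert, mem_singleton] at hu hv
      rcases hu with rfl | rfl <;> rcases hv with rfl | rfl
      · exact fun h => G.irrefl h
      · simp only [if_true, if_neg hab.symm]; exact hadj
      · simp only [if_true, if_neg hab.symm]; exact fun h => hadj h.symm
      · exact fun h => G.irrefl h
  obtain ⟨e, he, he1, he2⟩ := glue hf hg (by simp [ha, hb]) (by
    intro u hu v hv
    split_ifs
    · exact hyf u hu
    · exact hyf' u hu) (by
    intro u hu v hv huv
    simp only [mem_insert, mem_singleton] at hv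
    rcases hv with rfl | rfl
    · exact absurd huv (hna u hu)
    · exact absurd huv (hnb u hu))
  refine ⟨e, he, he1, ?_, ?_⟩
  · rw [he2 a (by simp)]; simp
  · rw [he2 b (by simp)]; simp [hab.symm]

lemma ML (t : ℕ) (ht : 1 ≤ t) {V W : Type*} [Nonempty W] (H : SimpleGraph V)
    (G : SimpleGraph W) (hG : CF G (2*t+1)) (T : Finset V) (A : Finset W) 
    (hT : ∀ v ∈ T, dg H T v = 1) (hTc : 20 * t * t + 20 ≤ #T) (hA : #T + t ≤ #A) : Emb H G T A := by
  have hm : ∀ v, ∃ w, v ∈ T → w ∈ T ∧ H.Adj v w ∧ ∀ z ∈ T, H.Adj v z → z = w := by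
    intro v
    by_cases hv : v ∈ T
    · obtain ⟨w, hw⟩ := card_eq_one.mp (hT v hv)
      have h1 : w ∈ ({w ∈ T | H.Adj v w} : Finset V) := by rw [hw]; simp
      rw [mem_filter] at h1
      refine ⟨w, fun _ => ⟨h1.1, h1.2, fun z hz hvz => ?_⟩⟩
      have : z ∈ ({w ∈ T | H.Adj v w} : Finset V) := mem_filter.mpr ⟨hz, hvz⟩
      rw [hw] at this
      simpa using this
    · exact ⟨v, fun h => absurd h hv⟩
  choose m hm using hm
  have hmm : ∀ v ∈ T, m (m v) = v := fun v hv =>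
    ((hm _ (hm v hv).1).2.2 v hv (hm v hv).2.1.symm).symm
  have hmv : ∀ v ∈ T, m v ≠ v := fun v hv h => by
    have := (hm v hv).2.1
    rw [h] at this
    exact H.irrefl this
  -- maximal
  set P := {T' ∈ T.powerset | Cl H T T' ∧ Emb H G T' A} with hP
  have hPne : P.Nonempty := by
    refine ⟨∅, ?_⟩
    rw [hP, mem_filter]
    have w0 : W := Classical.arbitrary W
    refine ⟨by simp, by intro u hu; simp at hu, fun _ => w0, by simp, by simp, by simp⟩
  obtain ⟨T', hT', hmax⟩ := exists_max_image P card hPne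
  rw [hP, mem_filter, mem_powerset] at hT'
  obtain ⟨hsub, hcl, f, hf⟩ := hT'
  by_cases hTT : T' = T
  · subst hTT; exact ⟨f, hf⟩
  exfalso
  obtain ⟨a, haT, haT'⟩ : ∃ a ∈ T, a ∉ T' := by
    by_contra! h
    exact hTT (hsub.antisymm h)
  set b := m a with hb
  have hbT : b ∈ T := (hm a haT).1
  have hab : a ≠ b := (hmv a haT).symm
  have hclm : ∀ v ∈ T', m v ∈ T' := fun v hv => hcl v hv _ (hm v (hsub hv)).1 (hm v (hsub hv)).2.1
  have hbT' : b ∉ T' := fun h => haT' (by have := hclm b h; rwa [hb, hmm a haT] at this)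
  have hmb : m b = a := hmm a haT
  -- no embedding of T' ∪ {a,b}
  have hno : ¬ Emb H G (T' ∪ {a, b}) A := by
    intro hE
    have : T' ∪ {a, b} ∈ P := by
      rw [hP, mem_filter, mem_powerset]
      refine ⟨union_subset hsub (by intro z hz; simp at hz; rcases hz with rfl | rfl <;> assumption), ?_, hE⟩
      intro u hu v hv huv
      simp only [mem_union, mem_insert, mem_singleton] at hu ⊢
      rcases hu with hu | rfl | rfl
      · exact Or.inl (hcl u hu v hv huv)
      · right; right; exact (hm u haT).2.2 v hv huv
      · right; left; rw [← hmb]; exact (hm _ hbT).2.2 v hv huv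
    have h1 := hmax _ this
    have h2 : #(T' ∪ {a, b}) = #T' + 2 := by
      rw [card_union_of_disjoint (by simp [haT', hbT']), card_pair hab]
    omega
  have hnoadj : ∀ z ∈ T, z ∉ T' → ∀ u ∈ T', ¬ H.Adj u z := fun z hz hz' u hu huz =>
    hz' (hcl u hu z hz huz)
  set Un := A \ T'.image f with hUn
  have hUnA : Un ⊆ A := sdiff_subset
  have hUnf : ∀ y ∈ Un, ∀ u ∈ T', f u ≠ y := by
    intro y hy u hu h
    rw [hUn, mem_sdiff] at hy
    exact hy.2 (mem_image.mpr ⟨u, hu, h⟩)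
  have hUnc : #Un + #T' = #A := by
    have h1 : #(T'.image f) = #T' := card_image_of_injOn hf.1
    rw [← h1, hUn]
    apply card_sdiff_add_card_eq_card
    intro w hw
    obtain ⟨u, hu, rfl⟩ := mem_image.mp hw
    exact hf.2.1 u hu
  have hclq : ∀ u ∈ Un, ∀ v ∈ Un, u ≠ v → G.Adj u v := by
    intro y hy y' hy' hne
    by_contra hadj
    obtain ⟨e, he, -⟩ := add_pair hf haT' hbT' hab (hnoadj a haT haT') (hnoadj b hbT hbT') (hUnA hy) (hUnA hy') hne hadj
      (hUnf y hy) (hUnf y' hy')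
    exact hno ⟨e, he⟩
  have hUnk := clique_small (by omega) hG hclq
  have hT'c : #T' + 2 ≤ #T := by
    have h2 : #(T' ∪ {a, b}) = #T' + 2 := by
      rw [card_union_of_disjoint (by simp [haT', hbT']), card_pair hab]
    rw [← h2]
    exact card_le_card (union_subset hsub (by intro z hz; simp at hz; rcases hz with rfl | rfl <;> assumption))
  -- blue sets
  set Bl : V → Finset W := fun u => {y ∈ Un | ¬ G.Adj (f u) y} with hBl
  have hswap : ∀ u ∈ T', ∀ y ∈ Bl u, ∀ y' ∈ Bl (m u), y = y' := by
    intro u hu y hy y' hy'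
    by_contra hne
    simp only [hBl, mem_filter] at hy hy'
    have huT := hsub hu
    have hmu := hclm u hu
    have hs : (T' \ {u, m u}) ⊆ T' := sdiff_subset
    have hmem : ∀ z ∈ T' \ {u, m u}, z ≠ u ∧ z ≠ m u := by
      intro z hz
      simp only [mem_sdiff, mem_insert, mem_singleton, not_or] at hz
      exact hz.2
    have hf1 := hf.mono hs (subset_refl A)
    have hfu := hf.2.1 u hu
    have hfmu := hf.2.1 _ hmu
    obtain ⟨e, he, he1, he2, he3⟩ := add_pair hf1 (a := u) (b := m u) (y := f u) (y' := y) (by simp) (by simp) (hmv u huT).symm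
      (by
        intro z hz huz
        have := (hm u huT).2.2 z (hsub (hs hz)) huz.symm
        exact (hmem z hz).2 this) (by
        intro z hz huz
        have := (hm (m u) (hsub hmu)).2.2 z (hsub (hs hz)) huz.symm
        rw [hmm u huT] at this
        exact (hmem z hz).1 this) hfu (hUnA hy.1) (hUnf y hy.1 u hu) hy.2 (by
        intro z hz h
        exact (hmem z hz).1 (hf.1 (hs hz) hu h)) (by
        intro z hz
        exact hUnf y hy.1 z (hs hz))
    have hTeq : T' \ {u, m u} ∪ {u, m u} = T' := by
      apply sdiff_union_of_subset
      intro z hz; simp at hz; rcases hz with rfl | rfl <;> assumption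
    rw [hTeq] at he
    have hev : ∀ z ∈ T', e z = y ∨ (e z = f z ∧ z ≠ m u) := by
      intro z hz
      by_cases h1 : z = u
      · right; rw [h1]; exact ⟨he2, (hmv u huT).symm⟩
      · by_cases h2 : z = m u
        · left; rw [h2, he3]
        · right; exact ⟨he1 z (by simp [hz, h1, h2]), h2⟩
    obtain ⟨e', he', -⟩ := add_pair he haT' hbT' hab (hnoadj a haT haT') (hnoadj b hbT hbT') (y := f (m u)) (y' := y')
      hfmu (hUnA hy'.1) (hUnf y' hy'.1 _ hmu) hy'.2 (by
        intro z hz h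
        rcases hev z hz with h1 | ⟨h1, h2⟩
        · exact hUnf y hy.1 _ hmu (by rw [← h, h1])
        · rw [h1] at h; exact h2 (hf.1 hz hmu h)) (by
        intro z hz h
        rcases hev z hz with h1 | ⟨h1, h2⟩
        · exact hne (by rw [← h1, h])
        · rw [h1] at h; exact hUnf y' hy'.1 _ hz h)
    exact hno ⟨e', he'⟩
  set S := {u ∈ T' | ∃ y ∈ Un, Bl u ⊆ {y}} with hS
  have hUnne : Un.Nonempty := by
    rw [← card_pos]; omega
  obtain ⟨y0, hy0⟩ := hUnne
  have hSor : ∀ u ∈ T', u ∈ S ∨ m u ∈ S := by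
    intro u hu
    by_cases h : (Bl u).Nonempty
    · obtain ⟨y, hy⟩ := h
      right
      rw [hS, mem_filter]
      refine ⟨hclm u hu, y, (mem_filter.mp hy).1, ?_⟩
      intro y' hy'
      rw [mem_singleton]
      exact (hswap u hu y hy y' hy').symm
    · left
      rw [hS, mem_filter]
      rw [not_nonempty_iff_eq_empty] at h
      exact ⟨hu, y0, hy0, by rw [h]; simp⟩
  have hSc : #T' ≤ 2 * #S := by
    have h1 : T' ⊆ S ∪ S.image m := by
      intro u hu
      rw [mem_union]
      rcases hSor u hu with h | h
      · exact Or.inl h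
      · right; rw [mem_image]; exact ⟨m u, h, hmm u (hsub hu)⟩
    have h2 := card_le_card h1
    have h3 := card_union_le S (S.image m)
    have h4 : #(S.image m) ≤ #S := card_image_le
    omega
  have hφ : ∀ u, ∃ y, u ∈ S → y ∈ Un ∧ Bl u ⊆ {y} := by
    intro u
    by_cases hu : u ∈ S
    · obtain ⟨-, y, h1, h2⟩ := mem_filter.mp hu
      exact ⟨y, fun _ => ⟨h1, h2⟩⟩
    · exact ⟨y0, fun h => absurd h hu⟩
  choose φ hφ using hφ
  obtain ⟨y, hy, hyc⟩ := exists_lt_card_fiber_of_mul_lt_card_of_maps_to (s := S) (t := Un) (f := φ) (n := t)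
    (fun u hu => (hφ u hu).1) (by
      have : #Un * t ≤ (2 * t) * t := Nat.mul_le_mul_right _ (by omega)
      nlinarith)
  have hST : S ⊆ T' := filter_subset _ _
  refine alt_cycle ht hG (S := Un.erase y) (R := ({x ∈ S | φ x = y}).image f) ?_ ?_ ?_ ?_ ?_
  · intro u hu v hv
    exact hclq u (mem_of_mem_erase hu) v (mem_of_mem_erase hv)
  · rw [disjoint_left]
    intro z hz hz'
    obtain ⟨u, hu, rfl⟩ := mem_image.mp hz'
    exact hUnf _ (mem_of_mem_erase hz) u (hST (mem_filter.mp hu).1) rfl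
  · intro z hz z' hz'
    obtain ⟨u, hu, rfl⟩ := mem_image.mp hz'
    rw [mem_filter] at hu
    by_contra hadj
    have h1 : z ∈ Bl u := by
      simp only [hBl, mem_filter]
      exact ⟨mem_of_mem_erase hz, fun h => hadj h.symm⟩
    have h2 := (hφ u hu.1).2 h1
    rw [mem_singleton, hu.2] at h2
    exact (ne_of_mem_erase hz) h2
  · rw [card_erase_of_mem hy]; omega
  · rw [card_image_of_injOn (hf.1.mono (by
      intro z hz; exact hST (mem_filter.mp hz).1))]
    omega

end ML

section PartS
open scoped Classical
open Finset
variable {V : Type*}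

structure HPart (H : SimpleGraph V) (X : Finset V) (P : Finset (Finset V)) : Prop where
  ne : ∀ T ∈ P, T.Nonempty
  sub : ∀ T ∈ P, T ⊆ X
  tau : ∀ T ∈ P, 2 * #T ≤ DD H T + 2
  cov : ∀ x ∈ X, ∃ T ∈ P, x ∈ T
  dis : ∀ T ∈ P, ∀ T' ∈ P, ∀ x, x ∈ T → x ∈ T' → T = T'

lemma tau_union {H : SimpleGraph V} {T S : Finset V} (hTS : Disjoint T S) (hT : 2 * #T ≤ DD H T + 2)
    (hS : 2 * #S ≤ DD H S + 2) {u v : V} (hu : u ∈ T) (hv : v ∈ S) (huv : H.Adj u v) :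
    2 * #(T ∪ S) ≤ DD H (T ∪ S) + 2 := by
  rw [DD_union H hTS, card_union_of_disjoint hTS]
  have h1 : 1 ≤ dg H S u := by
    unfold dg; rw [Nat.one_le_iff_ne_zero, ← pos_iff_ne_zero, card_pos]
    exact ⟨v, mem_filter.mpr ⟨hv, huv⟩⟩
  have h2 : dg H S u ≤ ∑ w ∈ T, dg H S w := single_le_sum (f := fun w => dg H S w) (fun _ _ => Nat.zero_le _) hu
  omega

lemma tau_merge {H : SimpleGraph V} {T : Finset V} (hT : 2 * #T ≤ DD H T + 2) : ∀ (Q : Finset (Finset V)),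
    (∀ S ∈ Q, Disjoint T S ∧ 2 * #S ≤ DD H S + 2 ∧ ∃ u ∈ T, ∃ v ∈ S, H.Adj u v) →
    (∀ S ∈ Q, ∀ S' ∈ Q, ∀ x, x ∈ S → x ∈ S' → S = S') →
    2 * #(T ∪ Q.biUnion id) ≤ DD H (T ∪ Q.biUnion id) + 2 := by
  intro Q
  induction Q using Finset.induction with
  | empty => intro _ _; simpa using hT
  | insert S Q hS ih =>
    intro h1 h2
    have hr := ih (fun S' hS' => h1 S' (mem_insert_of_mem hS'))
      (fun S' hS' S'' hS'' => h2 S' (mem_insert_of_mem hS') S'' (mem_insert_of_mem hS''))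
    obtain ⟨a1, a2, u, hu, v, hv, huv⟩ := h1 S (mem_insert_self _ _)
    have e : T ∪ (insert S Q).biUnion id = (T ∪ Q.biUnion id) ∪ S := by
      rw [biUnion_insert, union_assoc, union_comm (id S)]; rfl
    rw [e]
    refine tau_union ?_ hr a2 (mem_union_left _ hu) hv huv
    rw [disjoint_left]
    intro x hx hxS
    rcases mem_union.mp hx with hx | hx
    · exact disjoint_left.mp a1 hx hxS
    · obtain ⟨S', hS', hxS'⟩ := mem_biUnion.mp hx
      have := h2 S (mem_insert_self _ _) S' (mem_insert_of_mem hS') x hxS hxS'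
      exact hS (this ▸ hS')

lemma partition_lemma (H : SimpleGraph V) (C d : ℕ) (hC : 1 ≤ C) : ∀ X : Finset V, (∀ v ∈ X, dg H X v ≤ d) →
    ∃ P : Finset (Finset V), HPart H X P ∧ ∀ T ∈ P, #T ≤ C + C * C * d ∧ (C ≤ #T ∨ Cl H X T) := by
  intro X
  induction X using Finset.strongInduction with
  | _ X ih =>
  intro hd
  rcases X.eq_empty_or_nonempty with rfl | ⟨x, hx⟩
  · exact ⟨∅, ⟨by simp, by simp, by simp, by simp, by simp⟩, by simp⟩
  set F := {T ∈ X.powerset | x ∈ T ∧ 2 * #T ≤ DD H T + 2 ∧ #T ≤ C} with hF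
  obtain ⟨T, hTF, hmax⟩ := exists_max_image F card ⟨{x}, by
    rw [hF, mem_filter]; exact ⟨by simpa using hx, by simp, by simp, by simpa using hC⟩⟩
  rw [hF, mem_filter, mem_powerset] at hTF
  obtain ⟨hTX, hxT, hTt, hTC⟩ := hTF
  have hss : X \ T ⊂ X := by
    refine ⟨sdiff_subset, fun h => ?_⟩
    have := h hx
    rw [mem_sdiff] at this
    exact this.2 hxT
  obtain ⟨P, hP, hP2⟩ := ih (X \ T) hss (fun v hv => (dg_mono H sdiff_subset v).trans (hd v (sdiff_subset hv)))
  have hPT : ∀ S ∈ P, Disjoint T S := fun S hS => by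
    rw [disjoint_left]
    intro y hy hyS
    have := hP.sub S hS hyS
    rw [mem_sdiff] at this
    exact this.2 hy
  by_cases hcl : Cl H X T
  · refine ⟨insert T P, ⟨?_, ?_, ?_, ?_, ?_⟩, ?_⟩
    · intro S hS
      rcases mem_insert.mp hS with rfl | hS
      · exact ⟨x, hxT⟩
      · exact hP.ne S hS
    · intro S hS
      rcases mem_insert.mp hS with rfl | hS
      · exact hTX
      · exact (hP.sub S hS).trans sdiff_subset
    · intro S hS
      rcases mem_insert.mp hS with rfl | hS
      · exact hTt
      · exact hP.tau S hS
    · intro y hy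
      by_cases hyT : y ∈ T
      · exact ⟨T, mem_insert_self _ _, hyT⟩
      · obtain ⟨S, hS, hyS⟩ := hP.cov y (mem_sdiff.mpr ⟨hy, hyT⟩)
        exact ⟨S, mem_insert_of_mem hS, hyS⟩
    · intro S hS S' hS' y hy hy'
      rcases mem_insert.mp hS with rfl | hS1 <;> rcases mem_insert.mp hS' with rfl | hS1'
      · rfl
      · exact absurd hy' (disjoint_left.mp (hPT S' hS1') hy)
      · exact absurd hy (disjoint_left.mp (hPT S hS1) hy')
      · exact hP.dis S hS1 S' hS1' y hy hy'
    · intro S hS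
      rcases mem_insert.mp hS with rfl | hS
      · exact ⟨by omega, Or.inr hcl⟩
      · refine ⟨(hP2 S hS).1, (hP2 S hS).2.imp id fun h => ?_⟩
        intro u hu v hv huv
        have huX := hP.sub S hS hu
        rw [mem_sdiff] at huX
        refine h u hu v (mem_sdiff.mpr ⟨hv, fun hvT => huX.2 (hcl v hvT u huX.1 huv.symm)⟩) huv
  · have hTeq : #T = C := by
      by_contra hne
      unfold Cl at hcl
      push Not at hcl
      obtain ⟨u, hu, v, hv, huv, hvT⟩ := hcl
      have : insert v T ∈ F := by
        rw [hF, mem_filter, mem_powerset]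
        refine ⟨insert_subset hv hTX, mem_insert_of_mem hxT, ?_, ?_⟩
        · rw [card_insert_of_notMem hvT, DD_insert H hvT]
          have : 1 ≤ dg H T v := by
            unfold dg; rw [Nat.one_le_iff_ne_zero, ← pos_iff_ne_zero, card_pos]
            exact ⟨u, mem_filter.mpr ⟨hu, huv.symm⟩⟩
          omega
        · rw [card_insert_of_notMem hvT]; omega
      have := hmax _ this
      rw [card_insert_of_notMem hvT] at this
      omega
    set Q := {S ∈ P | #S < C ∧ ∃ u ∈ T, ∃ v ∈ S, H.Adj u v} with hQ
    have hQP : Q ⊆ P := filter_subset _ _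
    set T' := T ∪ Q.biUnion id with hT'
    have hT't : 2 * #T' ≤ DD H T' + 2 := by
      apply tau_merge hTt
      · intro S hS
        exact ⟨hPT S (hQP hS), hP.tau S (hQP hS), (mem_filter.mp hS).2.2⟩
      · intro S hS S' hS'
        exact hP.dis S (hQP hS) S' (hQP hS')
    have hQc : #Q ≤ C * d := by
      set N := T.biUnion (fun u => {w ∈ X | H.Adj u w}) with hN
      have hNc : #N ≤ C * d := by
        apply card_biUnion_le'
        · omega
        · intro u hu; exact hd u (hTX hu)
      have hex : ∀ S ∈ Q, ∃ w ∈ S, w ∈ N := by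
        intro S hS
        obtain ⟨u, hu, v, hv, huv⟩ := (mem_filter.mp hS).2.2
        refine ⟨v, hv, mem_biUnion.mpr ⟨u, hu, mem_filter.mpr ⟨?_, huv⟩⟩⟩
        exact sdiff_subset (hP.sub S (hQP hS) hv)
      have : Nonempty V := ⟨x⟩
      choose! g hg1 hg2 using hex
      refine (card_le_card_of_injOn g (fun S hS => hg2 S hS) ?_).trans hNc
      intro S hS S' hS' heq
      exact hP.dis S (hQP hS) S' (hQP hS') (g S) (hg1 S hS) (heq ▸ hg1 S' hS')
    have hT'c : #T' ≤ C + C * C * d := by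
      have h1 := card_union_le T (Q.biUnion id)
      have h2 : #(Q.biUnion id) ≤ (C * d) * C := by
        apply card_biUnion_le' _ _ _ _ hQc
        intro S hS
        exact (mem_filter.mp hS).2.1.le
      have : C * d * C = C * C * d := by ring
      rw [← hT'] at h1
      omega
    have hTT' : T ⊆ T' := subset_union_left
    have hT'X : T' ⊆ X := by
      refine union_subset hTX ?_
      rw [biUnion_subset]
      intro S hS
      exact (hP.sub S (hQP hS)).trans sdiff_subset
    have hdisj : ∀ S ∈ P \ Q, Disjoint T' S := by
      intro S hS
      rw [mem_sdiff] at hS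
      rw [disjoint_left]
      intro y hy hyS
      rcases mem_union.mp hy with hy | hy
      · exact disjoint_left.mp (hPT S hS.1) hy hyS
      · obtain ⟨S', hS', hyS'⟩ := mem_biUnion.mp hy
        have := hP.dis S hS.1 S' (hQP hS') y hyS hyS'
        exact hS.2 (this ▸ hS')
    refine ⟨insert T' (P \ Q), ⟨?_, ?_, ?_, ?_, ?_⟩, ?_⟩
    · intro S hS
      rcases mem_insert.mp hS with rfl | hS
      · exact ⟨x, hTT' hxT⟩
      · exact hP.ne S (sdiff_subset hS)
    · intro S hS
      rcases mem_insert.mp hS with rfl | hS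
      · exact hT'X
      · exact (hP.sub S (sdiff_subset hS)).trans sdiff_subset
    · intro S hS
      rcases mem_insert.mp hS with rfl | hS
      · exact hT't
      · exact hP.tau S (sdiff_subset hS)
    · intro y hy
      by_cases hyT : y ∈ T'
      · exact ⟨T', mem_insert_self _ _, hyT⟩
      · obtain ⟨S, hS, hyS⟩ := hP.cov y (mem_sdiff.mpr ⟨hy, fun h => hyT (hTT' h)⟩)
        refine ⟨S, mem_insert_of_mem (mem_sdiff.mpr ⟨hS, fun h => hyT ?_⟩), hyS⟩
        exact mem_union_right _ (mem_biUnion.mpr ⟨S, h, hyS⟩)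
    · intro S hS S' hS' y hy hy'
      rcases mem_insert.mp hS with rfl | hS1 <;> rcases mem_insert.mp hS' with rfl | hS1'
      · rfl
      · exact absurd hy' (disjoint_left.mp (hdisj S' hS1') hy)
      · exact absurd hy (disjoint_left.mp (hdisj S hS1) hy')
      · exact hP.dis S (sdiff_subset hS1) S' (sdiff_subset hS1') y hy hy'
    · intro S hS
      rcases mem_insert.mp hS with rfl | hS
      · exact ⟨hT'c, Or.inl (by rw [← hTeq]; exact card_le_card hTT')⟩
      · rw [mem_sdiff] at hS
        refine ⟨(hP2 S hS.1).1, ?_⟩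
        rcases (hP2 S hS.1).2 with h | h
        · exact Or.inl h
        · by_cases hlt : #S < C
          · right
            intro u hu v hv huv
            refine h u hu v (mem_sdiff.mpr ⟨hv, fun hvT => ?_⟩) huv
            exact hS.2 (mem_filter.mpr ⟨hS.1, hlt, v, hvT, u, hu, huv.symm⟩)
          · left; omega

lemma HPart.sum_card {H : SimpleGraph V} {X : Finset V} {P : Finset (Finset V)} (hP : HPart H X P) :
    ∑ T ∈ P, #T = #X := by
  have h : X = P.biUnion id := by
    ext x
    rw [mem_biUnion]
    constructor
    · intro hx; obtain ⟨T, h1, h2⟩ := hP.cov x hx; exact ⟨T, h1, h2⟩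
    · rintro ⟨T, h1, h2⟩; exact hP.sub T h1 h2
  conv_rhs => rw [h]
  rw [card_biUnion]
  · rfl
  · intro T hT T' hT' hne
    simp only [Function.onFun, id]
    rw [disjoint_left]
    intro x hx hx'
    exact hne (hP.dis T hT T' hT' x hx hx')

/-- the number of (ordered) inter-part adjacencies -/
lemma HPart.DD_le {H : SimpleGraph V} {X : Finset V} {P : Finset (Finset V)} (hP : HPart H X P) :
    ∑ T ∈ P, (DD H T + ∑ v ∈ T, dg H (X \ T) v) = DD H X := by
  have h : X = P.biUnion id := by
    ext x
    rw [mem_biUnion]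
    constructor
    · intro hx; obtain ⟨T, h1, h2⟩ := hP.cov x hx; exact ⟨T, h1, h2⟩
    · rintro ⟨T, h1, h2⟩; exact hP.sub T h1 h2
  have h2 : DD H X = ∑ T ∈ P, ∑ v ∈ T, dg H X v := by
    unfold DD
    conv_lhs => rw [show (∑ v ∈ X, dg H X v) = ∑ v ∈ P.biUnion id, dg H X v by rw [← h]]
    rw [sum_biUnion]
    · rfl
    · intro T hT T' hT' hne
      simp only [Function.onFun, id]
      rw [disjoint_left]
      intro x hx hx'
      exact hne (hP.dis T hT T' hT' x hx hx')
  rw [h2]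
  apply sum_congr rfl
  intro T hT
  unfold DD
  rw [← sum_add_distrib]
  apply sum_congr rfl
  intro v _
  rw [← dg_union H disjoint_sdiff, union_sdiff_of_subset (hP.sub T hT)]

end PartS

section StepA
open scoped Classical
open Finset

def phi (B0 t D : ℕ) : ℕ := max (B0 - Nat.sqrt D) t

lemma sqrt_sub {D' D : ℕ} (h : D' ≤ D) : D' + Nat.sqrt D ≤ D + Nat.sqrt D' := by
  obtain ⟨c, rfl⟩ := Nat.exists_eq_add_of_le h
  have : Nat.sqrt (D' + c) ≤ Nat.sqrt D' + c := by
    rw [← Nat.lt_succ_iff, Nat.sqrt_lt]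
    have h1 := Nat.lt_succ_sqrt D'
    simp only [Nat.succ_eq_add_one] at *
    nlinarith [Nat.zero_le (Nat.sqrt D'), Nat.zero_le c]
  omega

lemma phi_mono_add (B0 t : ℕ) {D' D : ℕ} (h : D' ≤ D) : D' + phi B0 t D' ≤ D + phi B0 t D := by
  have := sqrt_sub h
  unfold phi
  omega

lemma phi_le (B0 t D' D : ℕ) : phi B0 t D' ≤ phi B0 t D + Nat.sqrt D := by
  unfold phi
  omega

lemma le_phi (B0 t D : ℕ) : t ≤ phi B0 t D := le_max_right _ _

structure Ctx {V W : Type*} (t B0 : ℕ) (H : SimpleGraph V) (G : SimpleGraph W) (U : Finset V) (A : Finset W) : Prop where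
  ht : 3 ≤ t
  hG : CF G (2 * t + 1)
  hA : DD H U + phi B0 t (DD H U) ≤ #A
  iso : ∀ v ∈ U, 1 ≤ dg H U v
  ih : ∀ (U' : Finset V) (A' : Finset W), DD H U' < DD H U → DD H U' + phi B0 t (DD H U') ≤ #A' → #U' ≤ #A' →
    Emb H G U' A'
  no : ¬ Emb H G U A

variable {V W : Type*} [Nonempty W] {t B0 : ℕ} {H : SimpleGraph V} {G : SimpleGraph W} {U : Finset V} {A : Finset W}

lemma Ctx.le_D (h : Ctx t B0 H G U A) : #U ≤ DD H U := by
  have := sum_le_sum h.iso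
  simpa [DD] using this

lemma Ctx.hA' (h : Ctx t B0 H G U A) : DD H U + t ≤ #A := by
  have := h.hA
  have := le_phi B0 t (DD H U)
  omega

lemma Ctx.le_A (h : Ctx t B0 H G U A) : #U ≤ #A := by
  have := h.hA'
  have := h.le_D
  omega

lemma Ctx.ih_sub (h : Ctx t B0 H G U A) {U' : Finset V} (hU : U' ⊆ U) (hD : DD H U' < DD H U) : Emb H G U' A :=
  h.ih U' A hD ((phi_mono_add B0 t hD.le).trans h.hA) ((card_le_card hU).trans h.le_A)

lemma card_unused {f : V → W} {T : Finset V} (hf : IsEmb H G f T A) : #(A \ T.image f) + #T = #A := by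
  have h1 : #(T.image f) = #T := card_image_of_injOn hf.1
  rw [← h1]
  apply card_sdiff_add_card_eq_card
  intro w hw
  obtain ⟨u, hu, rfl⟩ := mem_image.mp hw
  exact hf.2.1 u hu

lemma add_closed {f : V → W} {U0 K : Finset V} (hf : IsEmb H G f U0 A) (hd : Disjoint U0 K)
    (hadj : ∀ u ∈ U0, ∀ v ∈ K, ¬ H.Adj u v) (hE : Emb H G K (A \ U0.image f)) : Emb H G (U0 ∪ K) A := by
  obtain ⟨g, hg⟩ := hE
  obtain ⟨e, he, -⟩ := glue hf (hg.mono subset_rfl sdiff_subset) hd (by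
    intro u hu v hv heq
    have := hg.2.1 v hv
    rw [mem_sdiff] at this
    exact this.2 (mem_image.mpr ⟨u, hu, heq⟩)) (fun u hu v hv huv => absurd huv (hadj u hu v hv))
  exact ⟨e, he⟩

lemma add_closed' {f : V → W} {U K : Finset V} (hK : K ⊆ U) (hcl : Cl H U K) (hf : IsEmb H G f (U \ K) A) 
    (hE : Emb H G K (A \ (U \ K).image f)) : Emb H G U A := by
  have := add_closed hf sdiff_disjoint (by
    intro u hu v hv huv
    rw [mem_sdiff] at hu
    exact hu.2 (hcl v hv u hu.1 huv.symm)) hE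
  rwa [sdiff_union_of_subset hK] at this

lemma Ctx.DD_cl_pos (h : Ctx t B0 H G U A) {K : Finset V} (hK : K ⊆ U) (hcl : Cl H U K) (hne : K.Nonempty) :
    DD H (U \ K) < DD H U := by
  have h1 := DD_sdiff_cl H hK hcl
  have h2 : 0 < DD H K := by
    obtain ⟨v, hv⟩ := hne
    have h3 := h.iso v (hK hv)
    unfold dg at h3
    obtain ⟨w, hw⟩ := card_pos.mp h3
    rw [mem_filter] at hw
    have hwK := hcl v hv w hw.1 hw.2
    have h4 : 1 ≤ dg H K v := by
      unfold dg; exact card_pos.mpr ⟨w, mem_filter.mpr ⟨hwK, hw.2⟩⟩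
    have h5 : dg H K v ≤ DD H K := single_le_sum (f := fun w => dg H K w) (fun _ _ => Nat.zero_le _) hv
    omega
  omega

lemma Ctx.S2 (h : Ctx t B0 H G U A) {K : Finset V} (hK : K ⊆ U) (hcl : Cl H U K) (hne : K.Nonempty)
    (hN : (2 * t + 1) * #K * #K ≤ #A - #U) : False := by
  obtain ⟨f, hf⟩ := h.ih_sub (sdiff_subset (s := U) (t := K)) (h.DD_cl_pos hK hcl hne)
  have h1 := card_unused hf
  have h2 := card_sdiff_add_card_eq_card hK
  have h3 := h.ht
  obtain ⟨I, hI, hInd, hIc⟩ := L4 (by omega) h.hG (A := A \ (U \ K).image f) (#K) (by omega)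
  exact h.no (add_closed' hK hcl hf ((isEmb_of_ind hInd hIc.ge).mono subset_rfl hI))

lemma Ctx.sparse (h : Ctx t B0 H G U A) {C : ℕ} (hC : 1 ≤ C) (hN : (2 * t + 1) * C * C ≤ #A - #U) :
    2 * #U * C ≤ DD H U * C + 2 * #U := by
  obtain ⟨P, hP, hP2⟩ := partition_lemma H C (#U) hC U (fun v _ => dg_le_card _ _ _)
  have hbig : ∀ T ∈ P, C ≤ #T := by
    intro T hT
    by_contra! hlt
    rcases (hP2 T hT).2 with h1 | h1
    · omega
    · refine h.S2 (hP.sub T hT) h1 (hP.ne T hT) (le_trans ?_ hN)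
      gcongr
  have h1 := hP.sum_card
  have h2 := hP.DD_le
  have h3 : #P * C ≤ #U := by
    rw [← h1]; simpa using sum_le_sum hbig
  have h4 : 2 * #U ≤ DD H U + 2 * #P := by
    have : ∑ T ∈ P, 2 * #T ≤ ∑ T ∈ P, (DD H T + ∑ v ∈ T, dg H (U \ T) v + 2) := 
      sum_le_sum fun T hT => by have := hP.tau T hT; omega
    rw [sum_add_distrib, h2, ← mul_sum, h1] at this
    simpa [mul_comm] using this
  nlinarith

lemma Ctx.S1 (h : Ctx t B0 H G U A) (R : ℕ) (hD : 4 * R + 20 * t * t + 20 ≤ DD H U) : R ≤ #A - #U := by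
  by_contra! hlt
  have hA := h.hA'
  have hle := h.le_D
  set T := {v ∈ U | dg H U v = 1 ∧ ∀ u ∈ U, H.Adj v u → dg H U u = 1} with hT
  have hTU : T ⊆ U := filter_subset _ _
  have huniq : ∀ v ∈ U, dg H U v = 1 → ∀ a ∈ U, ∀ b ∈ U, H.Adj v a → H.Adj v b → a = b := by
    intro v hv hv1 a ha b hb hva hvb
    unfold dg at hv1
    rw [card_eq_one] at hv1
    obtain ⟨w, hw⟩ := hv1
    have h1 : a ∈ ({w ∈ U | H.Adj v w} : Finset V) := mem_filter.mpr ⟨ha, hva⟩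
    have h2 : b ∈ ({w ∈ U | H.Adj v w} : Finset V) := mem_filter.mpr ⟨hb, hvb⟩
    rw [hw, mem_singleton] at h1 h2
    rw [h1, h2]
  have hcl : Cl H U T := by
    intro u hu v hv huv
    rw [hT, mem_filter] at hu ⊢
    have hv1 := hu.2.2 v hv huv
    refine ⟨hv, hv1, fun w hw hvw => ?_⟩
    rw [huniq v hv hv1 w hw u hu.1 hvw huv.symm]
    exact hu.2.1
  have hT1 : ∀ v ∈ T, dg H T v = 1 := by
    intro v hv
    rw [← (mem_filter.mp hv).2.1]
    unfold dg
    congr 1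
    ext w
    simp only [mem_filter]
    constructor
    · rintro ⟨h1, h2⟩; exact ⟨hTU h1, h2⟩
    · rintro ⟨h1, h2⟩
      have := hcl v hv w h1 h2
      exact ⟨this, h2⟩
  set S := {v ∈ U | 2 ≤ dg H U v} with hS
  have hsumS : 2 * #S ≤ ∑ v ∈ S, dg H U v ∧ ∑ v ∈ S, dg H U v + #U ≤ DD H U + #S := by
    constructor
    · have := card_nsmul_le_sum S (fun v => dg H U v) 2 (fun v hv => (mem_filter.mp hv).2)
      simpa [mul_comm] using this
    · have h1 : DD H U = ∑ v ∈ S, dg H U v + ∑ v ∈ U \ S, dg H U v := by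
        unfold DD; rw [add_comm, sum_sdiff (filter_subset _ _)]
      have h2 : #(U \ S) ≤ ∑ v ∈ U \ S, dg H U v := by
        have := card_nsmul_le_sum (U \ S) (fun v => dg H U v) 1 (fun v hv => h.iso v (sdiff_subset hv))
        simpa using this
      have h3 : #(U \ S) + #S = #U := card_sdiff_add_card_eq_card (filter_subset _ _)
      omega
  have hUT : #(U \ T) ≤ #S + ∑ v ∈ S, dg H U v := by
    have h1 : U \ T ⊆ S ∪ S.biUnion (fun v => {w ∈ U | H.Adj v w}) := by
      intro v hv
      rw [mem_sdiff] at hv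
      rw [mem_union, mem_biUnion]
      by_contra hcon
      push Not at hcon
      apply hv.2
      have hv1 : dg H U v = 1 := by
        have h1 := h.iso v hv.1
        by_contra hne
        exact hcon.1 (mem_filter.mpr ⟨hv.1, by omega⟩)
      rw [hT, mem_filter]
      refine ⟨hv.1, hv1, fun u hu huv => ?_⟩
      have h1 := h.iso u hu
      by_contra hne
      exact hcon.2 u (mem_filter.mpr ⟨hu, by omega⟩) (mem_filter.mpr ⟨hv.1, huv.symm⟩)
    refine (card_le_card h1).trans ((card_union_le _ _).trans ?_)
    gcongr
    exact card_biUnion_le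
  have hUT2 := card_sdiff_add_card_eq_card hTU
  have hTne : T.Nonempty := by
    rw [← card_pos]; omega
  obtain ⟨f, hf⟩ := h.ih_sub (sdiff_subset (s := U) (t := T)) (h.DD_cl_pos hTU hcl hTne)
  have h1 := card_unused hf
  have h3 := h.ht
  exact h.no (add_closed' hTU hcl hf (ML t (by omega) H G h.hG T _ hT1 (by omega) (by omega)))

lemma Ctx.bigdeg (h : Ctx t B0 H G U A) (hD : 0 < DD H U) :
    ∃ x ∈ A, (#A - #U) * #U ≤ dg G A x * DD H U := by
  have hUne : U.Nonempty := by
    by_contra hne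
    rw [not_nonempty_iff_eq_empty] at hne
    subst hne
    simp [DD] at hD
  have hAne : A.Nonempty := by
    rw [← card_pos]; have := h.hA'; omega
  obtain ⟨v, hv, hmin⟩ := exists_min_image U (fun v => dg H U v) hUne
  obtain ⟨x, hx, hmax⟩ := exists_max_image A (fun v => dg G A v) hAne
  refine ⟨x, hx, ?_⟩
  have hδ : dg H U v * #U ≤ DD H U := by
    have := card_nsmul_le_sum U (fun w => dg H U w) (dg H U v) hmin
    simpa [mul_comm, DD] using this
  have h1 := DD_erase H hv
  have h2 := h.iso v hv
  obtain ⟨f, hf⟩ := h.ih_sub (erase_subset v U) (by omega)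
  have h3 := card_unused hf
  rw [card_erase_of_mem hv] at h3
  set Un := A \ (U.erase v).image f with hUn
  have hsub : Un ⊆ ({u ∈ U | H.Adj v u}).biUnion (fun u => {w ∈ A | G.Adj (f u) w}) := by
    intro y hy
    by_contra hcon
    rw [mem_biUnion] at hcon
    push Not at hcon
    rw [hUn, mem_sdiff] at hy
    obtain ⟨e, he, -⟩ := add_block (T := {v}) (Z := {y}) hf (by simp) (by simpa using hy.1) (ind_singleton G y) (by simp)
      (by
        intro z hz u hu heq
        rw [mem_singleton] at hz; subst hz
        exact hy.2 (mem_image.mpr ⟨u, hu, heq⟩))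
      (by
        intro z hz u hu v' hv' huv hadj
        rw [mem_singleton] at hz hv'; subst hz; subst hv'
        exact hcon u (mem_filter.mpr ⟨mem_of_mem_erase hu, huv.symm⟩) (mem_filter.mpr ⟨hy.1, hadj⟩))
    apply h.no
    have : U.erase v ∪ {v} = U := by
      ext w; simp only [mem_union, mem_erase, mem_singleton]
      constructor
      · rintro (h | rfl)
        · exact h.2
        · exact hv
      · intro hw; by_cases hwv : w = v
        · exact Or.inr hwv
        · exact Or.inl ⟨hwv, hw⟩
    rw [this] at he
    exact ⟨e, he⟩
  have hc : #Un ≤ dg H U v * dg G A x := by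
    refine (card_le_card hsub).trans (card_biUnion_le' _ _ _ _ le_rfl ?_)
    intro u hu
    rw [mem_filter] at hu
    exact hmax _ (hf.2.1 u (mem_erase.mpr ⟨hu.2.ne', hu.1⟩))
  have hUp := card_pos.mpr hUne
  have h4 : #A - #U ≤ dg H U v * dg G A x := by omega
  calc (#A - #U) * #U ≤ dg H U v * dg G A x * #U := by gcongr
    _ = dg G A x * (dg H U v * #U) := by ring
    _ ≤ dg G A x * DD H U := by gcongr

lemma removal (H : SimpleGraph V) (U : Finset V) : ∀ s ≤ #U, ∃ T ⊆ U, #T + s = #U ∧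
    (DD H T : ℝ) * (#U * (#U - 1)) ≤ DD H U * (#T * (#T - 1)) := by
  intro s
  induction s with
  | zero => intro _; exact ⟨U, subset_rfl, by simp, le_rfl⟩
  | succ s ih =>
    intro hs
    obtain ⟨T, hT, hTc, hTD⟩ := ih (by omega)
    have hTne : T.Nonempty := by rw [← card_pos]; omega
    obtain ⟨v, hv, hmax⟩ := exists_max_image T (fun v => dg H T v) hTne
    have hc := card_erase_of_mem hv
    have hp := card_pos.mpr hTne
    refine ⟨T.erase v, (erase_subset _ _).trans hT, by omega, ?_⟩
    have h1 := DD_erase H hv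
    have h2 : DD H T ≤ #T * dg H T v := by
      have := sum_le_card_nsmul T (fun w => dg H T w) (dg H T v) hmax
      simpa [DD] using this
    obtain ⟨p, hpe⟩ : ∃ p, #T = p + 1 := ⟨#T - 1, by omega⟩
    have hc' : #(T.erase v) = p := by omega
    rw [hc']
    rw [hpe] at hTD h2
    have h1' : (DD H T : ℝ) = DD H (T.erase v) + 2 * dg H T v := by exact_mod_cast h1
    have h2' : (DD H T : ℝ) ≤ (p + 1) * dg H T v := by exact_mod_cast h2
    push_cast at hTD
    have hU1 : (1 : ℝ) ≤ #U := by exact_mod_cast (by omega : 1 ≤ #U)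
    set a : ℝ := (DD H (T.erase v) : ℝ)
    set b : ℝ := (DD H T : ℝ)
    set c : ℝ := (DD H U : ℝ)
    set n : ℝ := (#U : ℝ)
    -- (p+1) a ≤ (p-1) b
    have h3 : (p + 1) * a ≤ (p - 1) * b := by nlinarith
    rcases Nat.eq_zero_or_pos p with rfl | hp0
    · have : T.erase v = ∅ := by rw [← card_eq_zero]; exact hc'
      have ha : a = 0 := by simp [a, this, DD]
      rw [ha]; simp
    · have hp1 : (1 : ℝ) ≤ p := by exact_mod_cast hp0
      have hn : 0 ≤ n * (n - 1) := by nlinarith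
      have h4 : (p + 1) * a * (n * (n - 1)) ≤ (p - 1) * b * (n * (n - 1)) := mul_le_mul_of_nonneg_right h3 hn
      have h5 : (p - 1) * (b * (n * (n - 1))) ≤ (p - 1) * (c * ((p + 1) * (p + 1 - 1))) := by
        apply mul_le_mul_of_nonneg_left hTD; linarith
      have h6 : (p + 1) * (a * (n * (n - 1))) ≤ (p + 1) * (c * (p * (p - 1))) := by nlinarith
      exact le_of_mul_le_mul_left h6 (by linarith)

lemma removal1 (H : SimpleGraph V) (U : Finset V) (s : ℕ) (hs : s ≤ #U) : ∃ T ⊆ U, #T + s = #U ∧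
    DD H T * #U ≤ DD H U * #T := by
  obtain ⟨T, hT, hc, hD⟩ := removal H U s hs
  refine ⟨T, hT, hc, ?_⟩
  rcases Nat.lt_or_ge (#U) 2 with hlt | hge
  · have : DD H T ≤ 0 := by
      have h1 : DD H T ≤ #T * 0 := by
        unfold DD
        have := sum_le_card_nsmul T (fun w => dg H T w) 0 (fun v hv => by
          unfold dg
          rw [Nat.le_zero, card_eq_zero, filter_eq_empty_iff]
          intro w hw hvw
          have : #T ≤ 1 := by omega
          rw [card_le_one] at this
          exact hvw.ne (this v hv w hw))
        simpa using this
      simpa using h1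
    rw [Nat.le_zero] at this
    rw [this]; simp
  · have hU : (2 : ℝ) ≤ #U := by exact_mod_cast hge
    have hTU : (#T : ℝ) ≤ #U := by exact_mod_cast card_le_card hT
    suffices h : (DD H T : ℝ) * #U ≤ DD H U * #T by exact_mod_cast h
    have h1 : (DD H U : ℝ) * (#T * (#T - 1)) ≤ DD H U * (#T * (#U - 1)) := by gcongr
    have h2 : (DD H T : ℝ) * #U * (#U - 1) ≤ DD H U * #T * (#U - 1) := by nlinarith
    exact le_of_mul_le_mul_right h2 (by linarith)

lemma removal2 (H : SimpleGraph V) (U : Finset V) (s : ℕ) (hs : s ≤ #U) (h2 : #U ≤ 2 * s) (hU : 2 ≤ #U) : ∃ T ⊆ U, #T + s = #U ∧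
    4 * DD H T ≤ DD H U := by
  obtain ⟨T, hT, hc, hD⟩ := removal H U s hs
  refine ⟨T, hT, hc, ?_⟩
  have hU : (2 : ℝ) ≤ #U := by exact_mod_cast hU
  have hTU : (2 : ℝ) * #T ≤ #U := by exact_mod_cast (by omega : 2 * #T ≤ #U)
  suffices h : (4 : ℝ) * DD H T ≤ DD H U by exact_mod_cast h
  have hT0 : (0 : ℝ) ≤ #T := by positivity
  have h0 : 4 * ((#T : ℝ) * (#T - 1)) ≤ #U * (#U - 1) := by nlinarith
  have h1 : (DD H U : ℝ) * (4 * (#T * (#T - 1))) ≤ DD H U * (#U * (#U - 1)) := by gcongr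
  have h3 : (4 * DD H T : ℝ) * (#U * (#U - 1)) ≤ DD H U * (#U * (#U - 1)) := by nlinarith
  exact le_of_mul_le_mul_right h3 (by nlinarith)

end StepA

section CaseI
open scoped Classical
open Finset

lemma split_emb {V W : Type*} {H : SimpleGraph V} {G : SimpleGraph W} {U S : Finset V} {A A1 A2 : Finset W}
    (hS : S ⊆ U) (h1 : Emb H G S A1) (h2 : Emb H G (U \ S) A2) (hA1 : A1 ⊆ A) (hA2 : A2 ⊆ A)
    (hd : Disjoint A1 A2) (hadj : ∀ a ∈ A1, ∀ b ∈ A2, ¬ G.Adj a b) : Emb H G U A := by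
  obtain ⟨f, hf⟩ := h1
  obtain ⟨g, hg⟩ := h2
  obtain ⟨e, he, -⟩ := glue (hf.mono subset_rfl hA1) (hg.mono subset_rfl hA2) disjoint_sdiff
    (fun u hu v hv heq => disjoint_left.mp hd (hf.2.1 u hu) (heq ▸ hg.2.1 v hv))
    (fun u hu v hv _ => hadj _ (hf.2.1 u hu) _ (hg.2.1 v hv))
  rw [union_sdiff_of_subset hS] at he
  exact ⟨e, he⟩

lemma DD_le_sq {V : Type*} (H : SimpleGraph V) (U : Finset V) : DD H U ≤ #U * #U := by
  have := sum_le_card_nsmul U (fun w => dg H U w) (#U) (fun v _ => dg_le_card _ _ _)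
  simpa [DD] using this

lemma caseIb {V W : Type*} [Nonempty W] {t B0 : ℕ} {H : SimpleGraph V} {G : SimpleGraph W} {U : Finset V} {A : Finset W}
    (h : Ctx t B0 H G U A) (k : ℕ) (hk : k = 2 * t + 1) (hD : 64 * k * k ≤ DD H U) (hD2 : 16 * k * k * #U ≤ DD H U) : False := by
  have ht := h.ht
  have hk7 : 7 ≤ k := by omega
  have hG : CF G k := hk ▸ h.hG
  have hA := h.hA'
  have hle := h.le_D
  have hk2 : 49 ≤ k * k := by nlinarith
  have hn1 : 2 * #U ≤ DD H U := by nlinarith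
  have hnpos : 8 * k ≤ #U := by
    have := DD_le_sq H U
    by_contra! hlt
    have : #U * #U < (8 * k) * (8 * k) := Nat.mul_lt_mul_of_lt_of_le hlt hlt.le (by omega)
    nlinarith
  have hDpos : 0 < DD H U := by nlinarith
  obtain ⟨x, hx, hxd⟩ := h.bigdeg hDpos
  set n := #U with hn
  set D := DD H U with hDd
  have hΔ : n ≤ 2 * dg G A x := by
    have h1 : D * n ≤ 2 * (#A - n) * n := Nat.mul_le_mul_right _ (by omega)
    have h2 : D * n ≤ D * (2 * dg G A x) := by nlinarith
    exact Nat.le_of_mul_le_mul_left h2 hDpos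
  obtain ⟨I0, hI0, hI0I, hI0c⟩ := greedy_ind G k {w ∈ A | G.Adj x w} (L1 (by omega) hG (x := x) (by simp))
  change dg G A x ≤ _ at hI0c
  set s := (n + 2 * k - 1) / (2 * k) with hs
  have hs1 : n ≤ 2 * k * s := by
    have h1 := Nat.div_add_mod (n + 2 * k - 1) (2 * k)
    have h2 := Nat.mod_lt (n + 2 * k - 1) (show 2 * k > 0 by omega)
    rw [← hs] at h1
    omega
  have hs2 : 2 * k * s ≤ n + 2 * k - 1 := Nat.mul_div_le _ _
  have hsI : s ≤ #I0 := by
    have h1 : 2 * k * #I0 = 2 * (k * #I0) := by ring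
    have h2 : 2 * k * s < 2 * k * (#I0 + 1) := by
      rw [mul_add, h1]; omega
    exact Nat.lt_succ_iff.mp (Nat.lt_of_mul_lt_mul_left h2)
  have hsn : s ≤ n := by
    have h1 : n ≤ 2 * k * n := Nat.le_mul_of_pos_left _ (by omega)
    have h2 : 2 * k * s < 2 * k * (n + 1) := by
      rw [mul_add]; omega
    exact Nat.lt_succ_iff.mp (Nat.lt_of_mul_lt_mul_left h2)
  obtain ⟨I, hI, hIc⟩ := exists_subset_card_eq hsI
  have hII := hI0I.mono hI
  have hIA : I ⊆ A := (hI.trans hI0).trans (filter_subset _ _)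
  have hIx : ∀ a ∈ I, G.Adj x a := fun a ha => (mem_filter.mp (hI0 (hI ha))).2
  obtain ⟨T, hT, hTc, hTD⟩ := removal1 H U s hsn
  change DD H T * n ≤ D * #T at hTD
  change #T + s = n at hTc
  set B := {b ∈ A | b ≠ x ∧ ∃ a ∈ I, G.Adj a b} with hB
  have hBI : Disjoint I B := by
    rw [disjoint_left]
    intro a ha hb
    obtain ⟨-, -, a', ha', hadj⟩ := mem_filter.mp hb
    exact hII a' ha' a ha hadj
  have hBdeg : Deg G k B := L2 (x := x) (A := I) hk7 ⟨t, hk⟩ hG hIx hBI (by simp [hB])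
    (fun b hb => (mem_filter.mp hb).2.2)
  have hBc : #B < k * n := by
    by_contra! hcon
    obtain ⟨I', hI', hI'I, hI'c⟩ := greedy_ind G k B hBdeg
    have : n ≤ #I' := Nat.le_of_mul_le_mul_left (hcon.trans hI'c) (by omega)
    exact h.no ((isEmb_of_ind hI'I this).mono subset_rfl (hI'.trans (filter_subset _ _)))
  have hTD2 : D ≤ 2 * k * (D - DD H T) := by
    have hTle : DD H T ≤ D := DD_mono H hT
    obtain ⟨c, hc⟩ := Nat.exists_eq_add_of_le hTle
    rw [hc, Nat.add_sub_cancel_left, ← hc]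
    have h1 : D * s ≤ c * n := by
      have e1 : D * n = D * #T + D * s := by rw [← mul_add, hTc]
      have e2 : D * n = DD H T * n + c * n := by rw [hc]; ring
      linarith
    have h2 : D * n ≤ 2 * k * c * n := by
      calc D * n ≤ D * (2 * k * s) := by gcongr
        _ = 2 * k * (D * s) := by ring
        _ ≤ 2 * k * (c * n) := by gcongr
        _ = _ := by ring
    exact Nat.le_of_mul_le_mul_right h2 (by omega)
  have hsq : 8 * k * Nat.sqrt D ≤ D := by
    have h1 := Nat.sqrt_le D
    have h2 : 8 * k ≤ Nat.sqrt D := by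
      rw [Nat.le_sqrt]
      have : 8 * k * (8 * k) = 64 * k * k := by ring
      omega
    exact (Nat.mul_le_mul_right _ h2).trans h1
  have hgap : (s + k * n + 1 + Nat.sqrt D) ≤ D - DD H T := by
    have h1 : s + k * n + 1 ≤ 2 * k * n := by
      have e1 : 2 * n ≤ k * n := by gcongr; omega
      have e2 : 2 * k * n = k * n + k * n := by ring
      omega
    have h2 : 2 * k * (s + k * n + 1 + Nat.sqrt D) ≤ 2 * k * (D - DD H T) := by
      refine le_trans ?_ hTD2
      have h3 : 2 * k * (s + k * n + 1) ≤ 2 * k * (2 * k * n) := by gcongr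
      have e3 : 2 * k * (2 * k * n) = 4 * (k * k * n) := by ring
      have e4 : 16 * k * k * n = 16 * (k * k * n) := by ring
      have e5 : 8 * k * Nat.sqrt D = 4 * (2 * k * Nat.sqrt D) := by ring
      rw [mul_add]
      omega
    exact Nat.le_of_mul_le_mul_left h2 (by omega)
  have hphi := phi_le B0 t (DD H T) D
  have hA2 := h.hA
  rw [← hDd] at hA2
  set A2 := A \ (I ∪ B ∪ {x}) with hA2d
  have hA2c : #A ≤ #A2 + (s + k * n + 1) := by
    have h1 : #A - #(I ∪ B ∪ {x}) ≤ #A2 := le_card_sdiff _ _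
    have h2 := card_union_le (I ∪ B) {x}
    have h3 := card_union_le I B
    simp only [card_singleton] at h2
    omega
  have hTE : Emb H G T A2 := by
    have hkn : k * n + n ≤ D / 2 := by
      rw [Nat.le_div_iff_mul_le (by omega)]
      have e1 : n ≤ k * n := Nat.le_mul_of_pos_left _ (by omega)
      have e2 : 16 * k * k * n = 16 * k * (k * n) := by ring
      have e3 : 16 * 1 * (k * n) ≤ 16 * k * (k * n) := by gcongr; omega
      omega
    apply h.ih
    · rw [← hDd]; omega
    · omega
    · omega
  have hUT : U \ (U \ T) = T := by
    rw [Finset.sdiff_sdiff_eq_self hT]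
  refine h.no (split_emb (S := U \ T) (A1 := I) (A2 := A2) sdiff_subset (isEmb_of_ind hII ?_) (by rw [hUT]; exact hTE)
    hIA sdiff_subset ?_ ?_)
  · have := card_sdiff_add_card_eq_card hT
    omega
  · rw [disjoint_left]
    intro a ha ha2
    simp [hA2d, ha] at ha2
  · intro a ha b hb hadj
    rw [hA2d, mem_sdiff] at hb
    apply hb.2
    simp only [mem_union, mem_singleton]
    by_cases hbx : b = x
    · exact Or.inr hbx
    · exact Or.inl (Or.inr (mem_filter.mpr ⟨hb.1, hbx, a, ha, hadj⟩))

set_option maxHeartbeats 800000 in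
lemma caseIa (t E C2 : ℕ) (hE : 1 ≤ E) (hC2 : 1 ≤ C2) : ∃ n0 : ℕ, ∀ (V W : Type) [Nonempty W] (B0 : ℕ) (H : SimpleGraph V) 
    (G : SimpleGraph W) (U : Finset V) (A : Finset W),
    Ctx t B0 H G U A → n0 ≤ #U → 2 * #U * (E + 1) ≤ DD H U * E → DD H U ≤ C2 * #U → False := by
  obtain ⟨n1, hn1⟩ := SE (2 * t + 1) C2 (8 * E) (by omega) hC2 (by omega)
  refine ⟨n1 + 8 * E + 4 * E * E * C2 + 2, ?_⟩
  intro V W _ B0 H G U A h hn0 hDE hDC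
  obtain ⟨k, hk⟩ : ∃ k, k = 2 * t + 1 := ⟨_, rfl⟩
  rw [← hk] at hn1
  have ht := h.ht
  have hk7 : 7 ≤ k := by omega
  have hG : CF G k := hk ▸ h.hG
  have hA := h.hA'
  have hle := h.le_D
  have hDpos : 0 < DD H U := by omega
  obtain ⟨x, hx, hxd⟩ := h.bigdeg hDpos
  set n := #U with hn
  set D := DD H U with hDd
  have hΔ : n * (2 * E + 1) ≤ 4 * E * dg G A x := by
    set m := dg G A x with hm
    obtain ⟨c, hc⟩ := Nat.exists_eq_add_of_le hle
    have h1 : c * n ≤ m * D := by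
      refine le_trans (Nat.mul_le_mul_right _ ?_) hxd
      omega
    -- c ≥ n + 2n/E
    have h2 : n * E + 2 * n ≤ c * E := by rw [hc] at hDE; nlinarith
    have h3 : D * (2 * E + 1) ≤ 4 * E * c := by
      rw [hc]; nlinarith
    have h4 : D * (n * (2 * E + 1)) ≤ D * (4 * E * m) := by
      calc D * (n * (2 * E + 1)) = D * (2 * E + 1) * n := by ring
        _ ≤ 4 * E * c * n := by gcongr
        _ = 4 * E * (c * n) := by ring
        _ ≤ 4 * E * (m * D) := by gcongr
        _ = _ := by ring
    exact Nat.le_of_mul_le_mul_left h4 hDpos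
  set r := (n * (2 * E + 1) + 4 * E - 1) / (4 * E) with hr
  have hr1 : n * (2 * E + 1) ≤ 4 * E * r := by
    have h1 := Nat.div_add_mod (n * (2 * E + 1) + 4 * E - 1) (4 * E)
    have h2 := Nat.mod_lt (n * (2 * E + 1) + 4 * E - 1) (show 4 * E > 0 by omega)
    rw [← hr] at h1
    omega
  have hr2 : 4 * E * r ≤ n * (2 * E + 1) + 4 * E - 1 := Nat.mul_div_le _ _
  have hrd : r ≤ dg G A x := by
    rw [hr, Nat.div_le_iff_le_mul_add_pred (by omega)]
    omega
  obtain ⟨A1, hA1, hA1c⟩ := exists_subset_card_eq hrd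
  have hA1A : A1 ⊆ A := hA1.trans (filter_subset _ _)
  have hA1x : ∀ a ∈ A1, G.Adj x a := fun a ha => (mem_filter.mp (hA1 ha)).2
  have hA1d : Deg G k A1 := L1 (by omega) hG hA1x
  obtain ⟨T, hT, hTc, hTD⟩ := removal2 H U ((n + 1) / 2) (by omega) (by omega) (by omega)
  have hUT : U \ (U \ T) = T := by
    rw [Finset.sdiff_sdiff_eq_self hT]
  have hSc : #(U \ T) = (n + 1) / 2 := by
    have := card_sdiff_add_card_eq_card hT
    omega
  have hSE : Emb H G (U \ T) A1 := by
    apply hn1 V W H G (U \ T) A1 n (by omega) hA1d (by omega)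
    · exact (DD_mono H sdiff_subset).trans hDC
    · rw [hSc, hA1c]
      have h2 : 2 * ((n + 1) / 2) ≤ n + 1 := by omega
      have h3 : 4 * E * (2 * ((n + 1) / 2)) ≤ 4 * E * (n + 1) := by gcongr
      have e1 : (n + 1) / 2 * (8 * E) = 4 * E * (2 * ((n + 1) / 2)) := by ring
      have e2 : r * (8 * E) = 2 * (4 * E * r) := by ring
      have e3 : n * (2 * E + 1) = 2 * (n * E) + n := by ring
      have e4 : 4 * E * (n + 1) = 4 * (n * E) + 4 * E := by ring
      have hn0' : 8 * E ≤ n := by have := Nat.zero_le (4 * E * E * C2); omega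
      omega
  set B := {b ∈ A | b ∉ A1 ∧ b ≠ x ∧ ∃ a ∈ A1, G.Adj a b} with hB
  have hBI : Disjoint A1 B := by
    rw [disjoint_left]
    intro a ha hb
    exact (mem_filter.mp hb).2.1 ha
  have hBdeg : Deg G k B := L2 (x := x) (A := A1) hk7 ⟨t, hk⟩ hG hA1x hBI (by simp [hB])
    (fun b hb => (mem_filter.mp hb).2.2.2)
  have hBc : #B * (8 * E) < n * (8 * E) + n := by
    by_contra! hcon
    exact h.no ((hn1 V W H G U B n (by omega) hBdeg le_rfl hDC hcon).mono subset_rfl (filter_subset _ _))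
  have hsq : 2 * E * Nat.sqrt D ≤ n := by
    by_contra! hcon
    have h1 := Nat.sqrt_le D
    have h2 : n * n < (2 * E * Nat.sqrt D) * (2 * E * Nat.sqrt D) := Nat.mul_lt_mul_of_lt_of_le hcon hcon.le (by omega)
    have h3 : (2 * E * Nat.sqrt D) * (2 * E * Nat.sqrt D) ≤ 4 * E * E * (C2 * n) := by
      calc _ = 4 * E * E * (Nat.sqrt D * Nat.sqrt D) := by ring
        _ ≤ 4 * E * E * (C2 * n) := Nat.mul_le_mul_left _ (h1.trans hDC)
    have h4 : 4 * E * E * C2 * n ≤ n * n := Nat.mul_le_mul_right _ (by omega)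
    have h5 : 4 * E * E * (C2 * n) = 4 * E * E * C2 * n := by ring
    omega
  have hgap : r + #B + 1 + Nat.sqrt D ≤ D - DD H T := by
    suffices hh : 8 * E * (r + #B + 1 + Nat.sqrt D) ≤ 8 * E * (D - DD H T) from Nat.le_of_mul_le_mul_left hh (by omega)
    have h1 : 3 * D ≤ 4 * (D - DD H T) := by omega
    have h2 : 2 * E * (3 * D) ≤ 2 * E * (4 * (D - DD H T)) := by gcongr
    have h3 : 4 * E * n + 8 * E * r ≤ 4 * E * n + 2 * (n * (2 * E + 1) + 4 * E - 1) := by linarith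
    have h4 : 2 * (n * (2 * E + 1) + 4 * E - 1) ≤ 4 * (n * E) + 2 * n + 8 * E := by
      have : n * (2 * E + 1) = 2 * (n * E) + n := by ring
      omega
    have e1 : 8 * E * (r + #B + 1 + Nat.sqrt D) = 2 * (4 * E * r) + #B * (8 * E) + 8 * E + 4 * (2 * E * Nat.sqrt D) := by ring
    have e2 : 2 * E * (3 * D) = 6 * (D * E) := by ring
    have e3 : 2 * E * (4 * (D - DD H T)) = 8 * E * (D - DD H T) := by ring
    have e4 : 2 * n * (E + 1) = 2 * (n * E) + 2 * n := by ring
    have e5 : n * (8 * E) = 8 * (n * E) := by ring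
    have e6 : n * (2 * E + 1) = 2 * (n * E) + n := by ring
    have hn0' : 8 * E ≤ n := by have := Nat.zero_le (4 * E * E * C2); omega
    omega
  have hgap2 : #T + (r + #B + 1) ≤ D := by
    suffices hh : 8 * E * (#T + (r + #B + 1)) ≤ 8 * E * D from Nat.le_of_mul_le_mul_left hh (by omega)
    have h0 : 8 * E * #T ≤ 4 * E * n := by
      have : 4 * E * (2 * #T) ≤ 4 * E * n := by gcongr; omega
      linarith
    have h4 : 2 * (n * (2 * E + 1) + 4 * E - 1) ≤ 4 * (n * E) + 2 * n + 8 * E := by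
      have : n * (2 * E + 1) = 2 * (n * E) + n := by ring
      omega
    have e1 : 8 * E * (#T + (r + #B + 1)) = 8 * E * #T + 2 * (4 * E * r) + #B * (8 * E) + 8 * E := by ring
    have e2 : 8 * E * D = 8 * (D * E) := by ring
    have e4 : 2 * n * (E + 1) = 2 * (n * E) + 2 * n := by ring
    have e5 : n * (8 * E) = 8 * (n * E) := by ring
    have e7 : 4 * E * n = 4 * (n * E) := by ring
    have e6 : n * (2 * E + 1) = 2 * (n * E) + n := by ring
    have hn0' : 8 * E ≤ n := by have := Nat.zero_le (4 * E * E * C2); omega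
    omega
  have hphi := phi_le B0 t (DD H T) D
  have hA2 := h.hA
  rw [← hDd] at hA2
  set A2 := A \ (A1 ∪ B ∪ {x}) with hA2d
  have hA2c : #A ≤ #A2 + (r + #B + 1) := by
    have h1 : #A - #(A1 ∪ B ∪ {x}) ≤ #A2 := le_card_sdiff _ _
    have h2 := card_union_le (A1 ∪ B) {x}
    have h3 := card_union_le A1 B
    simp only [card_singleton] at h2
    omega
  have hTE : Emb H G T A2 := by
    apply h.ih
    · rw [← hDd]; omega
    · omega
    · omega
  refine h.no (split_emb (S := U \ T) (A1 := A1) (A2 := A2) sdiff_subset hSE (by rw [hUT]; exact hTE)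
    hA1A sdiff_subset ?_ ?_)
  · rw [disjoint_left]
    intro a ha ha2
    simp [hA2d, ha] at ha2
  · intro a ha b hb hadj
    rw [hA2d, mem_sdiff] at hb
    apply hb.2
    simp only [mem_union, mem_singleton]
    by_cases hbx : b = x
    · exact Or.inr hbx
    · by_cases hb1 : b ∈ A1
      · exact Or.inl (Or.inl hb1)
      · exact Or.inl (Or.inr (mem_filter.mpr ⟨hb.1, hb1, hbx, a, ha, hadj⟩))

lemma caseI (t E : ℕ) (hE : 1 ≤ E) : ∃ D0 : ℕ, ∀ (V W : Type) [Nonempty W] (B0 : ℕ) (H : SimpleGraph V) 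
    (G : SimpleGraph W) (U : Finset V) (A : Finset W),
    Ctx t B0 H G U A → D0 ≤ DD H U → 2 * #U * (E + 1) ≤ DD H U * E → False := by
  obtain ⟨n0, hn0⟩ := caseIa t E (16 * (2 * t + 1) * (2 * t + 1)) hE (by nlinarith)
  refine ⟨64 * (2 * t + 1) * (2 * t + 1) + n0 * n0, ?_⟩
  intro V W _ B0 H G U A h hD hDE
  rcases Nat.le_total (DD H U) (16 * (2 * t + 1) * (2 * t + 1) * #U) with hc | hc
  · refine hn0 V W B0 H G U A h ?_ hDE hc
    have := DD_le_sq H U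
    by_contra! hlt
    nlinarith
  · exact caseIb h (2 * t + 1) rfl (by omega) hc

end CaseI

section ClaimT
open scoped Classical
open Finset

lemma struct_lemma {V : Type*} (H : SimpleGraph V) (U : Finset V) (α : ℕ) (hα : 1 ≤ α)
    (hD : DD H U * (12 * α) ≤ 2 * #U * (12 * α + 1))
    (hcl : ∀ K ⊆ U, K.Nonempty → Cl H U K → 12 * α ≤ #K) :
    ∃ S ⊆ U, ∃ Q : Finset (Finset V), 2 * α * #S ≤ #U ∧ U = S ∪ Q.biUnion id ∧
      (∀ T ∈ Q, #T ≤ 12 * α + 12 * α * (12 * α) * (72 * α)) ∧ (∀ T ∈ Q, Disjoint S T) ∧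
      (∀ T ∈ Q, ∀ T' ∈ Q, ∀ x, x ∈ T → x ∈ T' → T = T') ∧
      (∀ T ∈ Q, ∀ v ∈ T, ∀ u ∈ U, H.Adj v u → u ∈ S ∨ u ∈ T) ∧
      (∀ T ∈ Q, ∀ v ∈ T, dg H U v ≤ 72 * α) := by
  set L := {v ∈ U | 72 * α ≤ dg H U v} with hL
  have hLU : L ⊆ U := filter_subset _ _
  set X := U \ L with hX
  have hXU : X ⊆ U := sdiff_subset
  have hXd : ∀ v ∈ X, dg H U v ≤ 72 * α := by
    intro v hv
    rw [hX, mem_sdiff] at hv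
    by_contra! hcon
    exact hv.2 (mem_filter.mpr ⟨hv.1, hcon.le⟩)
  obtain ⟨P, hP, hP2⟩ := partition_lemma H (12 * α) (72 * α) (by omega) X
    (fun v hv => (dg_mono H hXU v).trans (hXd v hv))
  set R := P.biUnion (fun T => {v ∈ T | ∃ u ∈ X \ T, H.Adj v u}) with hR
  have hRX : R ⊆ X := by
    intro v hv
    obtain ⟨T, hT, hv⟩ := mem_biUnion.mp hv
    exact hP.sub T hT (mem_filter.mp hv).1
  have hRc : #R ≤ ∑ T ∈ P, ∑ v ∈ T, dg H (X \ T) v := by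
    refine card_biUnion_le.trans (sum_le_sum fun T _ => ?_)
    rw [card_filter]
    refine sum_le_sum fun v _ => ?_
    split_ifs with hif
    · obtain ⟨u, hu, hvu⟩ := hif
      exact card_pos.mpr ⟨u, mem_filter.mpr ⟨hu, hvu⟩⟩
    · exact Nat.zero_le _
  set Pb := {T ∈ P | 12 * α ≤ #T} with hPb
  have hPbc : #Pb * (12 * α) ≤ #U := by
    have h1 : #Pb * (12 * α) ≤ ∑ T ∈ P, #T := markov P (fun T => #T) (12 * α)
    rw [hP.sum_card] at h1
    exact h1.trans (card_le_card hXU)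
  have hLc : #L * (72 * α) ≤ DD H U := markov U _ _
  -- edges from L to X
  have hsumX : ∑ T ∈ P, ∑ v ∈ T, dg H L v = ∑ v ∈ X, dg H L v := by
    have h : X = P.biUnion id := by
      ext x
      rw [mem_biUnion]
      constructor
      · intro hx; obtain ⟨T, h1, h2⟩ := hP.cov x hx; exact ⟨T, h1, h2⟩
      · rintro ⟨T, h1, h2⟩; exact hP.sub T h1 h2
    conv_rhs => rw [h]
    rw [sum_biUnion]
    · rfl
    · intro T hT T' hT' hne
      rw [Function.onFun, disjoint_left]
      intro x hx hx'
      exact hne (hP.dis T hT T' hT' x hx hx')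
  have hDU : DD H U = DD H X + DD H L + 2 * ∑ v ∈ X, dg H L v := by
    have h1 := DD_sdiff H hXU
    have h2 : U \ X = L := Finset.sdiff_sdiff_eq_self hLU
    rw [h2] at h1
    exact h1
  have hsmall : ∑ T ∈ P, (2 * #T + ∑ v ∈ T, dg H (X \ T) v) ≤ 
      ∑ T ∈ P, (DD H T + ∑ v ∈ T, dg H (X \ T) v + 2 * ∑ v ∈ T, dg H L v + if 12 * α ≤ #T then 2 else 0) := by
    refine sum_le_sum fun T hT => ?_
    have h1 := hP.tau T hT
    split_ifs with hif
    · omega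
    · have h2 : 1 ≤ ∑ v ∈ T, dg H L v := by
        by_contra! hlt
        have h0 : ∑ v ∈ T, dg H L v = 0 := by omega
        rw [sum_eq_zero_iff] at h0
        refine hif (hcl T ((hP.sub T hT).trans hXU) (hP.ne T hT) ?_)
        intro u hu v hv huv
        by_cases hvL : v ∈ L
        · have := h0 u hu
          unfold dg at this
          rw [card_eq_zero, filter_eq_empty_iff] at this
          exact absurd huv (this hvL)
        · rcases (hP2 T hT).2 with h3 | h3
          · exact absurd h3 hif
          · exact h3 u hu v (mem_sdiff.mpr ⟨hv, hvL⟩) huv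
      omega
  have hcount : 2 * #X + #R ≤ DD H U + 2 * #Pb := by
    rw [sum_add_distrib, ← mul_sum, hP.sum_card, sum_add_distrib, sum_add_distrib, hP.DD_le, ← mul_sum, hsumX] at hsmall
    have : ∑ T ∈ P, (if 12 * α ≤ #T then 2 else 0) = 2 * #Pb := by
      rw [← sum_filter]; simp [hPb, mul_comm]
    rw [this] at hsmall
    omega
  have hXL : #X + #L = #U := card_sdiff_add_card_eq_card hLU
  refine ⟨L ∪ R, union_subset hLU (hRX.trans hXU), P.image (fun T => T \ (L ∪ R)), ?_, ?_, ?_, ?_, ?_, ?_, ?_⟩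
  · have h1 := card_union_le L R
    have h2 : #(L ∪ R) + 2 * #U ≤ 3 * #L + 2 * #Pb + DD H U := by omega
    have h3 := Nat.mul_le_mul_left (12 * α) h2
    have h4 : DD H U ≤ 4 * #U := by
      have : DD H U * (12 * α) ≤ 4 * #U * (12 * α) := by
        refine hD.trans ?_
        have : #U ≤ #U * α := Nat.le_mul_of_pos_right _ hα
        nlinarith
      exact Nat.le_of_mul_le_mul_right this (by omega)
    have h5 : 6 * (2 * α * #(L ∪ R)) ≤ 6 * #U := by nlinarith
    omega
  · ext v
    simp only [mem_union, mem_biUnion, mem_image, id]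
    constructor
    · intro hv
      by_cases hvs : v ∈ L ∪ R
      · exact Or.inl (by simpa using hvs)
      · have hvX : v ∈ X := mem_sdiff.mpr ⟨hv, fun h => hvs (mem_union_left _ h)⟩
        obtain ⟨T, hT, hvT⟩ := hP.cov v hvX
        exact Or.inr ⟨_, ⟨T, hT, rfl⟩, mem_sdiff.mpr ⟨hvT, hvs⟩⟩
    · rintro ((h | h) | ⟨_, ⟨T, hT, rfl⟩, h⟩)
      · exact hLU h
      · exact hXU (hRX h)
      · exact hXU (hP.sub T hT (mem_sdiff.mp h).1)
  · intro T hT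
    obtain ⟨T, hTP, rfl⟩ := mem_image.mp hT
    exact (card_le_card sdiff_subset).trans (hP2 T hTP).1
  · intro T hT
    obtain ⟨T, hTP, rfl⟩ := mem_image.mp hT
    exact disjoint_sdiff
  · intro T hT T' hT' x hx hx'
    obtain ⟨T, hTP, rfl⟩ := mem_image.mp hT
    obtain ⟨T', hTP', rfl⟩ := mem_image.mp hT'
    rw [hP.dis T hTP T' hTP' x (mem_sdiff.mp hx).1 (mem_sdiff.mp hx').1]
  · intro T hT v hv u hu hvu
    obtain ⟨T, hTP, rfl⟩ := mem_image.mp hT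
    rw [mem_sdiff] at hv
    by_cases hus : u ∈ L ∪ R
    · exact Or.inl hus
    · refine Or.inr (mem_sdiff.mpr ⟨?_, hus⟩)
      by_contra huT
      have huX : u ∈ X := mem_sdiff.mpr ⟨hu, fun h => hus (mem_union_left _ h)⟩
      exact hv.2 (mem_union_right _ (mem_biUnion.mpr ⟨T, hTP, mem_filter.mpr ⟨hv.1, u, mem_sdiff.mpr ⟨huX, huT⟩, hvu⟩⟩))
  · intro T hT v hv
    obtain ⟨T, hTP, rfl⟩ := mem_image.mp hT
    exact hXd v (hP.sub T hTP (mem_sdiff.mp hv).1)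

lemma embed_parts {V W : Type*} [Nonempty W] {H : SimpleGraph V} {G : SimpleGraph W} {k : ℕ} (hk : 3 ≤ k) (hG : CF G k)
    {U S : Finset V} {A Z I : Finset W} {M d q : ℕ} (Q : Finset (Finset V))
    (hU : U = S ∪ Q.biUnion id) (hM : ∀ T ∈ Q, #T ≤ M) (hST : ∀ T ∈ Q, Disjoint S T)
    (hdis : ∀ T ∈ Q, ∀ T' ∈ Q, ∀ x, x ∈ T → x ∈ T' → T = T')
    (hadj : ∀ T ∈ Q, ∀ v ∈ T, ∀ u ∈ U, H.Adj v u → u ∈ S ∨ u ∈ T)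
    (hd : ∀ T ∈ Q, ∀ v ∈ T, dg H U v ≤ d)
    (hI : Ind G I) (hIA : I ⊆ A) (hZA : Z ⊆ A) (hIZ : Disjoint I Z) (hSI : #S ≤ #I)
    (hq : ∀ p ∈ I, dg G Z p ≤ q) (hZ : #U + M * d * q + k * M * M ≤ #Z) : Emb H G U A := by
  obtain ⟨f0, hf0, hf0I⟩ := exists_injOn S I hSI
  suffices h : ∀ Q' ⊆ Q, ∃ f, IsEmb H G f (S ∪ Q'.biUnion id) A ∧ ∀ u ∈ S, f u ∈ I by
    obtain ⟨f, hf, -⟩ := h Q subset_rfl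
    rw [← hU] at hf
    exact ⟨f, hf⟩
  intro Q'
  induction Q' using Finset.induction with
  | empty =>
    intro _
    refine ⟨f0, ?_, hf0I⟩
    simp only [biUnion_empty, union_empty]
    exact ⟨hf0, fun u hu => hIA (hf0I u hu), fun u hu v hv _ => hI _ (hf0I u hu) _ (hf0I v hv)⟩
  | insert T Q' hT ih =>
    intro hsub
    have hTQ : T ∈ Q := hsub (mem_insert_self _ _)
    have hQ' : Q' ⊆ Q := (subset_insert _ _).trans hsub
    obtain ⟨f, hf, hfI⟩ := ih hQ'
    set U0 := S ∪ Q'.biUnion id with hU0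
    have hU0U : U0 ⊆ U := by
      rw [hU, hU0]
      exact union_subset_union_right (biUnion_subset_biUnion_of_subset_left _ hQ')
    have hTU : T ⊆ U := by
      rw [hU]
      exact (subset_biUnion_of_mem id hTQ).trans subset_union_right
    have hd0 : Disjoint U0 T := by
      rw [disjoint_left]
      intro x hx hxT
      rw [hU0, mem_union, mem_biUnion] at hx
      rcases hx with hx | ⟨T', hT', hx⟩
      · exact disjoint_left.mp (hST T hTQ) hx hxT
      · exact hT (hdis T' (hQ' hT') T hTQ x hx hxT ▸ hT')
    set Nb := (T.biUnion (fun v => {u ∈ S | H.Adj v u})).biUnion (fun u => {z ∈ Z | G.Adj (f u) z}) with hNb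
    have hNbc : #Nb ≤ M * d * q := by
      apply card_biUnion_le'
      · apply card_biUnion_le' _ _ _ _ (hM T hTQ)
        intro v hv
        refine le_trans (card_le_card (filter_subset_filter _ ?_)) (hd T hTQ v hv)
        rw [hU]; exact subset_union_left
      · intro u hu
        rw [mem_biUnion] at hu
        obtain ⟨v, hv, hu⟩ := hu
        exact hq _ (hfI u (mem_filter.mp hu).1)
    have hZc : k * M * M ≤ #(Z \ (U0.image f ∪ Nb)) := by
      have h1 : #Z - #(U0.image f ∪ Nb) ≤ _ := le_card_sdiff (U0.image f ∪ Nb) Z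
      have h2 := card_union_le (U0.image f) Nb
      have h3 : #(U0.image f) ≤ #U0 := card_image_le
      have h4 := card_le_card hU0U
      omega
    obtain ⟨I', hI', hI'I, hI'c⟩ := L4 hk hG M hZc
    obtain ⟨e, he, he1, -⟩ := add_block hf hd0 (Z := I') ((hI'.trans sdiff_subset).trans hZA) hI'I
      (hI'c ▸ hM T hTQ) (by
        intro z hz u hu heq
        have := hI' hz
        rw [mem_sdiff] at this
        exact this.2 (mem_union_left _ (mem_image.mpr ⟨u, hu, heq⟩)))
      (by
        intro z hz u hu v hv huv hG'
        have hz' := hI' hz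
        rw [mem_sdiff] at hz'
        have huS : u ∈ S := by
          rcases hadj T hTQ v hv u (hU0U hu) huv.symm with h | h
          · exact h
          · exact absurd h (disjoint_left.mp hd0 hu)
        refine hz'.2 (mem_union_right _ (mem_biUnion.mpr ⟨u, mem_biUnion.mpr ⟨v, hv, mem_filter.mpr ⟨huS, huv.symm⟩⟩, mem_filter.mpr ⟨hz'.1, hG'⟩⟩)))
    refine ⟨e, ?_, fun u hu => ?_⟩
    · have : S ∪ (insert T Q').biUnion id = U0 ∪ T := by
        rw [biUnion_insert, hU0, id, union_comm T, union_assoc]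
      rw [this]; exact he
    · rw [he1 u (mem_union_left _ hu)]; exact hfI u hu

lemma claimT (k a : ℕ) (hk : 3 ≤ k) (ha : 1 ≤ a) : ∃ b E C n0 : ℕ, 4 ≤ b ∧ 1 ≤ E ∧ ∀ (V W : Type) [Nonempty W] (H : SimpleGraph V)
    (G : SimpleGraph W) (U : Finset V) (A : Finset W), CF G k → n0 ≤ #U → DD H U * E ≤ 2 * #U * (E + 1) →
    (∀ K ⊆ U, K.Nonempty → Cl H U K → C ≤ #K) → ¬ Emb H G U A → ∀ P ⊆ A, Ind G P → #U ≤ #P * a →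
    100 * #A ≤ 100 * #{v ∈ A | #U ≤ dg G P v * b} + 101 * #U := by
  obtain ⟨α, hα⟩ : ∃ α, α = a + 1000 := ⟨_, rfl⟩
  obtain ⟨M, hM⟩ : ∃ M, M = 12 * α + 12 * α * (12 * α) * (72 * α) := ⟨_, rfl⟩
  obtain ⟨d, hd⟩ : ∃ d, d = 72 * α := ⟨_, rfl⟩
  have hM1 : 1 ≤ M := by omega
  obtain ⟨c, hc⟩ : ∃ c, c = M * d := ⟨_, rfl⟩
  have hc1 : 1 ≤ c := by rw [hc]; exact Nat.mul_pos hM1 (by omega)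
  refine ⟨4 * α * c * 400, 12 * α, 12 * α, 400 * (c + k * M * M + 1) + 10000, ?_, by omega, ?_⟩
  · have := Nat.mul_pos (show 0 < 4 * α by omega) hc1
    omega
  intro V W _ H G U A hG hn hD hcl hno P hPA hPI hPc
  set n := #U with hnU
  set b := 4 * α * c * 400 with hb
  have hb1 : 1 ≤ b := Nat.mul_pos (Nat.mul_pos (by omega) hc1) (by omega)
  by_contra! hcon
  have hP0 : 0 < #P := by
    by_contra! h0
    have : #P = 0 := by omega
    rw [this] at hPc; omega
  have hpP : n / α + 1 ≤ #P := by
    have : n / α < #P := by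
      rw [Nat.div_lt_iff_lt_mul (by omega), hα]
      nlinarith
    omega
  obtain ⟨P', hP', hP'c⟩ := exists_subset_card_eq hpP
  have hp1 : n < #P' * α := by
    rw [hP'c, ← Nat.div_lt_iff_lt_mul (by omega)]; omega
  have hp2 : 1000 * #P' ≤ n + 1000 := by
    rw [hP'c]
    have h1 := Nat.div_mul_le_self n α
    have h2 : n / α * 1000 ≤ n / α * α := Nat.mul_le_mul_left _ (by omega)
    omega
  set J := {v ∈ A | n ≤ dg G P v * b} with hJ
  have hZ0 : n + n / 200 ≤ #(A \ (J ∪ P')) := by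
    have h1 : #A - #(J ∪ P') ≤ _ := le_card_sdiff (J ∪ P') A
    have h2 := card_union_le J P'
    omega
  obtain ⟨Z, hZ, hZc⟩ := exists_subset_card_eq hZ0
  have hZd : ∀ w ∈ Z, dg G P' w * b ≤ n := by
    intro w hw
    have := hZ hw
    rw [mem_sdiff, mem_union] at this
    by_contra! hlt
    refine this.2 (Or.inl (mem_filter.mpr ⟨this.1, hlt.le.trans ?_⟩))
    gcongr
    exact dg_mono G hP' w
  obtain ⟨q, hq⟩ : ∃ q, q = 4 * α * n / b + 1 := ⟨_, rfl⟩
  have hq1 : 4 * α * n < q * b := by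
    rw [hq, ← Nat.div_lt_iff_lt_mul hb1]; omega
  have hq2 : 400 * (c * q) ≤ n + 400 * c := by
    have h1 := Nat.div_mul_le_self (4 * α * n) b
    obtain ⟨y, hy⟩ : ∃ y, y = 4 * α * n / b := ⟨_, rfl⟩
    rw [← hy] at h1 hq
    have h2 : 4 * α * (400 * (c * y)) ≤ 4 * α * n := by rw [hb] at h1; nlinarith
    have h3 : 400 * (c * y) ≤ n := Nat.le_of_mul_le_mul_left h2 (by omega)
    rw [hq, mul_add, mul_add]; omega
  set bad := {p ∈ P' | q ≤ dg G Z p} with hbad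
  have hbadc : 2 * #bad ≤ #P' := by
    by_contra! hlt
    have h1 : #bad * q ≤ ∑ p ∈ P', dg G Z p := markov _ _ _
    rw [sum_dg_comm] at h1
    have h2 : (∑ w ∈ Z, dg G P' w) * b ≤ #Z * n := by
      rw [sum_mul]
      have := sum_le_sum hZd
      simpa using this
    have h3 : #bad * q * b ≤ 2 * n * n := by
      calc #bad * q * b ≤ (∑ w ∈ Z, dg G P' w) * b := by gcongr
        _ ≤ #Z * n := h2
        _ ≤ 2 * n * n := by gcongr; omega
    have h4 : n * (q * b) ≤ 2 * #bad * α * (q * b) := by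
      apply Nat.mul_le_mul_right
      refine hp1.le.trans ?_
      gcongr
    have h5 : n * (q * b) ≤ n * (4 * α * n) := by
      calc n * (q * b) ≤ 2 * #bad * α * (q * b) := h4
        _ = 2 * α * (#bad * q * b) := by ring
        _ ≤ 2 * α * (2 * n * n) := by gcongr
        _ = _ := by ring
    have h6 := Nat.le_of_mul_le_mul_left h5 (by omega)
    omega
  obtain ⟨S, hSU, Q, hSc, hUe, hTM, hST, hdis, hadj, hdeg⟩ := struct_lemma H U α (by omega) hD hcl
  refine hno (embed_parts hk hG (I := P' \ bad) (Z := Z) (M := M) (d := d) (q := q) Q hUe (hM ▸ hTM) hST hdis hadj (hd ▸ hdeg) 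
    (hPI.mono (sdiff_subset.trans hP')) ((sdiff_subset.trans hP').trans hPA) (hZ.trans sdiff_subset) ?_ ?_ ?_ ?_)
  · rw [disjoint_left]
    intro x hx hxZ
    have := hZ hxZ
    rw [mem_sdiff, mem_union] at this
    exact this.2 (Or.inr (sdiff_subset hx))
  · have h1 : #(P' \ bad) + #bad = #P' := card_sdiff_add_card_eq_card (filter_subset _ _)
    have h2 : 2 * #S < #P' := by
      have : 2 * #S * α < #P' * α := by
        refine lt_of_le_of_lt ?_ hp1
        calc 2 * #S * α = 2 * α * #S := by ring
          _ ≤ n := hSc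
      exact Nat.lt_of_mul_lt_mul_right this
    omega
  · intro p hp
    rw [mem_sdiff] at hp
    by_contra! hlt
    exact hp.2 (mem_filter.mpr ⟨hp.1, hlt.le⟩)
  · rw [← hc, hZc]
    omega

end ClaimT

section PathS
open scoped Classical
open Finset

structure Sys {W : Type*} (G : SimpleGraph W) (I J M : Finset W) (n m b1 b0 c : ℕ) : Prop where
  JM : J ⊆ M
  Jd : ∀ j ∈ J, n ≤ dg G I j * b1
  T : ∀ P ⊆ I, n ≤ #P * b1 → m ≤ #{v ∈ M | n ≤ dg G P v * b0}
  Jc : m ≤ #J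
  Mc : #M + c ≤ 2 * m
  hc : ∀ x, n ≤ x * b0 → c ≤ x

variable {W : Type*} {G : SimpleGraph W} {I J M : Finset W} {n m b1 b0 c : ℕ}

lemma inter_big {S S' M : Finset W} {m c : ℕ} (hS : S ⊆ M) (hS' : S' ⊆ M) (h1 : m ≤ #S) (h2 : m ≤ #S') (hM : #M + c ≤ 2 * m) :
    c ≤ #(S ∩ S') := by
  have h3 := card_union_add_card_inter S S'
  have h4 := card_le_card (union_subset hS hS')
  omega

lemma pathL (h : Sys G I J M n m b1 b0 c) : ∀ (r : ℕ) (F P P' : Finset W), #F + 2 * r + 5 ≤ c → P ⊆ I → P' ⊆ I →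
    n ≤ #P * b1 → n ≤ #P' * b1 → ∃ (p : W) (l : List W) (p' : W), p ∈ P ∧ p' ∈ P' ∧ (p :: l).length = 2 * r + 3 ∧
      (p :: l).Nodup ∧ (p :: l).IsChain G.Adj ∧ (∀ x ∈ p :: l, x ∉ F) ∧ (p :: l).getLast? = some p' := by
  intro r
  induction r with
  | zero =>
    intro F P P' hF hP hP' hPn hPn'
    have h1 := inter_big (filter_subset _ _) (filter_subset _ _) (h.T P hP hPn) (h.T P' hP' hPn') h.Mc
    obtain ⟨j, hj, hjF⟩ := exists_notMem_of_lt (F := F) (lt_of_lt_of_le (by omega) h1)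
    rw [mem_inter, mem_filter, mem_filter] at hj
    have h2 := h.hc _ hj.1.2
    have h3 := h.hc _ hj.2.2
    obtain ⟨p, hp, hpF⟩ := exists_notMem_of_lt (S := {w ∈ P | G.Adj j w}) (F := F) (lt_of_lt_of_le (by omega) h2)
    obtain ⟨p', hp', hpF'⟩ := exists_notMem_of_lt (S := {w ∈ P' | G.Adj j w}) (F := insert p F) 
      (lt_of_lt_of_le (by have := card_insert_le p F; omega) h3)
    rw [mem_filter] at hp hp'
    rw [mem_insert, not_or] at hpF'
    refine ⟨p, [j, p'], p', hp.1, hp'.1, by simp, ?_, ?_, ?_, by simp⟩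
    · simp only [List.nodup_cons, List.mem_cons, List.not_mem_nil, or_false, not_or, not_false_eq_true, List.nodup_nil, and_true]
      exact ⟨⟨hp.2.ne', Ne.symm hpF'.1⟩, hp'.2.ne⟩
    · simp only [List.isChain_cons_cons, List.isChain_singleton, and_true]
      exact ⟨hp.2.symm, hp'.2⟩
    · intro x hx
      simp only [List.mem_cons, List.not_mem_nil, or_false] at hx
      rcases hx with rfl | rfl | rfl
      · exact hpF
      · exact hjF
      · exact hpF'.2
  | succ r ih =>
    intro F P P' hF hP hP' hPn hPn'
    have h1 := inter_big (filter_subset _ _) h.JM (h.T P hP hPn) h.Jc h.Mc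
    obtain ⟨j, hj, hjF⟩ := exists_notMem_of_lt (F := F) (lt_of_lt_of_le (by omega) h1)
    rw [mem_inter, mem_filter] at hj
    have h2 := h.hc _ hj.1.2
    obtain ⟨p, hp, hpF⟩ := exists_notMem_of_lt (S := {w ∈ P | G.Adj j w}) (F := F) (lt_of_lt_of_le (by omega) h2)
    rw [mem_filter] at hp
    obtain ⟨q, l, p', hq, hp', hlen, hnd, hch, hF', hlast⟩ := ih (insert p (insert j F)) {w ∈ I | G.Adj j w} P' (by
      have := card_insert_le j F
      have := card_insert_le p (insert j F)
      omega) (filter_subset _ _) hP' (h.Jd j hj.2) hPn'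
    have hpl : p ∉ q :: l := fun hx => hF' p hx (mem_insert_self _ _)
    have hjl : j ∉ q :: l := fun hx => hF' j hx (mem_insert_of_mem (mem_insert_self _ _))
    refine ⟨p, j :: q :: l, p', hp.1, hp', ?_, ?_, ?_, ?_, ?_⟩
    · simp only [List.length_cons] at hlen ⊢; omega
    · rw [List.nodup_cons, List.nodup_cons]
      refine ⟨?_, hjl, hnd⟩
      rw [List.mem_cons, not_or]
      exact ⟨hp.2.ne', hpl⟩
    · rw [List.isChain_cons_cons, List.isChain_cons_cons]
      exact ⟨hp.2.symm, (mem_filter.mp hq).2, hch⟩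
    · intro x hx
      rw [List.mem_cons, List.mem_cons] at hx
      rcases hx with rfl | rfl | hx
      · exact hpF
      · exact hjF
      · intro hxF
        exact hF' x hx (mem_insert_of_mem (mem_insert_of_mem hxF))
    · rw [List.getLast?_cons_cons, List.getLast?_cons_cons]; exact hlast

lemma Sys.indJ (h : Sys G I J M n m b1 b0 c) {t : ℕ} (ht : 3 ≤ t) (hG : CF G (2 * t + 1)) (hct : 2 * t + 10 ≤ c) : Ind G J := by
  intro y hy y' hy' hadj
  obtain ⟨q, l, p', hq, hp', hlen, hnd, hch, hF, hlast⟩ := pathL h (t - 2) {y, y'} {w ∈ I | G.Adj y w} {w ∈ I | G.Adj y' w}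
    (by have := card_le_two (a := y) (b := y'); omega) (filter_subset _ _) (filter_subset _ _) (h.Jd y hy) (h.Jd y' hy')
  refine hG (cyc (by omega) (y' :: y :: q :: l) ?_ ?_ ?_ y' p' rfl ?_ (mem_filter.mp hp').2.symm)
  · simp only [List.length_cons] at hlen ⊢; omega
  · rw [List.nodup_cons, List.nodup_cons, List.mem_cons, not_or]
    exact ⟨⟨hadj.ne', fun hx => hF _ hx (by simp)⟩, fun hx => hF _ hx (by simp), hnd⟩
  · rw [List.isChain_cons_cons, List.isChain_cons_cons]
    exact ⟨hadj.symm, (mem_filter.mp hq).2, hch⟩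
  · rw [List.getLast?_cons_cons, List.getLast?_cons_cons]; exact hlast

lemma Sys.noz {M' J' : Finset W} (h : Sys G I J M n m b1 b0 c) (h' : Sys G J J' M' n m b1 b0 c) (hd : Disjoint J J')
    {t g : ℕ} (ht : 3 ≤ t) (hG : CF G (2 * t + 1)) (hct : 2 * t + 10 ≤ c) (hg : #M + g ≤ 2 * m) (hcb : n ≤ g * b1)
    {z p p' : W} (hp : p ∈ J) (hp' : p' ∈ J') (hzp : G.Adj z p) (hzp' : G.Adj z p') : False := by
  set Pi := {w ∈ I | G.Adj p w} with hPi
  have h1 := inter_big (filter_subset _ _) h.JM (h.T Pi (filter_subset _ _) (h.Jd p hp)) h.Jc hg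
  set Jp := {v ∈ M | n ≤ dg G Pi v * b0} ∩ J with hJp
  obtain ⟨j, l, e, hj, he, hlen, hnd, hch, hF, hlast⟩ := pathL h' (t - 3) {z, p, p'} Jp {w ∈ J | G.Adj p' w}
    (by have := card_le_three (a := z) (b := p) (c := p'); omega) inter_subset_right (filter_subset _ _) 
    (hcb.trans (Nat.mul_le_mul_right _ h1)) (h'.Jd p' hp')
  rw [hJp, mem_inter, mem_filter] at hj
  have h2 := h.hc _ hj.1.2
  obtain ⟨i, hi, hiF⟩ := exists_notMem_of_lt (S := {w ∈ Pi | G.Adj j w}) (F := {z, p, p'} ∪ (j :: l).toFinset) (lt_of_lt_of_le (by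
    have h3 := card_le_three (a := z) (b := p) (c := p')
    have h4 := List.toFinset_card_le (j :: l)
    have h5 := card_union_le {z, p, p'} (j :: l).toFinset
    omega) h2)
  rw [mem_filter, hPi, mem_filter] at hi
  simp only [mem_union, List.mem_toFinset, not_or, mem_insert, mem_singleton] at hiF
  obtain ⟨⟨hiz, hip, hip'⟩, hil⟩ := hiF
  have hpp' : p ≠ p' := fun heq => disjoint_left.mp hd hp (heq ▸ hp')
  refine hG (cyc (by omega) (p' :: z :: p :: i :: j :: l) ?_ ?_ ?_ p' e rfl ?_ (mem_filter.mp he).2.symm)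
  · simp only [List.length_cons] at hlen ⊢; omega
  · rw [List.nodup_cons, List.nodup_cons, List.nodup_cons, List.nodup_cons]
    refine ⟨?_, ?_, ?_, by simpa using hil, hnd⟩
    · have : p' ∉ j :: l := fun hx => hF _ hx (by simp)
      rw [List.mem_cons, List.mem_cons, List.mem_cons]
      rintro (h | h | h | h)
      · exact hzp'.ne h.symm
      · exact hpp' h.symm
      · exact hip' h.symm
      · exact this h
    · have : z ∉ j :: l := fun hx => hF _ hx (by simp)
      rw [List.mem_cons, List.mem_cons]
      rintro (h | h | h)
      · exact hzp.ne h
      · exact hiz h.symm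
      · exact this h
    · have : p ∉ j :: l := fun hx => hF _ hx (by simp)
      rw [List.mem_cons]
      rintro (h | h)
      · exact hip h.symm
      · exact this h
  · simp only [List.isChain_cons_cons]
    exact ⟨hzp'.symm, hzp, hi.1.2, hi.2.symm, hch⟩
  · simp only [List.getLast?_cons_cons]; exact hlast

end PathS

section FES
open scoped Classical
open Finset
variable {V W : Type*} [Nonempty W] {H : SimpleGraph V} {G : SimpleGraph W} {U : Finset V} {A X J J2 : Finset W}

lemma closed_split {S : Finset V} {A1 A2 : Finset W} (hS : S ⊆ U) (hcl : Cl H U S)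
    (h1 : Emb H G S A1) (h2 : Emb H G (U \ S) A2) (hA1 : A1 ⊆ A) (hA2 : A2 ⊆ A)
    (hd : Disjoint A1 A2) : Emb H G U A := by
  obtain ⟨f, hf⟩ := h1
  obtain ⟨g, hg⟩ := h2
  obtain ⟨e, he, -⟩ := glue (hf.mono subset_rfl hA1) (hg.mono subset_rfl hA2) disjoint_sdiff
    (fun u hu v hv heq => disjoint_left.mp hd (hf.2.1 u hu) (heq ▸ hg.2.1 v hv))
    (fun u hu v hv huv => by
      rw [mem_sdiff] at hv
      exact absurd (hcl u hu v hv.1 huv) hv.2)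
  rw [union_sdiff_of_subset hS] at he
  exact ⟨e, he⟩

lemma FE_K1 {K : Finset V} (hJX : J ⊆ X) (hJ : Ind G J) (hXJ : ∀ x ∈ X, ∀ j ∈ J, ¬ G.Adj x j)
    (hK : K ⊆ U) (hJc : 97 * #U ≤ 100 * #J) (hKX : #K ≤ #X) (hD : DD H U ≤ 4 * #U) : Emb H G K X := by
  rcases Nat.lt_or_ge (#J) (#K) with hlt | hge
  · set low := {v ∈ K | dg H K v < 8} with hlow
    have hlowK : low ⊆ K := filter_subset _ _
    have hKU := card_le_card hK
    have h1 : #{v ∈ K | 8 ≤ dg H K v} * 8 ≤ DD H K := markov K _ _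
    have h2 := DD_mono H hK
    have h3 : #low + #{v ∈ K | 8 ≤ dg H K v} = #K := by
      have := card_filter_add_card_filter_not (s := K) (fun v => dg H K v < 8)
      simpa only [not_lt] using this
    obtain ⟨I, hI, hII, hIc⟩ := greedy_ind H 8 low (deg_of_bdd (fun v hv => 
      lt_of_le_of_lt (dg_mono H hlowK v) (mem_filter.mp hv).2))
    obtain ⟨Q, hQ, hQc⟩ := exists_subset_card_eq (s := I) (n := #K - #J) (by omega)
    have hQK : Q ⊆ K := (hQ.trans hI).trans hlowK
    have hXJc : #(X \ J) + #J = #X := card_sdiff_add_card_eq_card hJX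
    have hKQc : #(K \ Q) + #Q = #K := card_sdiff_add_card_eq_card hQK
    obtain ⟨f, hf, hfX⟩ := exists_injOn Q (X \ J) (by omega)
    obtain ⟨g, hg, hgJ⟩ := exists_injOn (K \ Q) J (by omega)
    obtain ⟨e, he, -⟩ := glue (H := H) (G := G) (f := f) (g := g) (U1 := Q) (U2 := K \ Q) (A := X) 
      ⟨hf, fun u hu => sdiff_subset (hfX u hu), fun u hu v hv huv => absurd huv (hII u (hQ hu) v (hQ hv))⟩
      ⟨hg, fun u hu => hJX (hgJ u hu), fun u hu v hv _ => hJ _ (hgJ u hu) _ (hgJ v hv)⟩ disjoint_sdiff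
      (fun u hu v hv heq => (mem_sdiff.mp (hfX u hu)).2 (heq ▸ hgJ v hv))
      (fun u hu v hv _ => hXJ _ (sdiff_subset (hfX u hu)) _ (hgJ v hv))
    rw [union_sdiff_of_subset hQK] at he
    exact ⟨e, he⟩
  · exact (isEmb_of_ind hJ hge).mono subset_rfl hJX

lemma FE (hJX : J ⊆ X) (hXA : X ⊆ A) (hJ : Ind G J) (hXJ : ∀ x ∈ X, ∀ j ∈ J, ¬ G.Adj x j)
    (hJ2A : J2 ⊆ A) (hJ2 : Ind G J2) (hd : Disjoint X J2) (hJc : 97 * #U ≤ 100 * #J) (hJ2c : 97 * #U ≤ 100 * #J2)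
    (hX : DD H U + 2 ≤ 2 * #X) (hD : DD H U ≤ 4 * #U) (hn : 1 ≤ #U) : Emb H G U A := by
  obtain ⟨P, hP, hP2⟩ := partition_lemma H (#U + 1) (#U) (by omega) U (fun v _ => dg_le_card _ _ _)
  have hcl : ∀ T ∈ P, Cl H U T := by
    intro T hT
    rcases (hP2 T hT).2 with h | h
    · have := card_le_card (hP.sub T hT); omega
    · exact h
  have hPne : P.Nonempty := by
    obtain ⟨v, hv⟩ := card_pos.mp hn
    obtain ⟨T, hT, -⟩ := hP.cov v hv
    exact ⟨T, hT⟩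
  obtain ⟨K, hK, hKmax⟩ := exists_max_image P (fun T => #T) hPne
  have hKU := hP.sub K hK
  rcases Nat.lt_or_ge (#J2) (#U - #K) with hlt | hge
  · have hsm : ∀ T ∈ P, 100 * #T ≤ 3 * #U := by
      intro T hT
      have := hKmax T hT
      omega
    obtain ⟨Q, hQ, hQmax⟩ := exists_max_image (P.powerset.filter (fun Q => #(Q.biUnion id) ≤ #J)) (fun Q => #(Q.biUnion id))
      ⟨∅, by simp⟩
    rw [mem_filter, mem_powerset] at hQ
    have hSU : Q.biUnion id ⊆ U := by
      intro x hx
      obtain ⟨T, hT, hx⟩ := mem_biUnion.mp hx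
      exact hP.sub T (hQ.1 hT) hx
    have hScl : Cl H U (Q.biUnion id) := by
      intro u hu v hv huv
      obtain ⟨T, hT, hx⟩ := mem_biUnion.mp hu
      exact mem_biUnion.mpr ⟨T, hT, hcl T (hQ.1 hT) u hx v hv huv⟩
    have hSc := card_sdiff_add_card_eq_card hSU
    refine closed_split hSU hScl (isEmb_of_ind hJ hQ.2) (isEmb_of_ind hJ2 ?_) (hJX.trans hXA) hJ2A (hd.mono_left hJX)
    by_contra! hcon
    have hpos : 0 < #(U \ Q.biUnion id) := by omega
    obtain ⟨v, hv⟩ := card_pos.mp hpos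
    rw [mem_sdiff] at hv
    obtain ⟨T, hT, hvT⟩ := hP.cov v hv.1
    have hQT : (insert T Q).biUnion id = T ∪ Q.biUnion id := by rw [biUnion_insert]; rfl
    have h1 := card_union_le T (Q.biUnion id)
    have h2 : #(Q.biUnion id) < #(T ∪ Q.biUnion id) := by
      apply card_lt_card
      refine ssubset_of_subset_of_ne subset_union_right ?_
      intro heq
      exact hv.2 (heq ▸ mem_union_left _ hvT)
    have h3 : #J < #(T ∪ Q.biUnion id) := by
      by_contra! hle
      have := hQmax (insert T Q) (by
        rw [mem_filter, mem_powerset, hQT]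
        exact ⟨insert_subset hT hQ.1, hle⟩)
      rw [hQT] at this
      omega
    have h4 := hsm T hT
    omega
  · have h1 := hP.tau K hK
    have h2 := DD_mono H hKU
    have h3 := card_sdiff_add_card_eq_card hKU
    exact closed_split hKU (hcl K hK) (FE_K1 hJX hJ hXJ hKU hJc (by omega) hD) (isEmb_of_ind hJ2 (by omega)) hXA hJ2A hd

end FES

section CaseII
open scoped Classical
open Finset

lemma mkSys {W : Type*} {G : SimpleGraph W} {A I : Finset W} {n b1 b0 c : ℕ} (hA : 198 * n ≤ 100 * #A)
    (hT1 : 100 * #A ≤ 100 * #{v ∈ A | n ≤ dg G I v * b1} + 101 * n)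
    (hT0 : ∀ P ⊆ A, Ind G P → n ≤ #P * b1 → 100 * #A ≤ 100 * #{v ∈ A | n ≤ dg G P v * b0} + 101 * n)
    (hIA : I ⊆ A) (hI : Ind G I) (hM : 100 * #{v ∈ A | ∃ i ∈ I, G.Adj i v} ≤ 101 * n + 100)
    (hn : 1000 ≤ n) (hcn : 2 * c ≤ n) (hc : c * b0 < n) :
    Sys G I {v ∈ A | n ≤ dg G I v * b1} {v ∈ A | ∃ i ∈ I, G.Adj i v} n (97 * n / 100) b1 b0 c := by
  have key : ∀ P ⊆ I, ∀ b, ({v ∈ A | n ≤ dg G P v * b} : Finset W) ⊆ {v ∈ A | ∃ i ∈ I, G.Adj i v} := by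
    intro P hP b v hv
    rw [mem_filter] at hv ⊢
    refine ⟨hv.1, ?_⟩
    have : dg G P v ≠ 0 := by
      intro h0
      rw [h0] at hv
      omega
    obtain ⟨i, hi⟩ := card_pos.mp (Nat.pos_of_ne_zero this)
    rw [mem_filter] at hi
    exact ⟨i, hP hi.1, hi.2.symm⟩
  refine ⟨key I subset_rfl b1, fun j hj => (mem_filter.mp hj).2, ?_, ?_, ?_, ?_⟩
  · intro P hP hPn
    have h1 := hT0 P (hP.trans hIA) (hI.mono hP) hPn
    have h2 : #{v ∈ A | n ≤ dg G P v * b0} ≤ #{v ∈ ({v ∈ A | ∃ i ∈ I, G.Adj i v} : Finset W) | n ≤ dg G P v * b0} := by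
      apply card_le_card
      intro v hv
      rw [mem_filter]
      exact ⟨key P hP b0 hv, (mem_filter.mp hv).2⟩
    omega
  · omega
  · omega
  · intro x hx
    by_contra! hlt
    have : x * b0 ≤ c * b0 := Nat.mul_le_mul_right _ hlt.le
    omega

lemma E_weaken {n D E E' : ℕ} (hE : E' ≤ E) (h : D * E ≤ 2 * n * (E + 1)) : D * E' ≤ 2 * n * (E' + 1) := by
  rcases Nat.le_total D (2 * n) with h1 | h1
  · calc D * E' ≤ 2 * n * E' := by gcongr
      _ ≤ _ := by gcongr; omega
  · obtain ⟨x, rfl⟩ := Nat.exists_eq_add_of_le h1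
    have h2 : x * E ≤ 2 * n := by nlinarith
    have h3 : x * E' ≤ x * E := by gcongr
    nlinarith

lemma caseII (t : ℕ) (ht : 3 ≤ t) : ∃ E D0 : ℕ, 1 ≤ E ∧ ∀ (V W : Type) [Nonempty W] (B0 : ℕ) (H : SimpleGraph V) 
    (G : SimpleGraph W) (U : Finset V) (A : Finset W),
    Ctx t B0 H G U A → D0 ≤ DD H U → DD H U * E ≤ 2 * #U * (E + 1) → False := by
  obtain ⟨k, hk⟩ : ∃ k, k = 2 * t + 1 := ⟨_, rfl⟩
  obtain ⟨b1, E1, C1, n1, hb1, hE1, HT1⟩ := claimT k (5 * k) (by omega) (by omega)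
  obtain ⟨b0, E0, C0, n0, hb0, hE0, HT0⟩ := claimT k b1 (by omega) (by omega)
  obtain ⟨n2, HSE⟩ := SE k 4 100 (by omega) (by omega) (by omega)
  obtain ⟨C, hC⟩ : ∃ C, C = C0 + C1 + 100 := ⟨_, rfl⟩
  obtain ⟨c, hc⟩ : ∃ c, c = 2 * t + 10 := ⟨_, rfl⟩
  obtain ⟨nb, hnb⟩ : ∃ nb, nb = n0 + n1 + n2 + 1000 + 2 * c + (c * b0 + 1) := ⟨_, rfl⟩
  refine ⟨E0 + E1, 4 * nb + (4 * ((2 * t + 1) * C * C) + 20 * t * t + 20), by omega, ?_⟩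
  intro V W _ B0 H G U A h hD hDE
  have hG : CF G k := hk ▸ h.hG
  have hAD := h.hA'
  have hR := h.S1 ((2 * t + 1) * C * C) (by omega)
  have hsp := h.sparse (C := C) (by omega) hR
  have hD4 : DD H U ≤ 4 * #U := by
    have := E_weaken (E' := 1) (by omega) hDE
    omega
  have hn : nb ≤ #U := by omega
  have hD1 : 198 * #U ≤ 100 * DD H U := by
    rcases Nat.le_total (2 * #U) (DD H U) with h1 | h1
    · omega
    · obtain ⟨y, hy⟩ := Nat.exists_eq_add_of_le h1
      rw [hy] at hsp
      have h2 : y * C ≤ 2 * #U := by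
        have : (DD H U + y) * C = DD H U * C + y * C := by ring
        omega
      have h3 : y * 100 ≤ y * C := by gcongr; omega
      omega
  have hcl : ∀ K ⊆ U, K.Nonempty → Cl H U K → C ≤ #K := by
    intro K hK hne hcl
    by_contra! hlt
    refine h.S2 hK hcl hne (le_trans ?_ hR)
    gcongr
  have T1 := HT1 V W H G U A hG (by omega) (E_weaken (by omega) hDE) 
    (fun K hK hne hKcl => le_trans (by omega) (hcl K hK hne hKcl)) h.no
  have T0 := HT0 V W H G U A hG (by omega) (E_weaken (by omega) hDE) 
    (fun K hK hne hKcl => le_trans (by omega) (hcl K hK hne hKcl)) h.no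
  obtain ⟨x, hx, hxd⟩ := h.bigdeg (by omega)
  have hno := h.no
  set n := #U with hnU
  set D := DD H U with hDd
  have hΔ : n ≤ 5 * dg G A x := by
    have h1 : 98 * n ≤ 100 * (#A - n) := by omega
    have h2 : 98 * n * n ≤ 100 * (dg G A x * (4 * n)) := by
      calc 98 * n * n ≤ 100 * (#A - n) * n := by gcongr
        _ = 100 * ((#A - n) * n) := by ring
        _ ≤ 100 * (dg G A x * D) := by gcongr
        _ ≤ _ := by gcongr
    have h3 : n * (98 * n) ≤ n * (400 * dg G A x) := by nlinarith
    have h4 := Nat.le_of_mul_le_mul_left h3 (by omega)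
    omega
  obtain ⟨I, hI, hII, hIc⟩ := greedy_ind G k {w ∈ A | G.Adj x w} (L1 (by omega) hG (x := x) (by simp))
  change dg G A x ≤ _ at hIc
  have hIA : I ⊆ A := hI.trans (filter_subset _ _)
  have hIx : ∀ a ∈ I, G.Adj x a := fun a ha => (mem_filter.mp (hI ha)).2
  have hIn : n ≤ #I * (5 * k) := by
    have : #I * (5 * k) = 5 * (k * #I) := by ring
    omega
  have hM : 100 * #{v ∈ A | ∃ i ∈ I, G.Adj i v} ≤ 101 * n + 100 := by
    set B := {b ∈ A | b ≠ x ∧ ∃ a ∈ I, G.Adj a b} with hB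
    have hBI : Disjoint I B := by
      rw [disjoint_left]
      intro a ha hb
      obtain ⟨-, -, a', ha', hadj⟩ := mem_filter.mp hb
      exact hII a' ha' a ha hadj
    have hBdeg : Deg G k B := L2 (x := x) (A := I) (by omega) ⟨t, hk⟩ hG hIx hBI (by simp [hB])
      (fun b hb => (mem_filter.mp hb).2.2)
    have hBc : #B * 100 < n * 100 + n := by
      by_contra! hcon
      exact hno ((HSE V W H G U B n (by omega) hBdeg le_rfl hD4 hcon).mono subset_rfl (filter_subset _ _))
    have hsub : ({v ∈ A | ∃ i ∈ I, G.Adj i v} : Finset W) ⊆ insert x B := by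
      intro v hv
      rw [mem_filter] at hv
      rw [mem_insert]
      by_cases hvx : v = x
      · exact Or.inl hvx
      · exact Or.inr (mem_filter.mpr ⟨hv.1, hvx, hv.2⟩)
    have h1 := card_le_card hsub
    have h2 := card_insert_le x B
    omega
  have S1 := mkSys (G := G) (A := A) (I := I) (n := n) (b1 := b1) (b0 := b0) (c := c) (by omega) (T1 I hIA hII hIn) T0 hIA hII hM
    (by omega) (by omega) (by omega)
  have hJ1 := T1 I hIA hII hIn
  have hJind := S1.indJ ht h.hG (by omega)
  set J := {v ∈ A | n ≤ dg G I v * b1} with hJ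
  have hJA : J ⊆ A := filter_subset _ _
  have hJc : 97 * n ≤ 100 * #J := by omega
  set Y := {v ∈ A | ∃ i ∈ J, G.Adj i v} with hY
  have hYA : Y ⊆ A := filter_subset _ _
  have hYJ : Disjoint Y J := by
    rw [disjoint_left]
    intro v hv hvJ
    obtain ⟨-, j, hj, hadj⟩ := mem_filter.mp hv
    exact hJind j hj v hvJ hadj
  have hYc : 100 * #Y ≤ 101 * n + 100 := by
    have h1 := card_union_of_disjoint hYJ
    have h2 := card_le_card (union_subset hYA hJA)
    omega
  have hJn : n ≤ #J * (5 * k) := by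
    have : #J * 2 ≤ #J * (5 * k) := by gcongr; omega
    omega
  have hJ2 := T1 J hJA hJind hJn
  have S2 := mkSys (G := G) (A := A) (I := J) (n := n) (b1 := b1) (b0 := b0) (c := c) (by omega) hJ2 T0 hJA hJind hYc
    (by omega) (by omega) (by omega)
  have hJ2ind := S2.indJ ht h.hG (by omega)
  rw [← hY] at S2
  have hJ2Y := S2.JM
  set J2 := {v ∈ A | n ≤ dg G J v * b1} with hJ2d
  have hJ2c : 97 * n ≤ 100 * #J2 := by omega
  have hblue : ∀ y ∈ Y, ∀ j ∈ J2, ¬ G.Adj y j := by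
    intro y hy j hj hadj
    obtain ⟨-, p, hp, hpy⟩ := mem_filter.mp hy
    refine S1.noz S2 (hYJ.symm.mono_right hJ2Y) ht h.hG (g := n / 2) (by omega) (by omega) ?_ hp hj hpy.symm hadj
    have : n / 2 * 4 ≤ n / 2 * b1 := by gcongr
    omega
  have hXY := card_sdiff_add_card_eq_card hYA
  rcases Nat.lt_or_ge (2 * #(A \ Y)) (D + 2) with hlt | hge
  · exact hno (FE (X := Y) (J := J2) (J2 := J) hJ2Y hYA hJ2ind hblue hJA hJind hYJ hJ2c hJc (by omega) hD4 (by omega))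
  · refine hno (FE (X := A \ Y) (J := J) (J2 := J2) ?_ sdiff_subset hJind ?_ (hJ2Y.trans hYA) hJ2ind ?_ hJc hJ2c hge hD4 (by omega))
    · intro v hv
      exact mem_sdiff.mpr ⟨hJA hv, fun hvY => disjoint_left.mp hYJ hvY hv⟩
    · intro v hv j hj hadj
      rw [mem_sdiff] at hv
      exact hv.2 (mem_filter.mpr ⟨hv.1, j, hj, hadj.symm⟩)
    · exact sdiff_disjoint.mono_right hJ2Y

end CaseII

section Final
open scoped Classical
open Finset

lemma main_emb (t : ℕ) (ht : 3 ≤ t) : ∃ B0 : ℕ, ∀ (V W : Type) [Nonempty W] (H : SimpleGraph V) (G : SimpleGraph W),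
    CF G (2 * t + 1) → ∀ (D : ℕ) (U : Finset V) (A : Finset W), DD H U = D → D + phi B0 t D ≤ #A → #U ≤ #A → Emb H G U A := by
  obtain ⟨E, D1, hE, h2⟩ := caseII t ht
  obtain ⟨D2, h1⟩ := caseI t E hE
  obtain ⟨D0, hD0⟩ : ∃ D0, D0 = D1 + D2 + 1 := ⟨_, rfl⟩
  refine ⟨Nat.sqrt D0 + (2 * t + 1) * D0 * D0, ?_⟩
  intro V W _ H G hG D
  induction D using Nat.strong_induction_on with
  | _ D ih =>
  intro U A hUD hA hUA
  set U1 := {v ∈ U | 1 ≤ dg H U v} with hU1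
  have hU1U : U1 ⊆ U := filter_subset _ _
  have hnb : ∀ v ∈ U, ∀ w ∈ U, H.Adj v w → v ∈ U1 := by
    intro v hv w hw hvw
    exact mem_filter.mpr ⟨hv, card_pos.mpr ⟨w, mem_filter.mpr ⟨hw, hvw⟩⟩⟩
  have hcl : Cl H U U1 := fun u hu v hv huv => hnb v hv u (hU1U hu) huv.symm
  have hiso : ∀ v ∈ U1, 1 ≤ dg H U1 v := by
    intro v hv
    obtain ⟨w, hw⟩ := card_pos.mp (mem_filter.mp hv).2
    rw [mem_filter] at hw
    exact card_pos.mpr ⟨w, mem_filter.mpr ⟨hcl v hv w hw.1 hw.2, hw.2⟩⟩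
  have hDU1 : DD H U1 = D := by
    have e1 := DD_sdiff_cl H hU1U hcl
    have e2 : DD H (U \ U1) = 0 := by
      unfold DD
      apply sum_eq_zero
      intro v hv
      have e3 := dg_mono H (sdiff_subset (s := U) (t := U1)) v
      rw [mem_sdiff] at hv
      by_contra hne
      exact hv.2 (mem_filter.mpr ⟨hv.1, by omega⟩)
    omega
  refine emb_isolated (U' := U1) ?_ hU1U (by
    intro u hu v hv huv
    rw [mem_sdiff] at hu
    exact hu.2 (hnb u hu.1 v hv huv)) hUA
  have hU1c : #U1 ≤ D := by
    rw [← hDU1]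
    have := sum_le_sum hiso
    simpa [DD] using this
  rcases Nat.lt_or_ge D D0 with hlt | hge
  · have e1 : (2 * t + 1) * #U1 * #U1 ≤ #A := by
      have e2 : (2 * t + 1) * #U1 * #U1 ≤ (2 * t + 1) * D0 * D0 := by
        gcongr <;> omega
      have e3 := Nat.sqrt_le_sqrt hlt.le
      unfold phi at hA
      omega
    obtain ⟨I, hI, hII, hIc⟩ := L4 (by omega) hG (#U1) e1
    exact (isEmb_of_ind hII hIc.ge).mono subset_rfl hI
  · by_contra hno
    have hctx : Ctx t (Nat.sqrt D0 + (2 * t + 1) * D0 * D0) H G U1 A :=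
      { ht := ht
        hG := hG
        hA := by rw [hDU1]; exact hA
        iso := hiso
        ih := fun U' A' hlt hA' hU' => ih (DD H U') (hDU1 ▸ hlt) U' A' rfl hA' hU'
        no := hno }
    rcases Nat.le_total (DD H U1 * E) (2 * #U1 * (E + 1)) with hc | hc
    · exact h2 V W _ H G U1 A hctx (by omega) hc
    · exact h1 V W _ H G U1 A hctx (by omega) hc

lemma final_arith (B0 t m : ℕ) : ((2 * m + phi B0 t (2 * m) : ℕ) : ℤ) ≤ 2 * m + max ⌊((B0 : ℝ) + 1) - Real.sqrt m⌋ (t : ℤ) := by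
  have h1 : Real.sqrt m ≤ Nat.sqrt (2 * m) + 1 := by
    rw [Real.sqrt_le_left (by positivity)]
    have := Nat.lt_succ_sqrt (2 * m)
    have h2 : m ≤ (Nat.sqrt (2 * m) + 1) * (Nat.sqrt (2 * m) + 1) := by
      simp only [Nat.succ_eq_add_one] at this
      omega
    rw [sq]
    exact_mod_cast h2
  rw [phi]
  rcases Nat.le_total B0 (Nat.sqrt (2 * m) + t) with h | h
  · rw [max_eq_right (by omega)]
    push_cast
    have := le_max_right ⌊((B0 : ℝ) + 1) - Real.sqrt m⌋ (t : ℤ)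
    omega
  · rw [max_eq_left (by omega)]
    have h3 : ((B0 - Nat.sqrt (2 * m) : ℕ) : ℤ) ≤ ⌊((B0 : ℝ) + 1) - Real.sqrt m⌋ := by
      rw [Int.le_floor]
      have : (((B0 - Nat.sqrt (2 * m) : ℕ) : ℤ) : ℝ) = (B0 : ℝ) - Nat.sqrt (2 * m) := by
        rw [Int.cast_natCast, Nat.cast_sub (by omega)]
      rw [this]
      linarith
    have := le_max_left ⌊((B0 : ℝ) + 1) - Real.sqrt m⌋ (t : ℤ)
    push_cast at *
    omega

lemma DD_univ (V : Type) [Fintype V] [DecidableEq V] (H : SimpleGraph V) [DecidableRel H.Adj] :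
    DD H univ = 2 * H.edgeFinset.card := by
  rw [← H.sum_degrees_eq_twice_card_edges]
  unfold DD
  apply sum_congr rfl
  intro v _
  rw [← SimpleGraph.card_neighborFinset_eq_degree]
  unfold dg
  congr 1
  ext w
  simp

end Final

theorem stmt_1 (k : ℕ) (hk : 7 ≤ k) (hodd : Odd k) :
    ∃ B : ℝ, ∀ (V : Type) [Fintype V] [DecidableEq V] (H : SimpleGraph V)
      [DecidableRel H.Adj], (∀ v : V, 0 < H.degree v) →
      (ramseyNumber (SimpleGraph.cycleGraph k) H : ℝ) ≤
        2 * H.edgeFinset.card +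
          max (⌊B - Real.sqrt (H.edgeFinset.card)⌋ : ℤ) ⌊(k : ℝ) / 2⌋ := by
  obtain ⟨t, rfl⟩ := hodd
  have ht : 3 ≤ t := by omega
  obtain ⟨B0, hB0⟩ := main_emb t ht
  refine ⟨B0 + 1, ?_⟩
  intro V _ _ H _ hdeg
  have hDD := DD_univ V H
  set m := H.edgeFinset.card with hm
  have hram : ramseyNumber (SimpleGraph.cycleGraph (2 * t + 1)) H ≤ 2 * m + phi B0 t (2 * m) := by
    apply Nat.sInf_le
    intro G
    by_contra hcon
    rw [not_or] at hcon
    have hphi := le_phi B0 t (2 * m)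
    haveI : Nonempty (Fin (2 * m + phi B0 t (2 * m))) := ⟨⟨0, by omega⟩⟩
    have hV : Fintype.card V ≤ 2 * m := by
      rw [hm, ← H.sum_degrees_eq_twice_card_edges]
      have := Finset.sum_le_sum (s := Finset.univ) (f := fun _ : V => 1) (g := fun v => H.degree v) (fun v _ => hdeg v)
      simpa using this
    obtain ⟨f, hf1, -, hf3⟩ := hB0 V _ H G hcon.1 (2 * m) Finset.univ Finset.univ hDD (by simp) (by
      rw [Finset.card_univ, Finset.card_univ, Fintype.card_fin]; omega)
    have hinj : Function.Injective f := by
      intro a b hab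
      exact hf1 (by simp) (by simp) hab
    refine hcon.2 ⟨⟨f, ?_⟩, hinj⟩
    intro a b hab
    rw [SimpleGraph.compl_adj]
    exact ⟨hinj.ne hab.ne, hf3 a (by simp) b (by simp) hab⟩
  have hfl : ⌊((2 * t + 1 : ℕ) : ℝ) / 2⌋ = (t : ℤ) := by
    rw [Int.floor_eq_iff]
    push_cast
    constructor <;> linarith
  rw [hfl]
  have h1 := final_arith B0 t m
  have h2 : (ramseyNumber (SimpleGraph.cycleGraph (2 * t + 1)) H : ℤ) ≤ 2 * m + max ⌊((B0 : ℝ) + 1) - Real.sqrt m⌋ (t : ℤ) :=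
    le_trans (by exact_mod_cast hram) h1
  exact_mod_cast h2
end

section
/- For every integer k ≥ 1 and every finite graph H, R(P_k, H) ≤ |H| + k·(χ(H) − 1), where |H| is the number of vertices of H and χ(H) is its chromatic number. -/
theorem dfs_aux {W : Type*} [DecidableEq W] (C : SimpleGraph W) (k a b : ℕ)
    (hP : ∀ l : List W, l.Nodup → l.IsChain C.Adj → l.length < k) (X : Finset W) :
    ∀ (m : ℕ) (D U : Finset W) (l : List W), 2 * U.card + l.length = m → D.card ≤ a →
      D ⊆ X → U ⊆ X → (∀ x ∈ l, x ∈ X) →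
      Disjoint D U → l.Nodup → l.IsChain C.Adj → (∀ x ∈ l, x ∉ U ∧ x ∉ D) →
      a + b + k ≤ D.card + U.card + l.length + 1 →
      (∀ x ∈ D, ∀ y ∈ U, ¬ C.Adj x y) →
      ∃ A B : Finset W, A ⊆ X ∧ B ⊆ X ∧ Disjoint A B ∧ A.card = a ∧ b ≤ B.card ∧
        ∀ x ∈ A, ∀ y ∈ B, ¬ C.Adj x y := by
  intro m
  induction m using Nat.strong_induction_on with
  | _ m ih =>
  intro D U l hm hDa hDX hUX hlX hDU hnd hch hl hcard hno
  have hlk := hP l hnd hch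
  by_cases hD : D.card = a
  · exact ⟨D, U, hDX, hUX, hDU, hD, by omega, hno⟩
  have push : ∀ u ∈ U, (u :: l).IsChain C.Adj → 
      ∃ A B : Finset W, A ⊆ X ∧ B ⊆ X ∧ Disjoint A B ∧ A.card = a ∧ b ≤ B.card ∧
        ∀ x ∈ A, ∀ y ∈ B, ¬ C.Adj x y := by
    intro u hu hc
    have h1 := Finset.card_erase_add_one hu
    refine ih (m - 1) (by omega) D (U.erase u) (u :: l) ?_ hDa hDX
      ((Finset.erase_subset _ _).trans hUX) ?_ ?_ ?_ hc ?_ ?_ ?_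
    · simp only [List.length_cons]; omega
    · intro x hx
      rcases List.mem_cons.1 hx with rfl | hx
      · exact hUX hu
      · exact hlX x hx
    · exact hDU.mono_right (Finset.erase_subset _ _)
    · exact List.nodup_cons.2 ⟨fun h => (hl u h).1 hu, hnd⟩
    · intro x hx
      rcases List.mem_cons.1 hx with rfl | hx
      · exact ⟨by simp, fun h => (Finset.disjoint_left.1 hDU h) hu⟩
      · exact ⟨fun h => (hl x hx).1 (Finset.mem_of_mem_erase h), (hl x hx).2⟩
    · simp only [List.length_cons]; omega
    · intro x hx y hy
      exact hno x hx y (Finset.mem_of_mem_erase hy)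
  cases l with
  | nil =>
    have : U.Nonempty := by
      rw [← Finset.card_pos]
      simp only [List.length_nil] at *
      omega
    obtain ⟨u, hu⟩ := this
    exact push u hu (by simp)
  | cons v l =>
    by_cases hv : ∃ u ∈ U, C.Adj u v
    · obtain ⟨u, hu, huv⟩ := hv
      exact push u hu (List.isChain_cons_cons.2 ⟨huv, hch⟩)
    · push Not at hv
      have hvl := hl v (by simp)
      have h1 := Finset.card_insert_of_notMem hvl.2
      have hnd' := List.nodup_cons.1 hnd
      simp only [List.length_cons] at *
      refine ih (m - 1) (by omega) (insert v D) U l (by omega) (by omega) ?_ hUX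
        (fun x hx => hlX x (List.mem_cons_of_mem _ hx)) ?_ hnd'.2 hch.tail ?_ (by omega) ?_
      · exact Finset.insert_subset (hlX v (by simp)) hDX
      · exact Finset.disjoint_insert_left.2 ⟨hvl.1, hDU⟩
      · intro x hx
        have := hl x (List.mem_cons_of_mem _ hx)
        refine ⟨this.1, fun h => ?_⟩
        rcases Finset.mem_insert.1 h with rfl | h
        · exact hnd'.1 hx
        · exact this.2 h
      · intro x hx y hy
        rcases Finset.mem_insert.1 hx with rfl | hx
        · exact fun h => hv y hy h.symm
        · exact hno x hx y hy

theorem embed_aux {W V : Type*} [DecidableEq W] [Nonempty W] (C : SimpleGraph W) (k : ℕ)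
    (hP : ∀ l : List W, l.Nodup → l.IsChain C.Adj → l.length < k) (c : V → ℕ) :
    ∀ (r : ℕ) (S : Finset V) (X : Finset W), (∀ v ∈ S, c v < r + 1) →
      S.card + k * r ≤ X.card →
      ∃ f : V → W, Set.InjOn f S ∧ (∀ v ∈ S, f v ∈ X) ∧
        ∀ u ∈ S, ∀ v ∈ S, c u ≠ c v → ¬ C.Adj (f u) (f v) := by
  have inj : ∀ (S : Finset V) (X : Finset W), S.card ≤ X.card → 
      ∃ f : V → W, Set.InjOn f S ∧ (∀ v ∈ S, f v ∈ X) := by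
    intro S X h
    obtain ⟨f, h1, h2⟩ := S.finite_toSet.exists_injOn_of_encard_le (t := (X : Set W))
      (by simpa using h)
    exact ⟨f, h2, fun v hv => h1 hv⟩
  intro r
  induction r with
  | zero =>
    intro S X hS h
    obtain ⟨f, h1, h2⟩ := inj S X (by simpa using h)
    exact ⟨f, h1, h2, fun u hu v hv huv => absurd (by have := hS u hu; have := hS v hv; omega) huv⟩
  | succ r ih =>
    intro S X hS h
    classical
    have hk : 0 < k := by simpa using hP [] (by simp) (by simp)
    set S1 := S.filter (fun v => c v = r + 1) with hS1
    set S2 := S.filter (fun v => ¬ c v = r + 1) with hS2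
    have hc : S1.card + S2.card = S.card := Finset.card_filter_add_card_filter_not _
    obtain ⟨A, B, hA, hB, hAB, hAc, hBc, hno⟩ := dfs_aux C k S1.card (S2.card + k * r) hP X _
      ∅ X [] rfl (by simp) (by simp) subset_rfl (by simp) (by simp) (by simp) (by simp) (by simp)
      (by simp; rw [Nat.mul_succ] at h; omega) (by simp)
    obtain ⟨g, g1, g2, g3⟩ := ih S2 B (by
      intro v hv
      rw [hS2, Finset.mem_filter] at hv
      have := hS v hv.1
      omega) hBc
    obtain ⟨f, f1, f2⟩ := inj S1 A hAc.ge
    have m1 : ∀ v ∈ S, c v = r + 1 → v ∈ S1 := fun v hv h => Finset.mem_filter.2 ⟨hv, h⟩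
    have m2 : ∀ v ∈ S, c v ≠ r + 1 → v ∈ S2 := fun v hv h => Finset.mem_filter.2 ⟨hv, h⟩
    have hd : ∀ x ∈ A, ∀ y ∈ B, x ≠ y := fun x hx y hy e =>
      Finset.disjoint_left.1 hAB hx (e ▸ hy)
    refine ⟨fun v => if c v = r + 1 then f v else g v, ?_, ?_, ?_⟩
    · intro u hu v hv e
      by_cases cu : c u = r + 1 <;> by_cases cv : c v = r + 1 <;> simp only [cu, cv, if_true, if_false] at e
      · exact f1 (m1 u hu cu) (m1 v hv cv) e
      · exact absurd e (hd _ (f2 u (m1 u hu cu)) _ (g2 v (m2 v hv cv)))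
      · exact absurd e.symm (hd _ (f2 v (m1 v hv cv)) _ (g2 u (m2 u hu cu)))
      · exact g1 (m2 u hu cu) (m2 v hv cv) e
    · intro v hv
      by_cases cv : c v = r + 1 <;> simp only [cv, if_true, if_false]
      · exact hA (f2 v (m1 v hv cv))
      · exact hB (g2 v (m2 v hv cv))
    · intro u hu v hv huv
      by_cases cu : c u = r + 1 <;> by_cases cv : c v = r + 1 <;> simp only [cu, cv, if_true, if_false]
      · exact absurd (cu.trans cv.symm) huv
      · exact hno _ (f2 u (m1 u hu cu)) _ (g2 v (m2 v hv cv))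
      · exact fun e => hno _ (f2 v (m1 v hv cv)) _ (g2 u (m2 u hu cu)) e.symm
      · exact g3 u (m2 u hu cu) v (m2 v hv cv) huv

theorem stmt_2 (k : ℕ) (hk : 1 ≤ k) (V : Type) [Fintype V] (H : SimpleGraph V) :
    ramseyNumber (SimpleGraph.pathGraph k) H ≤
      Fintype.card V + k * (H.chromaticNumber.toNat - 1) := by
  apply Nat.sInf_le
  intro C
  rw [or_iff_not_imp_left]
  intro hC
  have hP : ∀ l : List (Fin (Fintype.card V + k * (H.chromaticNumber.toNat - 1))),
      l.Nodup → l.IsChain C.Adj → l.length < k := by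
    intro l hnd hch
    by_contra hlt
    push Not at hlt
    apply hC
    have hstep := List.isChain_iff_getElem.1 hch
    refine ⟨⟨fun i => l[i.1]'(by omega), ?_⟩, ?_⟩
    · intro i j hij
      rw [SimpleGraph.pathGraph_adj] at hij
      obtain ⟨i, hi⟩ := i
      obtain ⟨j, hj⟩ := j
      rcases hij with h | h
      · simp only at h
        subst h
        exact hstep i (by omega)
      · simp only at h
        subst h
        exact (hstep j (by omega)).symm
    · intro i j hij
      exact Fin.ext ((List.Nodup.getElem_inj_iff hnd).1 hij)
  cases isEmpty_or_nonempty V with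
  | inl hV =>
    exact ⟨⟨fun v => hV.elim v, fun {v} => hV.elim v⟩, fun v => hV.elim v⟩
  | inr hV =>
    have hpos : 0 < Fintype.card V := Fintype.card_pos
    haveI : Nonempty (Fin (Fintype.card V + k * (H.chromaticNumber.toNat - 1))) := ⟨⟨0, by omega⟩⟩
    obtain ⟨c⟩ : H.Colorable H.chromaticNumber.toNat :=
      SimpleGraph.colorable_chromaticNumber (SimpleGraph.colorable_of_fintype H)
    obtain ⟨f, f1, -, f3⟩ := embed_aux C k hP (fun v => (c v : ℕ)) (H.chromaticNumber.toNat - 1)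
      Finset.univ Finset.univ (fun v _ => by have := (c v).2; omega) (by simp)
    have finj : Function.Injective f := fun u v h => f1 (by simp) (by simp) h
    refine ⟨⟨f, fun {u v} huv => ?_⟩, finj⟩
    rw [SimpleGraph.compl_adj]
    exact ⟨fun e => huv.ne (finj e), f3 u (by simp) v (by simp)
      (fun e => c.valid huv (Fin.ext e))⟩
end

section
/- For all integers k ≥ 1, t ≥ 1 and all positive integers n₁, n₂, …, n_t, the Ramsey number of the path on k vertices versus the complete t-partite graph with parts of sizes n₁, …, n_t satisfies R(P_k, K_{n₁,…,n_t}) ≤ k·(t−1) + n₁ + n₂ + ⋯ + n_t. -/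
lemma path_of_list {V : Type*} (C : SimpleGraph V) (k : ℕ) (L : List V)
    (hL : L.IsChain C.Adj) (hnd : L.Nodup) (hk : k ≤ L.length) :
    HasCopy (SimpleGraph.pathGraph k) C := by
  have key : ∀ (i : ℕ) (h : i + 1 < L.length), C.Adj (L[i]) (L[i+1]) := by
    intro i h
    exact List.isChain_iff_getElem.mp hL i h
  refine ⟨⟨fun i => L[i.val]'(by omega), ?_⟩, ?_⟩
  · intro a b hab
    rw [SimpleGraph.pathGraph_adj] at hab
    rcases hab with h | h
    · have := key a.val (by omega)
      simp only [h] at this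
      exact this
    · have := key b.val (by omega)
      simp only [h] at this
      exact this.symm
  · intro a b hab
    have : L[a.val]'(by omega) = L[b.val]'(by omega) := hab
    exact Fin.ext ((hnd.getElem_inj_iff).mp this)

def DState {V : Type*} (C : SimpleGraph V) (S : Finset V) (L : List V) (T : Finset V) : Prop :=
  L.IsChain C.Adj ∧ L.Nodup ∧ (∀ x ∈ L, x ∈ S) ∧ T ⊆ S ∧ (∀ x ∈ L, x ∉ T) ∧
    ∀ a ∈ T, ∀ b ∈ S, b ∉ T → b ∉ L → ¬ C.Adj a b

lemma dfs {V : Type*} [DecidableEq V] (C : SimpleGraph V) (k : ℕ)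
    (hC : ¬ HasCopy (SimpleGraph.pathGraph k) C) (S : Finset V) (m : ℕ) (hm : m ≤ S.card) :
    ∃ L T, DState C S L T ∧ T.card = m := by
  induction m with
  | zero => exact ⟨[], ∅, by simp [DState], rfl⟩
  | succ m ih =>
    obtain ⟨L₀, T₀, h₀, c₀⟩ := ih (by omega)
    let Q : ℕ → Prop := fun l => ∃ L T, DState C S L T ∧ T.card = m ∧ L.length = l
    classical
    have hQ : Q (Nat.findGreatest Q k) := by
      refine Nat.findGreatest_spec (P := Q) (m := L₀.length) ?_ ⟨L₀, T₀, h₀, c₀, rfl⟩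
      by_contra h
      exact hC (path_of_list C k L₀ h₀.1 h₀.2.1 (by omega))
    obtain ⟨L, T, h, c, hl⟩ := hQ
    have hmax : ¬ Q (L.length + 1) := by
      intro hq
      have h1 : L.length + 1 ≤ k := by
        by_contra hh
        exact hC (path_of_list C k L h.1 h.2.1 (by omega))
      have := Nat.le_findGreatest h1 hq
      omega
    obtain ⟨h1, h2, h3, h4, h5, h6⟩ := h
    cases L with
    | nil =>
      exfalso
      obtain ⟨x, hx, hxT⟩ : ∃ x ∈ S, x ∉ T := Finset.exists_mem_notMem_of_card_lt_card (by omega)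
      refine hmax ⟨[x], T, ⟨by simp, by simp, by simpa using hx, h4, by simpa using hxT, ?_⟩, c, rfl⟩
      intro a ha b hb hbT _
      exact h6 a ha b hb hbT (by simp)
    | cons v L =>
      refine ⟨L, insert v T, ⟨h1.tail, (List.nodup_cons.mp h2).2, fun x hx => h3 x (by simp [hx]), ?_, ?_, ?_⟩, ?_⟩
      · exact Finset.insert_subset (h3 v (by simp)) h4
      · intro x hx hx'
        rcases Finset.mem_insert.mp hx' with rfl | hx'
        · exact (List.nodup_cons.mp h2).1 hx
        · exact h5 x (by simp [hx]) hx'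
      · intro a ha b hb hbT hbL hab
        simp only [Finset.mem_insert, not_or] at hbT
        rcases Finset.mem_insert.mp ha with rfl | ha
        · refine hmax ⟨b :: a :: L, T, ⟨?_, ?_, ?_, h4, ?_, ?_⟩, c, rfl⟩
          · exact List.isChain_cons_cons.mpr ⟨hab.symm, h1⟩
          · exact List.nodup_cons.mpr ⟨by simp [hbT.1, hbL], h2⟩
          · intro x hx
            rcases List.mem_cons.mp hx with rfl | hx
            · exact hb
            · exact h3 x hx
          · intro x hx
            rcases List.mem_cons.mp hx with rfl | hx
            · exact hbT.2
            · exact h5 x hx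
          · intro a' ha' b' hb' hbT' hbL'
            exact h6 a' ha' b' hb' hbT' (fun hh => hbL' (List.mem_cons_of_mem _ hh))
        · exact h6 a ha b hb hbT.2 (by simp [hbT.1, hbL]) hab
      · rw [Finset.card_insert_of_notMem (h5 v (by simp)), c]

lemma parts {V : Type*} [DecidableEq V] (C : SimpleGraph V) (k : ℕ)
    (hC : ¬ HasCopy (SimpleGraph.pathGraph k) C) (t : ℕ) :
    ∀ (n : Fin (t + 1) → ℕ) (S : Finset V), k * t + ∑ i, n i ≤ S.card →
    ∃ A : Fin (t + 1) → Finset V, (∀ i, A i ⊆ S) ∧ (∀ i, (A i).card = n i) ∧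
      ∀ i j, i ≠ j → ∀ a ∈ A i, ∀ b ∈ A j, a ≠ b ∧ ¬ C.Adj a b := by
  induction t with
  | zero =>
    intro n S hS
    obtain ⟨T, hT, hc⟩ := Finset.exists_subset_card_eq (s := S) (n := n 0) (by simpa using hS)
    refine ⟨fun _ => T, fun _ => hT, fun i => ?_, fun i j hij => ?_⟩
    · rw [show i = 0 from Fin.ext (by omega)]; exact hc
    · exact absurd (Fin.ext (by omega)) hij
  | succ t ih =>
    intro n S hS
    rw [Fin.sum_univ_succ, Nat.mul_succ] at hS
    obtain ⟨L, T, ⟨h1, h2, h3, h4, h5, h6⟩, c⟩ := dfs C k hC S (n 0) (by omega)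
    have hLk : L.length ≤ k := by
      by_contra h
      exact hC (path_of_list C k L h1 h2 (by omega))
    have e1 := Finset.le_card_sdiff T S
    have e2 := Finset.le_card_sdiff L.toFinset (S \ T)
    have e3 := L.toFinset_card_le
    obtain ⟨A, hA, hc, hd⟩ := ih (fun i => n i.succ) ((S \ T) \ L.toFinset) (by omega)
    have cross : ∀ a ∈ T, ∀ j, ∀ b ∈ A j, a ≠ b ∧ ¬ C.Adj a b := by
      intro a ha j b hb
      have := hA j hb
      simp only [Finset.mem_sdiff, List.mem_toFinset] at this
      refine ⟨?_, h6 a ha b this.1.1 this.1.2 this.2⟩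
      rintro rfl
      exact this.1.2 ha
    refine ⟨Fin.cons T A, ?_, ?_, ?_⟩
    · intro i
      refine Fin.cases ?_ (fun i => ?_) i
      · exact h4
      · exact (hA i).trans (Finset.sdiff_subset.trans Finset.sdiff_subset)
    · intro i
      refine Fin.cases ?_ (fun i => ?_) i
      · exact c
      · exact hc i
    · intro i j
      refine Fin.cases ?_ (fun i => ?_) i <;> refine Fin.cases ?_ (fun j => ?_) j
      · intro h; exact absurd rfl h
      · intro _ a ha b hb
        exact cross a ha j b hb
      · intro _ a ha b hb
        have := cross b hb i a ha
        exact ⟨this.1.symm, fun h => this.2 h.symm⟩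
      · intro h a ha b hb
        exact hd i j (fun hh => h (by rw [hh])) a ha b hb

theorem stmt_3 (k t : ℕ) (hk : 1 ≤ k) (ht : 1 ≤ t) (n : Fin t → ℕ) (hn : ∀ i, 1 ≤ n i) :
    ramseyNumber (SimpleGraph.pathGraph k)
        (SimpleGraph.completeMultipartiteGraph (fun i : Fin t => Fin (n i))) ≤
      k * (t - 1) + ∑ i, n i := by
  obtain ⟨t, rfl⟩ : ∃ s, t = s + 1 := ⟨t - 1, by omega⟩
  apply Nat.sInf_le
  intro C
  by_cases hC : HasCopy (SimpleGraph.pathGraph k) C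
  · exact Or.inl hC
  right
  obtain ⟨A, -, hc, hd⟩ := parts C k hC t n Finset.univ (by simp)
  let f : (Σ i : Fin (t + 1), Fin (n i)) → _ :=
    fun p => (((A p.1).equivFinOfCardEq (hc p.1)).symm p.2).1
  have hf : ∀ p, f p ∈ A p.1 := fun p => Subtype.property _
  refine ⟨⟨f, ?_⟩, ?_⟩
  · intro p q hpq
    have hne : p.1 ≠ q.1 := by simpa [SimpleGraph.completeMultipartiteGraph] using hpq
    rw [SimpleGraph.compl_adj]
    exact hd _ _ hne _ (hf p) _ (hf q)
  · intro p q hpq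
    have hpq : f p = f q := hpq
    by_cases hne : p.1 = q.1
    · obtain ⟨i, x⟩ := p
      obtain ⟨j, y⟩ := q
      obtain rfl : i = j := hne
      have this : x = y := ((A i).equivFinOfCardEq (hc i)).symm.injective (Subtype.ext hpq)
      rw [this]
    · exact absurd hpq (hd _ _ hne _ (hf p) _ (hf q)).1
end

section
/- For all integers k ≥ 1 and positive integers n₁, n₂, the Ramsey number of the path on k vertices versus the complete bipartite graph with parts of sizes n₁ and n₂ satisfies R(P_k, K_{n₁,n₂}) ≤ k + n₁ + n₂ − 2. -/
theorem aux_path {N k : ℕ} (C : SimpleGraph (Fin N)) (l : List (Fin N)) (hl : l.length = k)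
    (hc : l.IsChain C.Adj) (hn : l.Nodup) : HasCopy (SimpleGraph.pathGraph k) C := by
  subst hl
  refine ⟨⟨fun i => l[i.val], ?_⟩, ?_⟩
  · intro a b hab
    rw [SimpleGraph.pathGraph_adj] at hab
    rw [List.isChain_iff_getElem] at hc
    rcases hab with h | h
    · have := hc a.val (by omega)
      simpa [h] using this
    · have := hc b.val (by omega)
      simpa [h] using this.symm
  · intro a b hab
    exact Fin.ext ((List.Nodup.getElem_inj_iff hn).1 hab)

def AuxState {N : ℕ} (C : SimpleGraph (Fin N)) (d : ℕ) (l : List (Fin N))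
    (D : Finset (Fin N)) : Prop :=
  l.IsChain C.Adj ∧ l.Nodup ∧ D.card = d ∧ (∀ x ∈ l, x ∉ D) ∧
    ∀ x ∈ D, ∀ y, y ∉ D → y ∉ l → ¬ C.Adj x y

theorem aux_free {N : ℕ} (l : List (Fin N)) (D : Finset (Fin N)) (m : ℕ)
    (h : D.card + l.length + m ≤ N) :
    ∃ U : Finset (Fin N), U.card = m ∧ ∀ x ∈ U, x ∉ D ∧ x ∉ l := by
  have h1 : (D ∪ l.toFinset).card ≤ D.card + l.length :=
    (Finset.card_union_le _ _).trans (Nat.add_le_add_left l.toFinset_card_le _)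
  have h2 : m ≤ (D ∪ l.toFinset)ᶜ.card := by
    rw [Finset.card_compl, Fintype.card_fin]; omega
  obtain ⟨U, hU, hc⟩ := Finset.exists_subset_card_eq h2
  refine ⟨U, hc, fun x hx => ?_⟩
  have := hU hx
  simpa using this

theorem aux_step {N k d : ℕ} (C : SimpleGraph (Fin N)) (hk : 1 ≤ k) (hN : d + k ≤ N)
    (hno : ¬ HasCopy (SimpleGraph.pathGraph k) C) :
    ∀ (m : ℕ) (l : List (Fin N)) (D : Finset (Fin N)), AuxState C d l D → l.length + 1 + m = k →
      ∃ l' D', AuxState C (d+1) l' D' ∧ l'.length + 2 ≤ k := by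
  have ext : ∀ (l : List (Fin N)) (D : Finset (Fin N)) (u : Fin N), AuxState C d l D → u ∉ D →
      u ∉ l → (u :: l).IsChain C.Adj → AuxState C d (u :: l) D := by
    rintro l D u ⟨hc, hn, hd, hdis, hadj⟩ huD hul hch
    refine ⟨hch, List.nodup_cons.2 ⟨hul, hn⟩, hd, ?_, ?_⟩
    · intro x hx
      rcases List.mem_cons.1 hx with rfl | h
      · exact huD
      · exact hdis x h
    · intro x hx y hy hyl
      exact hadj x hx y hy (fun h => hyl (List.mem_cons_of_mem _ h))
  intro m
  induction m with
  | zero =>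
    intro l D hs hl
    cases l with
    | nil =>
      obtain ⟨U, hU, hU'⟩ := aux_free [] D 1 (by have := hs.2.2.1; simp at *; omega)
      obtain ⟨u, rfl⟩ := Finset.card_eq_one.1 hU
      exact absurd (aux_path C [u] (by simpa using hl) (by simp) (by simp)) hno
    | cons a t =>
      refine ⟨t, insert a D, ?_, by simp at hl; omega⟩
      have hs' := hs
      obtain ⟨hc, hn, hd, hdis, hadj⟩ := hs
      have haD : a ∉ D := hdis a (by simp)
      rw [List.nodup_cons] at hn
      refine ⟨hc.tail, hn.2, by rw [Finset.card_insert_of_notMem haD, hd], ?_, ?_⟩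
      · intro x hx hx'
        rcases Finset.mem_insert.1 hx' with rfl | h
        · exact hn.1 hx
        · exact hdis x (List.mem_cons_of_mem _ hx) h
      · intro x hx y hy hyt hxy
        rw [Finset.mem_insert, not_or] at hy
        have hyl : y ∉ a :: t := by simp [hy.1, hyt]
        rcases Finset.mem_insert.1 hx with rfl | h
        · have h3 := ext _ D y hs' hy.2 hyl (List.IsChain.cons_cons hxy.symm hc)
          exact hno (aux_path C _ (by simp at hl ⊢; omega) h3.1 h3.2.1)
        · exact hadj x h y hy.2 hyl hxy
  | succ m ih =>
    intro l D hs hl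
    by_cases hex : ∃ u, u ∉ D ∧ u ∉ l ∧ (u :: l).IsChain C.Adj
    · obtain ⟨u, hu, hul, hc⟩ := hex
      exact ih (u :: l) D (ext l D u hs hu hul hc) (by simp; omega)
    push Not at hex
    cases l with
    | nil =>
      obtain ⟨U, hU, hU'⟩ := aux_free [] D 1 (by have := hs.2.2.1; simp at *; omega)
      obtain ⟨u, rfl⟩ := Finset.card_eq_one.1 hU
      exact absurd (by simp) (hex u (hU' u (by simp)).1 (by simp))
    | cons a t =>
      refine ⟨t, insert a D, ?_, by simp at hl; omega⟩
      obtain ⟨hc, hn, hd, hdis, hadj⟩ := hs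
      have haD : a ∉ D := hdis a (by simp)
      rw [List.nodup_cons] at hn
      refine ⟨hc.tail, hn.2, by rw [Finset.card_insert_of_notMem haD, hd], ?_, ?_⟩
      · intro x hx hx'
        rcases Finset.mem_insert.1 hx' with rfl | h
        · exact hn.1 hx
        · exact hdis x (List.mem_cons_of_mem _ hx) h
      · intro x hx y hy hyt hxy
        rw [Finset.mem_insert, not_or] at hy
        have hyl : y ∉ a :: t := by simp [hy.1, hyt]
        rcases Finset.mem_insert.1 hx with rfl | h
        · exact hex y hy.2 hyl (List.IsChain.cons_cons hxy.symm hc)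
        · exact hadj x h y hy.2 hyl hxy

theorem stmt_4 (k n₁ n₂ : ℕ) (hk : 1 ≤ k) (h₁ : 1 ≤ n₁) (h₂ : 1 ≤ n₂) :
    ramseyNumber (SimpleGraph.pathGraph k) (completeBipartiteGraph (Fin n₁) (Fin n₂)) ≤
      k + n₁ + n₂ - 2 := by
  apply Nat.sInf_le
  intro C
  by_cases hno : HasCopy (SimpleGraph.pathGraph k) C
  · exact Or.inl hno
  right
  have key : ∀ d, d + 1 ≤ n₁ → ∃ l D, AuxState C (d+1) l D ∧ l.length + 2 ≤ k := by
    intro d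
    induction d with
    | zero =>
      intro hd
      refine aux_step C hk (by omega) hno (k-1) [] ∅ ?_ (by simp; omega)
      simp [AuxState]
    | succ d ih =>
      intro hd
      obtain ⟨l, D, hs, hl⟩ := ih (by omega)
      exact aux_step C hk (by omega) hno (k - 1 - l.length) l D hs (by omega)
  obtain ⟨l, D, ⟨-, -, hd, hdis, hadj⟩, hl⟩ := key (n₁ - 1) (by omega)
  obtain ⟨U, hU, hU'⟩ := aux_free l D n₂ (by omega)
  have hd' : D.card = n₁ := by omega
  have hne : ∀ i j, D.orderEmbOfFin hd' i ≠ U.orderEmbOfFin hU j := fun i j h =>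
    (hU' _ (U.orderEmbOfFin_mem hU j)).1 (h ▸ D.orderEmbOfFin_mem hd' i)
  have hna : ∀ i j, ¬ C.Adj (D.orderEmbOfFin hd' i) (U.orderEmbOfFin hU j) := fun i j =>
    hadj _ (D.orderEmbOfFin_mem hd' i) _ (hU' _ (U.orderEmbOfFin_mem hU j)).1
      (hU' _ (U.orderEmbOfFin_mem hU j)).2
  refine ⟨⟨Sum.elim (D.orderEmbOfFin hd') (U.orderEmbOfFin hU), ?_⟩, ?_⟩
  · rintro (a | a) (b | b) hab
    · simp at hab
    · exact (SimpleGraph.compl_adj _ _ _).2 ⟨hne a b, hna a b⟩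
    · exact (SimpleGraph.compl_adj _ _ _).2 ⟨(hne b a).symm, fun h => hna b a h.symm⟩
    · simp at hab
  · exact Function.Injective.sumElim (D.orderEmbOfFin hd').injective
      (U.orderEmbOfFin hU).injective hne
end

section
/- Let k ≥ 5 be an integer, let G be a graph and let v be a vertex of G. If the subgraph of G induced on the second neighbourhood of v contains a path on 2k vertices as a subgraph, then G contains a cycle on k vertices as a subgraph. -/
/-- The second neighbourhood of `v` in `G`: the vertices outside `N(v) ∪ {v}` that are
adjacent to some vertex of `N(v)`. -/
def secondNeighborSet {V : Type*} (G : SimpleGraph V) (v : V) : Set V :=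
  {w | w ∉ G.neighborSet v ∧ w ≠ v ∧ ∃ u ∈ G.neighborSet v, G.Adj u w}

theorem cyc_aux {V : Type*} (G : SimpleGraph V) (k : ℕ) (hk : 5 ≤ k) (f : ℕ → V)
    (h1 : ∀ i, i + 1 < k → G.Adj (f i) (f (i+1))) (h2 : G.Adj (f (k-1)) (f 0))
    (h3 : ∀ i j, i < j → j < k → f i ≠ f j) : HasCopy (SimpleGraph.cycleGraph k) G := by
  obtain ⟨n, rfl⟩ : ∃ n, k = n + 2 := ⟨k - 2, by omega⟩
  have key : ∀ a b : Fin (n+2), a - b = 1 → G.Adj (f b) (f a) := by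
    intro a b hab
    have hab' : a = b + 1 := by rw [← hab]; abel
    subst hab'
    by_cases hb : b = Fin.last (n+1)
    · subst hb
      simpa using h2
    · have hlt : b < Fin.last (n+1) := Fin.lt_last_iff_ne_last.mpr hb
      rw [Fin.val_add_one_of_lt hlt]
      apply h1
      have := Fin.lt_def.mp hlt
      simp at this
      omega
  refine ⟨⟨fun i => f i.val, ?_⟩, ?_⟩
  · intro a b hab
    rw [SimpleGraph.cycleGraph_adj] at hab
    rcases hab with h | h
    · exact (key a b h).symm
    · exact key b a h
  · intro a b hab
    have hab' : f a.val = f b.val := hab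
    rcases lt_trichotomy a.val b.val with h | h | h
    · exact absurd hab' (h3 _ _ h b.2)
    · exact Fin.ext h
    · exact absurd hab'.symm (h3 _ _ h a.2)

theorem stmt_6 (k : ℕ) (hk : 5 ≤ k) (V : Type*) (G : SimpleGraph V) (v : V)
    (h : HasCopy (SimpleGraph.pathGraph (2 * k)) (G.induce (secondNeighborSet G v))) :
    HasCopy (SimpleGraph.cycleGraph k) G := by
  obtain ⟨m, rfl⟩ : ∃ m, k = m + 4 := ⟨k - 4, by omega⟩
  obtain ⟨g, hg⟩ := h
  let p : ℕ → V := fun i => if h : i < 2 * (m+4) then (g ⟨i, h⟩).1 else v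
  have hpe : ∀ i (h : i < 2 * (m+4)), p i = (g ⟨i, h⟩).1 := fun i h => dif_pos h
  have hpadj : ∀ i, i + 1 < 2 * (m+4) → G.Adj (p i) (p (i+1)) := by
    intro i hi
    rw [hpe i (by omega), hpe (i+1) hi]
    have : (SimpleGraph.pathGraph (2 * (m+4))).Adj ⟨i, by omega⟩ ⟨i+1, hi⟩ := by
      rw [SimpleGraph.pathGraph_adj]; left; rfl
    exact g.map_rel this
  have hpinj : ∀ i j, i < j → j < 2 * (m+4) → p i ≠ p j := by
    intro i j hij hj h
    rw [hpe i (by omega), hpe j hj] at h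
    have := hg (Subtype.ext h)
    simp at this
    omega
  have hps : ∀ i, i < 2 * (m+4) → p i ∈ secondNeighborSet G v := by
    intro i hi
    rw [hpe i hi]
    exact (g ⟨i, hi⟩).2
  have hpv : ∀ i, i < 2 * (m+4) → p i ≠ v := fun i hi => (hps i hi).2.1
  have hex : ∀ i, ∃ u, i < 2 * (m+4) → G.Adj v u ∧ G.Adj u (p i) := by
    intro i
    by_cases hi : i < 2 * (m+4)
    · obtain ⟨u, hu, hu'⟩ := (hps i hi).2.2
      exact ⟨u, fun _ => ⟨hu, hu'⟩⟩
    · exact ⟨v, fun h => absurd h hi⟩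
  choose u hu using hex
  have huv : ∀ i, i < 2 * (m+4) → G.Adj v (u i) := fun i hi => (hu i hi).1
  have hup : ∀ i, i < 2 * (m+4) → G.Adj (u i) (p i) := fun i hi => (hu i hi).2
  have hne : ∀ i, i < 2 * (m+4) → u i ≠ v := fun i hi => (huv i hi).ne'
  have hnp : ∀ i j, i < 2 * (m+4) → j < 2 * (m+4) → p j ≠ u i := by
    intro i j hi hj h
    exact (hps j hj).1 (h ▸ huv i hi)
  by_contra hno
  have per : ∀ i, i + m < 2 * (m+4) → u i = u (i+m) := by
    intro i hi
    by_contra hd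
    apply hno
    apply cyc_aux G (m+4) hk (fun j => if j ≤ m then p (i+j) else if j = m+1 then u (i+m)
      else if j = m+2 then v else u i)
    · intro j hj
      rcases lt_trichotomy j m with h | h | h
      · have := hpadj (i+j) (by omega)
        simp [h.le, Nat.succ_le_of_lt h]
        exact this
      · subst h
        simpa using (hup _ hi).symm
      · obtain rfl | rfl : j = m+1 ∨ j = m+2 := by omega
        · simpa using (huv _ hi).symm
        · simpa using huv i (by omega)
    · simpa using hup i (by omega)
    · intro a b hab hb
      have e1 := hnp i (i+a) (by omega)
      have e2 := hnp (i+m) (i+a) (by omega)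
      have e3 := hpv (i+a)
      have e4 := hpinj (i+a) (i+b) (by omega)
      have e5 := hne i (by omega)
      have e6 := hne (i+m) (by omega)
      grind
  have hd0 : u 0 ≠ u (m+2) := by
    intro he
    apply hno
    apply cyc_aux G (m+4) hk (fun j => if j ≤ m+2 then p j else u 0)
    · intro j hj
      by_cases h : j < m+2
      · have := hpadj j (by omega)
        simp [h.le, Nat.succ_le_of_lt h]
        grind
      · obtain rfl : j = m+2 := by omega
        simpa [he] using (hup (m+2) (by omega)).symm
    · simpa using hup 0 (by omega)
    · intro a b hab hb
      have e1 := hnp 0 a (by omega)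
      have e4 := hpinj a b (by omega)
      grind
  have q2 : u 2 = u (m+2) := by rw [per 2 (by omega)]; congr 1; omega
  have q0 : u 0 = u m := by simpa using per 0 (by omega)
  have q0' : u m = u (m+m) := per m (by omega)
  have hd : u 0 ≠ u 2 := by rw [q2]; exact hd0
  have hm : 3 ≤ m := by
    by_contra hm
    obtain rfl | rfl : m = 1 ∨ m = 2 := by omega
    · exact hd (q0.trans q0')
    · exact hd q0
  apply hno
  apply cyc_aux G (m+4) hk (fun j => if j ≤ 2 then p j else if j = 3 then u 2 else
    if j ≤ m+2 then p (j+m-2) else u 0)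
  · intro j hj
    have c1 := hpadj j (by omega)
    have c2 := (hup 2 (by omega)).symm
    have c3 := hup (m+2) (by omega)
    have c4 := (hup (m+m) (by omega)).symm
    rw [← q2] at c3
    rw [← q0', ← q0] at c4
    obtain h | rfl | rfl | ⟨h, h'⟩ | rfl : j < 2 ∨ j = 2 ∨ j = 3 ∨ (4 ≤ j ∧ j < m+2) ∨ j = m+2 := by
      omega
    · grind
    · simpa using c2
    · have : 3 + 1 + m - 2 = m + 2 := by omega
      grind
    · have c5 := hpadj (j+m-2) (by omega)
      have : j + m - 2 + 1 = j + 1 + m - 2 := by omega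
      grind
    · have : m + 2 + m - 2 = m + m := by omega
      grind
  · have := hup 0 (by omega)
    grind
  · intro a b hab hb
    have e1 := hnp 0 a (by omega)
    have e2 := hnp 2 a (by omega)
    have e3 := hnp 0 (a+m-2) (by omega)
    have e3' := hnp 2 (b+m-2) (by omega)
    have e4 := hpinj a b (by omega)
    have e5 := hpinj a (b+m-2) (by omega)
    have e6 := hpinj (a+m-2) (b+m-2) (by omega)
    grind
end
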